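/- Let F : ℂ³ → ℂ be the homogeneous quintic F(x,y,z) = (x² + y² − 2z²)(x² + 2y² − 2z²)(y − z), whose projective zero locus is the union of two smooth conics tangent to each other at the two points [√2:0:1] and [−√2:0:1], together with a line that is simply tangent to the conic x² + 2y² = 2z² at [0:1:1] and meets the conic x² + y² = 2z² transversally at [1:1:1] and [−1:1:1]. Let C ⊆ ℙ²(ℂ) be the set of points [v] with v ∈ ℂ³ \ {0} and F(v) = 0, and let U = ℙ²(ℂ) \ C. Then for every basepoint u ∈ U, the fundamental group π₁(U, u) is isomorphic to the presented group ⟨a, b | (ab)²·((ba)²)⁻¹⟩, i.e. the group with presentation ⟨a, b | (ab)² = (ba)²⟩. -/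

import Mathlib

/-- The quotient topology on the complex projective plane `ℙ²(ℂ)`, i.e. the quotient
topology induced from `ℂ³ \ {0}` by the projectivization map. -/
instance : TopologicalSpace (Projectivization ℂ (Fin 3 → ℂ)) :=
  inferInstanceAs (TopologicalSpace (Quotient (projectivizationSetoid ℂ (Fin 3 → ℂ))))

/-- The homogeneous quintic whose zero locus is the union of the two tangent conics
`x² + y² = 2z²` and `x² + 2y² = 2z²` together with the line `y = z`, which is simply
tangent to the second conic and transversal to the first. -/
noncomputable def F (v : Fin 3 → ℂ) : ℂ :=
  ((v 0) ^ 2 + (v 1) ^ 2 - 2 * (v 2) ^ 2) *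
    ((v 0) ^ 2 + 2 * (v 1) ^ 2 - 2 * (v 2) ^ 2) * ((v 1) - (v 2))

/-- The projective curve `C ⊆ ℙ²(ℂ)` defined by `F = 0`. -/
noncomputable def C : Set (Projectivization ℂ (Fin 3 → ℂ)) :=
  {p | ∃ (v : Fin 3 → ℂ) (hv : v ≠ 0), F v = 0 ∧ p = Projectivization.mk ℂ v hv}

/-- The complement `U = ℙ²(ℂ) \ C`. -/
noncomputable def U : Set (Projectivization ℂ (Fin 3 → ℂ)) := Cᶜ

/-- The single relator `(ab)²((ba)²)⁻¹` of the presentation `⟨a, b | (ab)² = (ba)²⟩`. -/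
def rels : Set (FreeGroup (Fin 2)) :=
  {(FreeGroup.of 0 * FreeGroup.of 1) ^ 2 * ((FreeGroup.of 1 * FreeGroup.of 0) ^ 2)⁻¹}

open CategoryTheory

section PathTransport

variable {D E Y X : Type*} [TopologicalSpace D] [TopologicalSpace E] [TopologicalSpace Y]
  [TopologicalSpace X]

/-- The image under `f` of the unique homotopy class of paths between two points of a simply
connected space. -/
noncomputable def pathTransport [SimplyConnectedSpace D] (f : C(D, Y)) (d d' : D) :
    FundamentalGroupoid.mk (f d) ⟶ FundamentalGroupoid.mk (f d') :=
  Path.Homotopic.Quotient.map (Path.Homotopic.Quotient.mk (PathConnectedSpace.somePath d d')) f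

theorem map_eq_pathTransport [SimplyConnectedSpace D] (f : C(D, Y)) {d d' : D}
    (p : Path.Homotopic.Quotient d d') : p.map f = pathTransport f d d' :=
  congrArg (fun q => Path.Homotopic.Quotient.map q f) (Subsingleton.elim _ _)

@[simp]
theorem pathTransport_self [SimplyConnectedSpace D] (f : C(D, Y)) (d : D) :
    pathTransport f d d = 𝟙 _ := (map_eq_pathTransport f (.refl d)).symm

@[simp]
theorem pathTransport_trans [SimplyConnectedSpace D] (f : C(D, Y)) (d d' d'' : D) :
    pathTransport f d d' ≫ pathTransport f d' d'' = pathTransport f d d'' := by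
  rw [← map_eq_pathTransport f
    (Path.Homotopic.Quotient.trans (.mk (PathConnectedSpace.somePath d d'))
      (.mk (PathConnectedSpace.somePath d' d'')))]
  exact ((FundamentalGroupoid.map f).map_comp
    (X := ⟨d⟩) (Y := ⟨d'⟩) (Z := ⟨d''⟩) (.mk (PathConnectedSpace.somePath d d'))
    (.mk (PathConnectedSpace.somePath d' d''))).symm

theorem pathTransport_comp [SimplyConnectedSpace D] [SimplyConnectedSpace E] (f : C(E, Y))
    (g : C(D, E)) (d d' : D) :
    pathTransport (f.comp g) d d' = pathTransport f (g d) (g d') := by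
  rw [pathTransport, Path.Homotopic.Quotient.map_comp, map_eq_pathTransport f]

theorem pathTransport_map [SimplyConnectedSpace D] (f : C(D, Y)) (g : C(Y, X)) (d d' : D) :
    (FundamentalGroupoid.map g).map (pathTransport f d d') = pathTransport (g.comp f) d d' :=
  (Path.Homotopic.Quotient.map_comp
    (p := .mk (PathConnectedSpace.somePath d d')) (f := f) (g := g)).symm

instance : SimplyConnectedSpace unitInterval :=
  haveI : ContractibleSpace unitInterval := (convex_Icc (0 : ℝ) 1).contractibleSpace ⟨0, by simp⟩
  inferInstance

instance : SimplyConnectedSpace (unitInterval × unitInterval) :=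
  haveI : ContractibleSpace unitInterval := (convex_Icc (0 : ℝ) 1).contractibleSpace ⟨0, by simp⟩
  inferInstance

end PathTransport

section BasedClass

variable {D E Y X : Type*} [TopologicalSpace D] [TopologicalSpace E] [TopologicalSpace Y]
  [TopologicalSpace X]

variable (e : C(Y, X)) (A : Set Y) [SimplyConnectedSpace A] (z₀ : A)

/-- The class in `X` of a path inside `A` from the base point. -/
noncomputable def baseLeg (z : Y) (hz : z ∈ A) :
    FundamentalGroupoid.mk (e z₀) ⟶ FundamentalGroupoid.mk (e z) :=
  pathTransport (e.comp ⟨(Subtype.val : A → Y), continuous_subtype_val⟩) z₀ ⟨z, hz⟩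

open Classical in
/-- The loop in `X` obtained by closing up, inside the simply connected set `A`, a path of `Y`
whose end points lie in `A`. -/
noncomputable def basedClass [SimplyConnectedSpace D] (f : C(D, Y)) (d d' : D) :
    FundamentalGroup X (e z₀) :=
  if h : f d ∈ A ∧ f d' ∈ A then
    baseLeg e A z₀ (f d) h.1 ≫ pathTransport (e.comp f) d d' ≫
      inv (baseLeg e A z₀ (f d') h.2)
  else 1

theorem basedClass_eq [SimplyConnectedSpace D] (f : C(D, Y)) {d d' : D}
    (h : f d ∈ A) (h' : f d' ∈ A) :
    basedClass e A z₀ f d d' = baseLeg e A z₀ (f d) h ≫ pathTransport (e.comp f) d d' ≫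
      inv (baseLeg e A z₀ (f d') h') := dif_pos ⟨h, h'⟩

theorem basedClass_mul [SimplyConnectedSpace D] (f : C(D, Y)) (d d' d'' : D)
    (h : f d ∈ A) (h' : f d' ∈ A) (h'' : f d'' ∈ A) :
    basedClass e A z₀ f d' d'' * basedClass e A z₀ f d d' = basedClass e A z₀ f d d'' := by
  rw [basedClass_eq e A z₀ f h h', basedClass_eq e A z₀ f h' h'', basedClass_eq e A z₀ f h h'',
    End.mul_def, ← pathTransport_trans (e.comp f) d d' d'']
  simp only [Category.assoc, IsIso.inv_hom_id_assoc]

theorem basedClass_comp [SimplyConnectedSpace D] [SimplyConnectedSpace E] (f : C(E, Y))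
    (g : C(D, E)) (d d' : D) :
    basedClass e A z₀ (f.comp g) d d' = basedClass e A z₀ f (g d) (g d') := by
  unfold basedClass
  simp only [ContinuousMap.comp_apply]
  have := pathTransport_comp (e.comp f) g d d'
  split_ifs with h
  · congr 2
  · rfl

theorem basedClass_of_forall_mem [SimplyConnectedSpace D] (f : C(D, Y)) (d d' : D)
    (h : ∀ x, f x ∈ A) : basedClass e A z₀ f d d' = 1 := by
  have key : basedClass e A z₀ f d d' = basedClass e A z₀
      (ContinuousMap.mk (Subtype.val : A → Y) continuous_subtype_val) ⟨f d, h d⟩ ⟨f d', h d'⟩ :=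
    basedClass_comp e A z₀ (ContinuousMap.mk (Subtype.val : A → Y) continuous_subtype_val)
      (ContinuousMap.mk (fun x => (⟨f x, h x⟩ : A)) (by fun_prop)) d d'
  rw [key, basedClass_eq e A z₀ (ContinuousMap.mk (Subtype.val : A → Y) continuous_subtype_val)
    (d := ⟨f d, h d⟩) (d' := ⟨f d', h d'⟩) (h d) (h d'), ← Category.assoc]
  exact (congrArg (· ≫ _) (pathTransport_trans _ _ _ _)).trans (IsIso.hom_inv_id _)

end BasedClass

section BasedClassProperties

variable {D E Y X : Type*} [TopologicalSpace D] [TopologicalSpace E] [TopologicalSpace Y]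
  [TopologicalSpace X]

theorem pathTransport_congr [SimplyConnectedSpace D] {f g : C(D, Y)} (h : f = g) (d d' : D) :
    pathTransport f d d' = eqToHom (by rw [h]) ≫ pathTransport g d d' ≫ eqToHom (by rw [h]) := by
  subst h; simp

/-- The inclusion of a subset as a bundled continuous map. -/
def setIncl (N : Set Y) : C(N, Y) := ⟨Subtype.val, continuous_subtype_val⟩

theorem pathTransport_of_mapsTo (p : C(unitInterval, Y)) (e : C(Y, X)) {a b : unitInterval}
    (hab : a ≤ b) (N : Set Y) [SimplyConnectedSpace N] (h : ∀ s ∈ Set.Icc a b, p s ∈ N) :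
    pathTransport (e.comp p) a b = pathTransport (e.comp (setIncl N))
      ⟨p a, h a (Set.left_mem_Icc.2 hab)⟩ ⟨p b, h b (Set.right_mem_Icc.2 hab)⟩ := by
  let q : C(unitInterval, unitInterval) := ⟨fun s => max a (min s b), by fun_prop⟩
  have hq : ∀ s, q s ∈ Set.Icc a b := fun s =>
    ⟨le_max_left _ _, max_le hab (min_le_right _ _)⟩
  have ha : q a = a := by change max a (min a b) = a; simp [hab]
  have hb : q b = b := by change max a (min b b) = b; simp [hab]
  let f : C(unitInterval, N) := ⟨fun s => ⟨p (q s), h _ (hq s)⟩, by fun_prop⟩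
  have h1 := pathTransport_comp (e.comp p) q a b
  have h2 := pathTransport_comp (e.comp (setIncl N)) f a b
  have fa : f a = ⟨p a, h a (Set.left_mem_Icc.2 hab)⟩ := Subtype.ext (congrArg p ha)
  have fb : f b = ⟨p b, h b (Set.right_mem_Icc.2 hab)⟩ := Subtype.ext (congrArg p hb)
  have h3 : HEq (pathTransport (e.comp p) (q a) (q b)) (pathTransport (e.comp p) a b) := by
    rw [ha, hb]
  have h4 : HEq (pathTransport (e.comp (setIncl N)) (f a) (f b)) (pathTransport (e.comp (setIncl N))
      ⟨p a, h a (Set.left_mem_Icc.2 hab)⟩ ⟨p b, h b (Set.right_mem_Icc.2 hab)⟩) := by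
    rw [fa, fb]
  exact eq_of_heq (h3.symm.trans ((heq_of_eq (h1.symm.trans h2)).trans h4))

variable (e : C(Y, X)) (A : Set Y) [SimplyConnectedSpace A] (z₀ : A)

theorem basedClass_self [SimplyConnectedSpace D] (f : C(D, Y)) (d : D) :
    basedClass e A z₀ f d d = 1 := by
  by_cases h : f d ∈ A
  · rw [basedClass_eq e A z₀ f h h, pathTransport_self]
    simp
  · exact dif_neg fun h' => h h'.1

theorem basedClass_inv [SimplyConnectedSpace D] (f : C(D, Y)) {d d' : D}
    (h : f d ∈ A) (h' : f d' ∈ A) :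
    basedClass e A z₀ f d' d = (basedClass e A z₀ f d d')⁻¹ := by
  rw [eq_inv_iff_mul_eq_one, basedClass_mul e A z₀ f d d' d h h' h, basedClass_self]

theorem basedClass_eq_one_of_mem [SimplyConnectedSpace D] [SimplyConnectedSpace E]
    (f : C(E, Y)) (k : C(D, E)) {d d' : D} {x y : E} (hx : k d = x) (hy : k d' = y)
    (h : ∀ s, f (k s) ∈ A) : basedClass e A z₀ f x y = 1 := by
  rw [← hx, ← hy, ← basedClass_comp]
  exact basedClass_of_forall_mem e A z₀ _ _ _ h

/-- A homotopy of paths moving the end points inside `A` does not change the based class. -/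
theorem basedClass_square (f : C(unitInterval × unitInterval, Y))
    (h₀ : ∀ s, f (s, 0) ∈ A) (h₁ : ∀ s, f (s, 1) ∈ A) :
    basedClass e A z₀ f (0, 0) (0, 1) = basedClass e A z₀ f (1, 0) (1, 1) := by
  have e₀ : basedClass e A z₀ f (0, 0) (1, 0) = 1 :=
    basedClass_eq_one_of_mem e A z₀ f
      (ContinuousMap.mk (fun s : unitInterval => (s, (0 : unitInterval))) (by fun_prop))
      (d := 0) (d' := 1) rfl rfl h₀
  have e₁ : basedClass e A z₀ f (0, 1) (1, 1) = 1 :=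
    basedClass_eq_one_of_mem e A z₀ f
      (ContinuousMap.mk (fun s : unitInterval => (s, (1 : unitInterval))) (by fun_prop))
      (d := 0) (d' := 1) rfl rfl h₁
  have a := basedClass_mul e A z₀ f (0, 0) (0, 1) (1, 1) (h₀ 0) (h₁ 0) (h₁ 1)
  have b := basedClass_mul e A z₀ f (0, 0) (1, 0) (1, 1) (h₀ 0) (h₀ 1) (h₁ 1)
  rw [e₁, one_mul] at a
  rw [e₀, mul_one] at b
  rw [a, b]

section Deck

variable (sh : C(Y, Y)) (he : e.comp sh = e) (hA : ∀ z ∈ A, sh z ∈ A)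

/-- The loop in `X` below a path in `A` from the base point to its image under the deck
transformation `sh`. -/
noncomputable def deckLoop : FundamentalGroup X (e z₀) :=
  baseLeg e A z₀ (sh z₀) (hA z₀ z₀.2) ≫ eqToHom (congrArg _ (DFunLike.congr_fun he (z₀ : Y)))

theorem baseLeg_deck (z : Y) (hz : z ∈ A) :
    baseLeg e A z₀ (sh z) (hA z hz) = FundamentalGroup.toArrow (deckLoop e A z₀ sh he hA) ≫
      baseLeg e A z₀ z hz ≫ eqToHom (congrArg _ (DFunLike.congr_fun he z).symm) := by
  let shA : C(A, A) := ⟨fun z => ⟨sh z, hA z z.2⟩, by fun_prop⟩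
  have h1 := pathTransport_comp (e.comp (setIncl A)) shA z₀ ⟨z, hz⟩
  have h2 := pathTransport_congr (f := (e.comp (setIncl A)).comp shA) (g := e.comp (setIncl A))
    (ContinuousMap.ext fun x => DFunLike.congr_fun he (x : Y)) z₀ ⟨z, hz⟩
  have h3 := pathTransport_trans (e.comp (setIncl A)) z₀ (shA z₀) (shA ⟨z, hz⟩)
  refine h3.symm.trans ?_
  rw [← h1, h2]
  simp only [deckLoop, Category.assoc]
  rfl

theorem basedClass_deck [SimplyConnectedSpace D] (f : C(D, Y)) {d d' : D}
    (h : f d ∈ A) (h' : f d' ∈ A) :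
    basedClass e A z₀ (sh.comp f) d d' = (deckLoop e A z₀ sh he hA)⁻¹ *
      basedClass e A z₀ f d d' * deckLoop e A z₀ sh he hA := by
  rw [mul_assoc, eq_inv_mul_iff_mul_eq, basedClass_eq e A z₀ f h h',
    basedClass_eq e A z₀ (sh.comp f) (hA _ h) (hA _ h')]
  have h1 : baseLeg e A z₀ ((sh.comp f) d) (hA _ h) = _ := baseLeg_deck e A z₀ sh he hA (f d) h
  have h2 : baseLeg e A z₀ ((sh.comp f) d') (hA _ h') = _ :=
    baseLeg_deck e A z₀ sh he hA (f d') h'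
  have h3 := pathTransport_congr (f := e.comp (sh.comp f)) (g := e.comp f)
    (ContinuousMap.ext fun x => DFunLike.congr_fun he (f x)) d d'
  rw [h1, h2, h3, End.mul_def, End.mul_def]
  simp [FundamentalGroup.toArrow]

end Deck

end BasedClassProperties

section Generation

variable {D E Y X : Type*} [TopologicalSpace D] [TopologicalSpace E] [TopologicalSpace Y]
  [TopologicalSpace X]

variable (e : C(Y, X))

/-- The image in `X` of the unique path class inside the simply connected set `N`. -/
noncomputable def inTransport (N : Set Y) [SimplyConnectedSpace N] {x y : Y} (hx : x ∈ N)
    (hy : y ∈ N) : FundamentalGroupoid.mk (e x) ⟶ FundamentalGroupoid.mk (e y) :=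
  pathTransport (e.comp (setIncl N)) ⟨x, hx⟩ ⟨y, hy⟩

theorem inTransport_self (N : Set Y) [SimplyConnectedSpace N] {x : Y} (hx : x ∈ N) :
    inTransport e N hx hx = 𝟙 _ := pathTransport_self _ _

theorem inTransport_trans (N : Set Y) [SimplyConnectedSpace N] {x y z : Y} (hx : x ∈ N)
    (hy : y ∈ N) (hz : z ∈ N) :
    inTransport e N hx hy ≫ inTransport e N hy hz = inTransport e N hx hz :=
  pathTransport_trans _ _ _ _

theorem inTransport_mono {M N : Set Y} [SimplyConnectedSpace M] [SimplyConnectedSpace N]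
    (h : M ⊆ N) {x y : Y} (hx : x ∈ M) (hy : y ∈ M) :
    inTransport e N (h hx) (h hy) = inTransport e M hx hy :=
  (pathTransport_comp (e.comp (setIncl N)) ⟨Set.inclusion h, continuous_inclusion h⟩
    ⟨x, hx⟩ ⟨y, hy⟩).symm

/-- The image in `X` of the class of a portion of a path of `Y`. -/
noncomputable def pathSegment (p : C(unitInterval, Y)) (s t : unitInterval) :
    FundamentalGroupoid.mk (e (p s)) ⟶ FundamentalGroupoid.mk (e (p t)) :=
  pathTransport (e.comp p) s t

theorem pathSegment_self (p : C(unitInterval, Y)) (s : unitInterval) :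
    pathSegment e p s s = 𝟙 _ := pathTransport_self _ _

theorem pathSegment_trans (p : C(unitInterval, Y)) (s t u : unitInterval) :
    pathSegment e p s t ≫ pathSegment e p t u = pathSegment e p s u :=
  pathTransport_trans _ _ _ _

theorem pathSegment_eq_inTransport (p : C(unitInterval, Y)) {s t : unitInterval} (hst : s ≤ t)
    (N : Set Y) [SimplyConnectedSpace N] (h : ∀ r ∈ Set.Icc s t, p r ∈ N) :
    pathSegment e p s t =
      inTransport e N (h s (Set.left_mem_Icc.2 hst)) (h t (Set.right_mem_Icc.2 hst)) :=
  pathTransport_of_mapsTo p e hst N h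

variable (A : Set Y) [SimplyConnectedSpace A] (z₀ : A)
  (H : Subgroup (FundamentalGroup X (e z₀)))

/-- A simply connected open set whose paths with end points in `A` all have based class in `H`. -/
def IsGoodNhd (N : Set Y) : Prop :=
  IsOpen N ∧ ∃ _ : SimplyConnectedSpace N, ∀ z z' : N, (z : Y) ∈ A → (z' : Y) ∈ A →
    basedClass e A z₀ (setIncl N) z z' ∈ H

/-- The loop obtained from a path class between the images of two points of `A`. -/
noncomputable def closeUp {z z' : Y} (hz : z ∈ A) (hz' : z' ∈ A)
    (m : FundamentalGroupoid.mk (e z) ⟶ FundamentalGroupoid.mk (e z')) :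
    FundamentalGroup X (e z₀) :=
  baseLeg e A z₀ z hz ≫ m ≫ inv (baseLeg e A z₀ z' hz')

theorem closeUp_mul {z z' z'' : Y} (hz : z ∈ A) (hz' : z' ∈ A) (hz'' : z'' ∈ A)
    (m : FundamentalGroupoid.mk (e z) ⟶ FundamentalGroupoid.mk (e z'))
    (m' : FundamentalGroupoid.mk (e z') ⟶ FundamentalGroupoid.mk (e z'')) :
    closeUp e A z₀ hz' hz'' m' * closeUp e A z₀ hz hz' m = closeUp e A z₀ hz hz'' (m ≫ m') := by
  simp only [closeUp, End.mul_def, Category.assoc, IsIso.inv_hom_id_assoc]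

theorem basedClass_eq_closeUp (p : C(unitInterval, Y)) {s t : unitInterval}
    (h : p s ∈ A) (h' : p t ∈ A) :
    basedClass e A z₀ p s t = closeUp e A z₀ h h' (pathSegment e p s t) :=
  basedClass_eq e A z₀ p h h'

theorem basedClass_setIncl (N : Set Y) [SimplyConnectedSpace N] {x y : Y} (hx : x ∈ N) (hy : y ∈ N)
    (h : x ∈ A) (h' : y ∈ A) :
    basedClass e A z₀ (setIncl N) ⟨x, hx⟩ ⟨y, hy⟩ = closeUp e A z₀ h h' (inTransport e N hx hy) :=
  basedClass_eq e A z₀ (setIncl N) (d := ⟨x, hx⟩) (d' := ⟨y, hy⟩) h h'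

variable {e A z₀ H}

theorem basedClass_mem_of_isGoodNhd
    (hbasis : ∀ z : Y, ∀ V : Set Y, IsOpen V → z ∈ V →
      ∃ M, IsOpen M ∧ z ∈ M ∧ M ⊆ V ∧ SimplyConnectedSpace M)
    (hA : Dense A) (p : C(unitInterval, Y))
    (hp : ∀ t, ∃ N, p t ∈ N ∧ IsGoodNhd e A z₀ H N) (h₀ : p 0 ∈ A) (h₁ : p 1 ∈ A) :
    basedClass e A z₀ p 0 1 ∈ H := by
  choose N hpN hN using hp
  have hcover : (Set.univ : Set unitInterval) ⊆ ⋃ t, p ⁻¹' N t :=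
    fun t _ => Set.mem_iUnion.2 ⟨t, hpN t⟩
  obtain ⟨τ, hτ0, hmono, ⟨m, hm⟩, hτ⟩ :=
    exists_monotone_Icc_subset_open_cover_unitInterval
      (fun t => (hN t).1.preimage p.continuous) hcover
  have key : ∀ n, ∀ (N : Set Y) (_ : IsOpen N) (_ : SimplyConnectedSpace N)
      (_ : ∀ z z' : N, (z : Y) ∈ A → (z' : Y) ∈ A → basedClass e A z₀ (setIncl N) z z' ∈ H)
      (ht : p (τ n) ∈ N) (y : Y) (hyN : y ∈ N) (hy : y ∈ A),
      closeUp e A z₀ h₀ hy (pathSegment e p 0 (τ n) ≫ inTransport e N ht hyN) ∈ H := by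
    intro n
    induction n with
    | zero =>
      intro N hNo _ hN ht y hyN hy
      generalize τ 0 = t at hτ0 ht
      subst hτ0
      rw [pathSegment_self, Category.id_comp, ← basedClass_setIncl]
      exact hN _ _ h₀ hy
    | succ n ih =>
      intro N' hNo' _ hN' ht y hyN hy
      obtain ⟨i, hi⟩ := hτ n
      obtain ⟨hNo, _, hNi⟩ := hN i
      have hle : τ n ≤ τ (n + 1) := hmono (Nat.le_succ n)
      have hl := hi (Set.left_mem_Icc.2 hle)
      have hr := hi (Set.right_mem_Icc.2 hle)
      obtain ⟨M, hMo, hpM, hMV, _⟩ := hbasis (p (τ (n + 1))) (N i ∩ N') (hNo.inter hNo') ⟨hr, ht⟩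
      obtain ⟨y', hy'A, hy'M⟩ := hA.exists_mem_open hMo ⟨_, hpM⟩
      have hMN : M ⊆ N i := fun z hz => (hMV hz).1
      have hMN' : M ⊆ N' := fun z hz => (hMV hz).2
      have ih' := ih (N i) hNo inferInstance hNi hl y' (hMN hy'M) hy'A
      have g := hN' ⟨y', hMN' hy'M⟩ ⟨y, hyN⟩ hy'A hy
      rw [basedClass_setIncl e A z₀ N' _ _ hy'A hy] at g
      have := H.mul_mem g ih'
      rw [closeUp_mul, ← inTransport_trans e (N i) hl hr, inTransport_mono e hMN hpM hy'M,
        ← inTransport_mono e hMN' hpM hy'M,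
        ← pathSegment_eq_inTransport e p hle (N i) fun s hs => hi hs, ← Category.assoc,
        pathSegment_trans, Category.assoc, inTransport_trans] at this
      exact this
  obtain ⟨hNo, _, hN1⟩ := hN 1
  have h : ∀ t, t = 1 → ∀ (ht : p t ∈ N 1),
      closeUp e A z₀ h₀ h₁ (pathSegment e p 0 t ≫ inTransport e (N 1) ht (hpN 1)) ∈ H →
      closeUp e A z₀ h₀ h₁ (pathSegment e p 0 1) ∈ H := by
    intro t ht _ h
    subst ht
    rwa [inTransport_self, Category.comp_id] at h
  rw [basedClass_eq_closeUp e A z₀ p h₀ h₁]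
  have hm1 := hm m le_rfl
  have hp1 : p (τ m) ∈ N 1 := hm1 ▸ hpN 1
  exact h (τ m) hm1 hp1 (key m (N 1) hNo inferInstance hN1 hp1 _ _ h₁)

end Generation

section LoopLift

variable {Y X : Type*} [TopologicalSpace Y] [TopologicalSpace X]

theorem eqToHom_comp_of_heq {x y x' y' : X} {m : FundamentalGroupoid.mk x ⟶ FundamentalGroupoid.mk y}
    {m' : FundamentalGroupoid.mk x' ⟶ FundamentalGroupoid.mk y'} (hx : x = x') (hy : y = y')
    (h : HEq m m') : m' = eqToHom (congrArg _ hx.symm) ≫ m ≫ eqToHom (congrArg _ hy) := by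
  subst hx hy
  simpa using (eq_of_heq h).symm

variable (e : C(Y, X))

theorem pathSegment_heq_mk (p : C(unitInterval, Y)) {x y : X} (γ : Path x y)
    (h : ∀ t, e (p t) = γ t) :
    HEq (pathSegment e p 0 1) (Path.Homotopic.Quotient.mk γ) := by
  let ι : Path (0 : unitInterval) 1 := ⟨.id _, rfl, rfl⟩
  have h1 : Path.Homotopic.Quotient.mk (ι.map (e.comp p).continuous) = pathSegment e p 0 1 :=
    map_eq_pathTransport (e.comp p) (.mk ι)
  rw [← h1]
  exact Path.Homotopic.hpath_hext h

variable (A : Set Y) [SimplyConnectedSpace A] (z₀ : A)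

/-- The loop in `X` below a path in `A` from the base point to a point of the same fibre. -/
noncomputable def legLoop (z : Y) (hz : z ∈ A) (h : e z = e z₀) : FundamentalGroup X (e z₀) :=
  baseLeg e A z₀ z hz ≫ eqToHom (congrArg _ h)

theorem baseLeg_base : baseLeg e A z₀ z₀ z₀.2 = 𝟙 _ := pathTransport_self _ _

theorem legLoop_base : legLoop e A z₀ z₀ z₀.2 rfl = 1 := by
  rw [legLoop, baseLeg_base]; simp

theorem legLoop_deck (sh : C(Y, Y)) (he : e.comp sh = e) (hA : ∀ z ∈ A, sh z ∈ A)
    (z : Y) (hz : z ∈ A) (h : e z = e z₀) :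
    legLoop e A z₀ (sh z) (hA z hz) ((DFunLike.congr_fun he z).trans h) =
      legLoop e A z₀ z hz h * deckLoop e A z₀ sh he hA := by
  rw [legLoop, legLoop, baseLeg_deck e A z₀ sh he hA z hz, End.mul_def]
  simp [FundamentalGroup.toArrow]

theorem mk_eq_legLoop_mul (p : C(unitInterval, Y)) (γ : Path (e z₀) (e z₀))
    (h : ∀ t, e (p t) = γ t) (h₀ : p 0 = z₀) (h₁ : p 1 ∈ A) :
    (Path.Homotopic.Quotient.mk γ : FundamentalGroup X (e z₀)) =
      legLoop e A z₀ (p 1) h₁ ((h 1).trans γ.target) * basedClass e A z₀ p 0 1 := by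
  have h₀' : p 0 ∈ A := h₀ ▸ z₀.2
  rw [basedClass_eq_closeUp e A z₀ p h₀' h₁, legLoop, End.mul_def, closeUp]
  have hb : baseLeg e A z₀ (p 0) h₀' = eqToHom (by rw [h₀]) := by
    have : ∀ y, y = (z₀ : Y) → ∀ hy : y ∈ A, ∀ h', baseLeg e A z₀ y hy = eqToHom h' := by
      rintro y rfl hy h'
      exact (baseLeg_base e A z₀).trans (eqToHom_refl _ _).symm
    exact this _ h₀ _ _
  rw [hb, eqToHom_comp_of_heq (congrArg e h₀) ((h 1).trans γ.target)
    (pathSegment_heq_mk e p γ h)]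
  simp

end LoopLift

/-- Locally defined `G`-valued functions on `X` whose mutual ratios are locally constant; such data
determine a `G`-covering of `X`. -/
structure RatioCocycle (ι X G : Type*) [TopologicalSpace X] [Group G] where
  chart : ι → Set X
  isOpen_chart : ∀ i, IsOpen (chart i)
  index : X → ι
  mem_chart : ∀ x, x ∈ chart (index x)
  value : ι → X → G
  eventually_ratio : ∀ i j, ∀ x ∈ chart i ∩ chart j,
    ∀ᶠ y in nhds x, value j y * (value i y)⁻¹ = value j x * (value i x)⁻¹

namespace RatioCocycle

variable {ι X G D : Type*} [TopologicalSpace X] [Group G] [TopologicalSpace G]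
  [TopologicalSpace D] (S : RatioCocycle ι X G)

/-- The fibre bundle core with fibre `G` and transition functions the ratios of `S`. -/
def core [DiscreteTopology G] : FiberBundleCore ι X G where
  baseSet := S.chart
  isOpen_baseSet := S.isOpen_chart
  indexAt := S.index
  mem_baseSet_at := S.mem_chart
  coordChange i j x g := S.value j x * (S.value i x)⁻¹ * g
  coordChange_self i x _ v := by simp
  continuousOn_coordChange i j := by
    rintro ⟨x, g⟩ hx
    refine ContinuousAt.continuousWithinAt ?_
    have h : (fun p : X × G => S.value j p.1 * (S.value i p.1)⁻¹ * p.2) =ᶠ[nhds (x, g)]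
        fun p => S.value j x * (S.value i x)⁻¹ * p.2 := by
      filter_upwards [continuousAt_fst.eventually (S.eventually_ratio i j x hx.1)] with p hp
      rw [hp]
    refine ContinuousAt.congr ?_ h.symm
    exact (continuous_of_discreteTopology (f := fun a : G =>
      S.value j x * (S.value i x)⁻¹ * a)).continuousAt.comp continuousAt_snd
  coordChange_comp i j k x _ v := by simp [mul_assoc]

variable [DiscreteTopology G]

theorem isCoveringMap : IsCoveringMap (Bundle.TotalSpace.proj : S.core.TotalSpace → X) :=
  FiberBundle.isCoveringMap

/-- The `G`-coordinate of a point of the total space which does not depend on a chart. -/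
def coord (p : S.core.TotalSpace) : G := (S.value (S.index p.1) p.1)⁻¹ * (show G from p.2)

/-- The point of the total space over `x` with a given `G`-coordinate. -/
def point (x : X) (k : G) : S.core.TotalSpace := ⟨x, (S.value (S.index x) x * k : G)⟩

@[simp]
theorem coord_point (x : X) (k : G) : S.coord (S.point x k) = k := inv_mul_cancel_left _ _

theorem point_coord (p : S.core.TotalSpace) : S.point p.1 (S.coord p) = p := by
  obtain ⟨x, v⟩ := p
  exact congrArg (Bundle.TotalSpace.mk x) (mul_inv_cancel_left (S.value (S.index x) x) (v : G))

theorem fiberPoint_coord {y : X}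
    (q : (Bundle.TotalSpace.proj : S.core.TotalSpace → X) ⁻¹' {y}) :
    (⟨S.point y (S.coord q.1), rfl⟩ :
      (Bundle.TotalSpace.proj : S.core.TotalSpace → X) ⁻¹' {y}) = q := by
  obtain ⟨q, hq⟩ := q
  have hq' : q.1 = y := hq
  subst hq'
  exact Subtype.ext (S.point_coord q)

/-- The monodromy of the covering determined by `S`, in terms of `G`-coordinates. -/
noncomputable def monodromy {x y : X} (γ : FundamentalGroupoid.mk x ⟶ FundamentalGroupoid.mk y)
    (k : G) : G :=
  S.coord (S.isCoveringMap.monodromy γ ⟨S.point x k, rfl⟩).1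

theorem monodromy_id (x : X) (k : G) : S.monodromy (𝟙 (FundamentalGroupoid.mk x)) k = k := by
  have := congrFun (S.isCoveringMap.monodromy_refl (x := x)) ⟨S.point x k, rfl⟩
  exact (congrArg (fun e => S.coord e.1) this).trans (S.coord_point x k)

theorem monodromy_eqToHom {x y : X} (h : x = y) (k : G) :
    S.monodromy (eqToHom (congrArg FundamentalGroupoid.mk h)) k = k := by
  subst h
  exact S.monodromy_id x k

theorem monodromy_comp {x y z : X} (γ : FundamentalGroupoid.mk x ⟶ FundamentalGroupoid.mk y)
    (γ' : FundamentalGroupoid.mk y ⟶ FundamentalGroupoid.mk z) (k : G) :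
    S.monodromy (γ ≫ γ') k = S.monodromy γ' (S.monodromy γ k) := by
  have := S.isCoveringMap.monodromy_trans_apply γ γ' ⟨S.point x k, rfl⟩
  refine (congrArg (fun e => S.coord e.1) this).trans ?_
  exact congrArg (fun e => S.coord (S.isCoveringMap.monodromy γ' e).1)
    (S.fiberPoint_coord (S.isCoveringMap.monodromy γ ⟨S.point x k, rfl⟩)).symm

theorem monodromy_pathTransport [SimplyConnectedSpace D] (f : C(D, X)) (i : ι)
    (hf : ∀ x, f x ∈ S.chart i) (d d' : D) (k : G) :
    S.monodromy (pathTransport f d d') k =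
      (S.value i (f d'))⁻¹ * (S.value i (f d) * k) := by
  set g := S.value i (f d) * k with hg
  have hpt : ∀ x, ((S.core.localTriv i).toOpenPartialHomeomorph.symm (f x, g) :
      S.core.TotalSpace) = S.point (f x) ((S.value i (f x))⁻¹ * g) := by
    intro x
    rw [FiberBundleCore.localTriv_symm_apply]
    exact congrArg (fun a : G => (⟨f x, a⟩ : S.core.TotalSpace))
      (mul_assoc (S.value (S.index (f x)) (f x)) (S.value i (f x))⁻¹ g)
  let s : C(D, S.core.TotalSpace) :=
    ⟨fun x => S.point (f x) ((S.value i (f x))⁻¹ * g), by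
      simp_rw [← hpt]
      refine (S.core.localTriv i).toOpenPartialHomeomorph.continuousOn_symm.comp_continuous
        (by fun_prop) fun x => ?_
      exact (FiberBundleCore.mem_localTriv_target _ _ _).2 (hf x)⟩
  have h := S.isCoveringMap.monodromy_map (pathTransport s d d')
  have h2 : Path.Homotopic.Quotient.map (pathTransport s d d')
      ⟨Bundle.TotalSpace.proj, S.isCoveringMap.continuous⟩ = pathTransport f d d' :=
    pathTransport_map s ⟨Bundle.TotalSpace.proj, S.isCoveringMap.continuous⟩ d d'
  rw [h2] at h
  have h3 : S.point (f d) k = s d := by simp [s, hg]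
  have h4 := congrArg (fun e => S.coord e.1) h
  calc S.monodromy (pathTransport f d d') k = S.coord
        (S.isCoveringMap.monodromy (pathTransport f d d') ⟨s d, rfl⟩).1 := by
          simp only [monodromy]; congr 4
    _ = S.coord (s d') := h4
    _ = _ := S.coord_point _ _

/-- The monodromy action of the fundamental group on `G`-coordinates. -/
noncomputable def monodromyHom (x : X) : FundamentalGroup X x →* Equiv.Perm G :=
  MonoidHom.toHomPerm
    { toFun := fun γ => (S.monodromy γ : Function.End G)
      map_one' := funext fun k => S.monodromy_id x k
      map_mul' := fun γ γ' => funext fun k => S.monodromy_comp γ' γ k }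

theorem monodromyHom_apply {x : X} (γ : FundamentalGroup X x) (k : G) :
    S.monodromyHom x γ k = S.monodromy γ k := rfl

end RatioCocycle

/-- The complement of `y = 0` and of the quartic `(x² - y - 2)² = 16 y` in `ℂ²`. -/
def affineComplement : Set (ℂ × ℂ) := {p | p.2 ≠ 0 ∧ (p.1 ^ 2 - p.2 - 2) ^ 2 ≠ 16 * p.2}

/-- The preimage of `affineComplement` under `(x, ω) ↦ (x, exp (2 ω))`. -/
def logCover : Set (ℂ × ℂ) :=
  {p | (p.1 ^ 2 - Complex.exp p.2 ^ 2 - 2) ^ 2 ≠ 16 * Complex.exp p.2 ^ 2}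

theorem mem_logCover {x w : ℂ} : (x, w) ∈ logCover ↔
    (x ^ 2 - Complex.exp w ^ 2 - 2) ^ 2 ≠ 16 * Complex.exp w ^ 2 := Iff.rfl

theorem mem_logCover_iff {x w ν : ℂ} (h : ν ^ 2 = x ^ 2 + 2) :
    (x, w) ∈ logCover ↔
      Complex.exp w ^ 2 ≠ (2 + ν) ^ 2 ∧ Complex.exp w ^ 2 ≠ (2 - ν) ^ 2 := by
  have key : (x ^ 2 - Complex.exp w ^ 2 - 2) ^ 2 - 16 * Complex.exp w ^ 2 =
      (Complex.exp w ^ 2 - (2 + ν) ^ 2) * (Complex.exp w ^ 2 - (2 - ν) ^ 2) := by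
    rw [show x ^ 2 = ν ^ 2 - 2 by rw [h]; ring]
    ring
  rw [mem_logCover, ← sub_ne_zero, key, mul_ne_zero_iff, sub_ne_zero, sub_ne_zero]

theorem isOpen_logCover : IsOpen logCover := isOpen_ne_fun (by fun_prop) (by fun_prop)

/-- The covering map `(x, ω) ↦ (x, exp (2 ω))`. -/
noncomputable def logCoverMap : C(logCover, affineComplement) where
  toFun p := ⟨(p.1.1, Complex.exp p.1.2 ^ 2), pow_ne_zero _ (Complex.exp_ne_zero _), p.2⟩
  continuous_toFun := by fun_prop

theorem exp_add_pi_mul_I_sq (w : ℂ) : Complex.exp (w + Real.pi * Complex.I) ^ 2 =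
    Complex.exp w ^ 2 := by
  rw [Complex.exp_add, Complex.exp_pi_mul_I]
  ring

theorem add_pi_mul_I_mem_logCover {x w : ℂ} :
    (x, w + Real.pi * Complex.I) ∈ logCover ↔ (x, w) ∈ logCover := by
  rw [mem_logCover, mem_logCover, exp_add_pi_mul_I_sq]

/-- The deck transformation `(x, ω) ↦ (x, ω + π i)`. -/
noncomputable def deckShift : C(logCover, logCover) where
  toFun p := ⟨(p.1.1, p.1.2 + Real.pi * Complex.I), add_pi_mul_I_mem_logCover.2 p.2⟩
  continuous_toFun := by fun_prop

theorem logCoverMap_comp_deckShift : logCoverMap.comp deckShift = logCoverMap := by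
  ext1 p
  refine Subtype.ext (Prod.ext rfl ?_)
  exact exp_add_pi_mul_I_sq p.1.2

/-- The points of `logCover` from which the horizontal ray to the right stays in `logCover`. -/
def rayFree : Set logCover := {p | ∀ r : ℝ, 0 ≤ r → (p.1.1, p.1.2 + r) ∈ logCover}

theorem deckShift_mem_rayFree : ∀ p ∈ rayFree, deckShift p ∈ rayFree := by
  intro p hp r hr
  have h := add_pi_mul_I_mem_logCover.2 (hp r hr)
  rwa [add_right_comm] at h

theorem mem_logCover_of_lt {x w : ℂ} (h : 2 + ‖x‖ < w.re) : (x, w) ∈ logCover := by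
  obtain ⟨ν, hν⟩ := IsAlgClosed.exists_pow_nat_eq (x ^ 2 + 2) (n := 2) two_pos
  have h1 : ‖ν‖ ≤ ‖x‖ + 2 := by
    have h2 : ‖ν‖ ^ 2 ≤ ‖x‖ ^ 2 + 2 := by
      rw [← norm_pow, ← norm_pow, hν]
      exact (norm_add_le _ _).trans (by simp)
    nlinarith [norm_nonneg ν, norm_nonneg x]
  have h3 : 4 + ‖x‖ < ‖Complex.exp w‖ := by
    rw [Complex.norm_exp]
    have h4 := Real.quadratic_le_exp_of_nonneg (x := w.re) (by linarith [norm_nonneg x])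
    nlinarith [norm_nonneg x]
  rw [mem_logCover_iff hν]
  constructor <;> intro h5 <;> have h6 := congrArg norm h5 <;> rw [norm_pow, norm_pow] at h6 <;>
    have h7 := (sq_eq_sq₀ (norm_nonneg _) (norm_nonneg _)).1 h6
  · have := norm_add_le (2 : ℂ) ν
    simp at this
    linarith
  · have := norm_sub_le (2 : ℂ) ν
    simp at this
    linarith

theorem isOpen_rayFree : IsOpen rayFree := by
  rw [isOpen_iff_mem_nhds]
  intro p hp
  set R : ℝ := 5 + ‖p.1.1‖ + ‖p.1.2‖ with hR
  have h1 : ∀ᶠ q : logCover in nhds p, ∀ r ∈ Set.Icc 0 R, (q.1.1, q.1.2 + (r : ℂ)) ∈ logCover := by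
    refine isCompact_Icc.eventually_forall_of_forall_eventually fun r hr => ?_
    have hc : Continuous fun z : logCover × ℝ => (z.1.1.1, z.1.1.2 + (z.2 : ℂ)) := by fun_prop
    exact hc.continuousAt.eventually (isOpen_logCover.mem_nhds (hp r hr.1))
  have h2 : ∀ᶠ q : logCover in nhds p, 2 + ‖q.1.1‖ < q.1.2.re + R := by
    refine IsOpen.mem_nhds (isOpen_lt (by fun_prop) (by fun_prop)) ?_
    have := Complex.abs_re_le_norm p.1.2
    have := abs_le.1 this
    show 2 + ‖p.1.1‖ < p.1.2.re + R
    linarith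
  filter_upwards [h1, h2] with q hq1 hq2 r hr
  rcases le_total r R with h | h
  · exact hq1 r ⟨hr, h⟩
  · apply mem_logCover_of_lt
    simp
    linarith

theorem rayFree_add {p : logCover} (hp : p ∈ rayFree) {r : ℝ} (hr : 0 ≤ r) :
    (⟨(p.1.1, p.1.2 + r), hp r hr⟩ : logCover) ∈ rayFree := by
  intro s hs
  have := hp (r + s) (by positivity)
  simpa [add_assoc] using this

theorem mem_rayFree_of_lt {p : logCover} (h : 2 + ‖p.1.1‖ < p.1.2.re) : p ∈ rayFree := by
  intro r hr
  apply mem_logCover_of_lt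
  simp
  linarith

theorem two_add_norm_sqrt_two_lt : 2 + ‖((Real.sqrt 2 : ℝ) : ℂ)‖ < (4 : ℂ).re := by
  have : Real.sqrt 2 < 2 := by rw [Real.sqrt_lt' two_pos]; norm_num
  rw [Complex.norm_real, Real.norm_of_nonneg (Real.sqrt_nonneg _)]
  norm_num
  linarith

/-- The chosen base point `(√2, 4)` of `logCover`. -/
noncomputable def coverBase : rayFree :=
  ⟨⟨((Real.sqrt 2 : ℝ), 4), mem_logCover_of_lt two_add_norm_sqrt_two_lt⟩,
    mem_rayFree_of_lt two_add_norm_sqrt_two_lt⟩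

theorem coverBase_lt : 2 + ‖coverBase.1.1.1‖ < coverBase.1.1.2.re := two_add_norm_sqrt_two_lt

/-- A time after which the horizontal ray from a point has entered `2 + ‖x‖ < re ω`. -/
noncomputable def rayTime (p : logCover) : ℝ := 3 + ‖p.1.1‖ + ‖p.1.2‖

theorem lt_add_rayTime (p : logCover) : 2 + ‖p.1.1‖ < (p.1.2 + rayTime p : ℂ).re := by
  have := (abs_le.1 (Complex.abs_re_le_norm p.1.2)).1
  simp [rayTime]
  linarith

theorem rayTime_nonneg (p : logCover) : 0 ≤ rayTime p := by unfold rayTime; positivity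

theorem continuous_rayTime : Continuous rayTime := by unfold rayTime; fun_prop

theorem lineMap_lt {x x' w w' : ℂ} (h : 2 + ‖x‖ < w.re) (h' : 2 + ‖x'‖ < w'.re) (s : unitInterval) :
    2 + ‖x + (s : ℝ) * (x' - x)‖ < (w + (s : ℝ) * (w' - w)).re := by
  have h0 := s.2.1
  have h1 := s.2.2
  have e : x + (s : ℝ) * (x' - x) = ((1 - s : ℝ) : ℂ) * x + ((s : ℝ) : ℂ) * x' := by
    push_cast; ring
  have h2 : ‖x + (s : ℝ) * (x' - x)‖ ≤ (1 - s : ℝ) * ‖x‖ + (s : ℝ) * ‖x'‖ := by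
    rw [e]
    refine (norm_add_le _ _).trans (le_of_eq ?_)
    rw [norm_mul, norm_mul, Complex.norm_real, Complex.norm_real, Real.norm_of_nonneg h0,
      Real.norm_of_nonneg (by linarith)]
  have h3 : (w + (s : ℝ) * (w' - w)).re = (1 - s : ℝ) * w.re + (s : ℝ) * w'.re := by
    simp; ring
  rw [h3]
  rcases h0.eq_or_lt with h0 | h0
  · rw [← h0] at h2 ⊢; linarith
  · nlinarith

instance : SimplyConnectedSpace rayFree := by
  have hz := coverBase_lt
  let push : C(rayFree, rayFree) :=
    ⟨fun p => ⟨⟨(p.1.1.1, p.1.1.2 + rayTime p.1), p.2 _ (rayTime_nonneg _)⟩,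
      rayFree_add p.2 (rayTime_nonneg _)⟩, by
        have := continuous_rayTime
        fun_prop⟩
  have H1 : ContinuousMap.Homotopic (ContinuousMap.id rayFree) push := ⟨
    { toFun := fun q => ⟨⟨(q.2.1.1.1, q.2.1.1.2 + ((q.1 * rayTime q.2.1 : ℝ) : ℂ)),
        q.2.2 _ (mul_nonneg q.1.2.1 (rayTime_nonneg _))⟩,
        rayFree_add q.2.2 (mul_nonneg q.1.2.1 (rayTime_nonneg _))⟩
      continuous_toFun := by
        have := continuous_rayTime
        fun_prop
      map_zero_left := fun p => by ext <;> simp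
      map_one_left := fun p => by ext <;> simp [push] }⟩
  have H2 : ContinuousMap.Homotopic push (ContinuousMap.const _ coverBase) := ⟨
    { toFun := fun q => ⟨⟨(q.2.1.1.1 + (q.1 : ℝ) * (coverBase.1.1.1 - q.2.1.1.1),
          (q.2.1.1.2 + rayTime q.2.1) + (q.1 : ℝ) *
            (coverBase.1.1.2 - (q.2.1.1.2 + rayTime q.2.1))),
          mem_logCover_of_lt (lineMap_lt (lt_add_rayTime _) hz _)⟩,
          mem_rayFree_of_lt (lineMap_lt (lt_add_rayTime _) hz _)⟩
      continuous_toFun := by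
        have := continuous_rayTime
        fun_prop
      map_zero_left := fun p => by ext <;> simp [push]
      map_one_left := fun p => by ext <;> simp }⟩
  have : ContractibleSpace rayFree :=
    (contractible_iff_id_nullhomotopic _).2 ⟨coverBase, H1.trans H2⟩
  infer_instance

theorem simplyConnectedSpace_preimage_val {E : Type*} [NormedAddCommGroup E] [NormedSpace ℝ E]
    {S B : Set E} (hB : Convex ℝ B) (hne : B.Nonempty) (hBS : B ⊆ S) :
    SimplyConnectedSpace (Subtype.val ⁻¹' B : Set S) := by
  have : ContractibleSpace B := hB.contractibleSpace hne
  let h : (Subtype.val ⁻¹' B : Set S) ≃ₜ B :=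
    { toFun := fun p => ⟨p.1.1, p.2⟩
      invFun := fun p => ⟨⟨p.1, hBS p.2⟩, p.2⟩
      left_inv := fun _ => rfl
      right_inv := fun _ => rfl
      continuous_toFun := by fun_prop
      continuous_invFun := by fun_prop }
  have : ContractibleSpace (Subtype.val ⁻¹' B : Set S) := h.contractibleSpace
  infer_instance

theorem exists_ball_subset_logCover (z : logCover) {V : Set logCover} (hV : IsOpen V)
    (hz : z ∈ V) : ∃ ρ > 0, Metric.ball z.1 ρ ⊆ logCover ∧
      ((↑) ⁻¹' Metric.ball z.1 ρ : Set logCover) ⊆ V := by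
  obtain ⟨V', hV', rfl⟩ := isOpen_induced_iff.1 hV
  obtain ⟨ρ, hρ, h⟩ := Metric.isOpen_iff.1 (hV'.inter isOpen_logCover) z.1 ⟨hz, z.2⟩
  exact ⟨ρ, hρ, fun p hp => (h hp).2, fun p hp => (h hp).1⟩

theorem exists_isOpen_simplyConnectedSpace_subset (z : logCover) (V : Set logCover)
    (hV : IsOpen V) (hz : z ∈ V) :
    ∃ M : Set logCover, IsOpen M ∧ z ∈ M ∧ M ⊆ V ∧ SimplyConnectedSpace M := by
  obtain ⟨ρ, hρ, h1, h2⟩ := exists_ball_subset_logCover z hV hz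
  exact ⟨_, Metric.isOpen_ball.preimage continuous_subtype_val, Metric.mem_ball_self hρ, h2,
    simplyConnectedSpace_preimage_val (convex_ball _ _) ⟨_, Metric.mem_ball_self hρ⟩ h1⟩

theorem countable_setOf_exp_eq (c u : ℂ) :
    {t : ℝ | ∃ r : ℝ, Complex.exp (u + t * Complex.I + r) = c}.Countable := by
  by_cases hc : c = 0
  · simp [hc]
  refine (Set.countable_range fun n : ℤ => c.arg + n * (2 * Real.pi) - u.im).mono ?_
  rintro t ⟨r, hr⟩
  rw [← Complex.exp_log hc, Complex.exp_eq_exp_iff_exists_int] at hr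
  obtain ⟨n, hn⟩ := hr
  refine ⟨n, ?_⟩
  have := congrArg Complex.im hn
  simp [Complex.log_im] at this
  simp only []
  linarith

theorem dense_rayFree : Dense rayFree := by
  intro z
  rw [mem_closure_iff]
  intro V hV hz
  obtain ⟨ρ, hρ, h1, h2⟩ := exists_ball_subset_logCover z hV hz
  obtain ⟨⟨x, w⟩, hzX⟩ := z
  obtain ⟨ν, hν⟩ := IsAlgClosed.exists_pow_nat_eq (x ^ 2 + 2) (n := 2) two_pos
  have hcount : ((({t : ℝ | ∃ r : ℝ, Complex.exp (w + t * Complex.I + r) = 2 + ν} ∪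
      {t : ℝ | ∃ r : ℝ, Complex.exp (w + t * Complex.I + r) = -(2 + ν)}) ∪
      {t : ℝ | ∃ r : ℝ, Complex.exp (w + t * Complex.I + r) = 2 - ν}) ∪
      {t : ℝ | ∃ r : ℝ, Complex.exp (w + t * Complex.I + r) = -(2 - ν)}).Countable :=
    (((countable_setOf_exp_eq _ _).union (countable_setOf_exp_eq _ _)).union
      (countable_setOf_exp_eq _ _)).union (countable_setOf_exp_eq _ _)
  obtain ⟨t, ht, htρ⟩ := (hcount.dense_compl ℝ).exists_dist_lt 0 hρ
  have hb : (x, w + t * Complex.I) ∈ Metric.ball ((x, w) : ℂ × ℂ) ρ := by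
    rw [Metric.mem_ball, Prod.dist_eq, max_lt_iff]
    refine ⟨by simpa using hρ, ?_⟩
    rw [dist_eq_norm] at htρ ⊢
    simpa using htρ
  refine ⟨⟨_, h1 hb⟩, h2 hb, fun r _ => ?_⟩
  simp only [Set.mem_compl_iff, Set.mem_union, Set.mem_ofPred_eq, not_or, not_exists] at ht
  rw [mem_logCover_iff hν]
  constructor
  · intro h
    rcases sq_eq_sq_iff_eq_or_eq_neg.1 h with h | h
    · exact ht.1.1.1 r h
    · exact ht.1.1.2 r h
  · intro h
    rcases sq_eq_sq_iff_eq_or_eq_neg.1 h with h | h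
    · exact ht.1.2 r h
    · exact ht.2 r h

/-- The class in `affineComplement` of a path in `logCover`, closed up inside `rayFree`. -/
noncomputable abbrev closedClass {D : Type*} [TopologicalSpace D] [SimplyConnectedSpace D]
    (f : C(D, logCover)) (d d' : D) :
    FundamentalGroup affineComplement (logCoverMap coverBase) :=
  basedClass logCoverMap rayFree coverBase f d d'

/-- The vertical segment of half-length `η` at distance `r` to the left of `(x, log (2 + ν))`
crosses a single obstruction ray. -/
structure IsCrossing (x ν : ℂ) (r η : ℝ) : Prop where
  sq_eq : ν ^ 2 = x ^ 2 + 2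
  mem_slitPlane : 2 + ν ∈ Complex.slitPlane
  r_pos : 0 < r
  η_pos : 0 < η
  η_lt : η < Real.pi
  avoid : ∀ u v : ℝ, -r ≤ u → |v| ≤ η →
    Complex.exp (u + v * Complex.I) ^ 2 * (2 + ν) ^ 2 ≠ (2 - ν) ^ 2

theorem exp_sq_ne_one {u v : ℝ} (hv : |v| < Real.pi) (huv : u ≠ 0 ∨ v ≠ 0) :
    Complex.exp (u + v * Complex.I) ^ 2 ≠ 1 := by
  intro h
  rw [← Complex.exp_nat_mul, Complex.exp_eq_one_iff] at h
  obtain ⟨n, hn⟩ := h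
  have hre := congrArg Complex.re hn
  have him := congrArg Complex.im hn
  simp at hre him
  have hv' : v = n * Real.pi := by linarith
  have hn0 : n = 0 := by
    by_contra hn0
    have : (1 : ℝ) ≤ |(n : ℝ)| := by exact_mod_cast Int.one_le_abs hn0
    rw [hv', abs_mul, abs_of_pos Real.pi_pos] at hv
    nlinarith [Real.pi_pos]
  rw [hn0] at hv'
  simp [hre, hv'] at huv

namespace IsCrossing

variable {x ν : ℂ} {r η : ℝ}

theorem mem_logCover (h : IsCrossing x ν r η) {u v : ℝ} (hu : -r ≤ u) (hv : |v| ≤ η)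
    (huv : u ≠ 0 ∨ v ≠ 0) : (x, Complex.log (2 + ν) + (u + v * Complex.I)) ∈ logCover := by
  have h0 := Complex.slitPlane_ne_zero h.mem_slitPlane
  rw [mem_logCover_iff h.sq_eq, Complex.exp_add, Complex.exp_log h0, mul_pow, mul_comm]
  refine ⟨fun h1 => ?_, h.avoid u v hu hv⟩
  exact exp_sq_ne_one (hv.trans_lt h.η_lt) huv (mul_eq_right₀ (pow_ne_zero 2 h0) |>.1 h1)

theorem mem_rayFree (h : IsCrossing x ν r η) {u v : ℝ} (hu : -r ≤ u) (hv : |v| ≤ η)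
    (hv0 : v ≠ 0) : (⟨_, h.mem_logCover hu hv (Or.inr hv0)⟩ : logCover) ∈ rayFree := by
  intro s hs
  have := h.mem_logCover (u := u + s) (by linarith) hv (Or.inr hv0)
  convert this using 2
  push_cast
  ring

theorem mono (h : IsCrossing x ν r η) {r' η' : ℝ} (hr : 0 < r') (hrr : r' ≤ r) (hη : 0 < η')
    (hηη : η' ≤ η) : IsCrossing x ν r' η' :=
  ⟨h.sq_eq, h.mem_slitPlane, hr, hη, hηη.trans_lt h.η_lt, fun u v hu hv =>
    h.avoid u v (by linarith) (hv.trans hηη)⟩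

theorem abs_segment_le (h : IsCrossing x ν r η) (t : unitInterval) :
    |(2 * (t : ℝ) - 1) * η| ≤ η := by
  have h0 := t.2.1
  have h1 := t.2.2
  rw [abs_mul, abs_of_pos h.η_pos]
  have : |2 * (t : ℝ) - 1| ≤ 1 := abs_le.2 ⟨by linarith, by linarith⟩
  nlinarith [h.η_pos]

/-- The upward vertical segment crossing the obstruction ray. -/
noncomputable def segment (h : IsCrossing x ν r η) : C(unitInterval, logCover) :=
  ⟨fun t => ⟨(x, Complex.log (2 + ν) + ((-r : ℝ) + ((2 * (t : ℝ) - 1) * η : ℝ) * Complex.I)),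
    h.mem_logCover le_rfl (h.abs_segment_le t) (Or.inl (by have := h.r_pos; linarith))⟩, by
      fun_prop⟩

theorem segment_zero_mem (h : IsCrossing x ν r η) : h.segment 0 ∈ rayFree :=
  h.mem_rayFree le_rfl (h.abs_segment_le 0) (by have := h.η_pos; simp; linarith)

theorem segment_one_mem (h : IsCrossing x ν r η) : h.segment 1 ∈ rayFree :=
  h.mem_rayFree le_rfl (h.abs_segment_le 1) (by
    have := h.η_pos
    simp only [Set.Icc.coe_one]
    intro h
    linarith)

/-- The class of the crossing segment. -/
noncomputable def cls (h : IsCrossing x ν r η) :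
    FundamentalGroup affineComplement (logCoverMap coverBase) :=
  closedClass h.segment 0 1

theorem cls_eq_of_family {x ν : unitInterval → ℂ} {r η : unitInterval → ℝ}
    (h : ∀ s, IsCrossing (x s) (ν s) (r s) (η s)) (hx : Continuous x) (hν : Continuous ν)
    (hr : Continuous r) (hη : Continuous η) : (h 0).cls = (h 1).cls := by
  have hlog : Continuous fun q : unitInterval × unitInterval => Complex.log (2 + ν q.1) :=
    Continuous.clog (by fun_prop) fun q => (h q.1).mem_slitPlane
  let f : C(unitInterval × unitInterval, logCover) :=
    ⟨fun q => (h q.1).segment q.2, by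
      unfold segment
      simp only [ContinuousMap.coe_mk]
      fun_prop⟩
  have key := basedClass_square logCoverMap rayFree coverBase f
    (fun s => (h s).segment_zero_mem) (fun s => (h s).segment_one_mem)
  have e : ∀ s, (h s).cls = closedClass f (s, 0) (s, 1) := fun s =>
    basedClass_comp logCoverMap rayFree coverBase f ⟨fun t => (s, t), by fun_prop⟩ 0 1
  exact (e 0).trans (key.trans (e 1).symm)

theorem cls_mono (h : IsCrossing x ν r η) {r' η' : ℝ} (hr : 0 < r') (hrr : r' ≤ r) (hη : 0 < η')
    (hηη : η' ≤ η) : (h.mono hr hrr hη hηη).cls = h.cls := by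
  have hs : ∀ s : unitInterval, IsCrossing x ν (r' + (s : ℝ) * (r - r'))
      (η' + (s : ℝ) * (η - η')) := fun s => by
    have h0 := s.2.1
    have h1 := s.2.2
    exact h.mono (by nlinarith) (by nlinarith) (by nlinarith) (by nlinarith)
  have := cls_eq_of_family hs continuous_const continuous_const (by fun_prop) (by fun_prop)
  convert this using 1
  · congr 1 <;> simp
  · congr 1 <;> simp

theorem cls_eq_of_eq (h : IsCrossing x ν r η) {r' η' : ℝ} (h' : IsCrossing x ν r' η') :
    h.cls = h'.cls := by
  rw [← h.cls_mono (lt_min h.r_pos h'.r_pos) (min_le_left _ _) (lt_min h.η_pos h'.η_pos)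
    (min_le_left _ _), ← h'.cls_mono (lt_min h.r_pos h'.r_pos) (min_le_right _ _)
    (lt_min h.η_pos h'.η_pos) (min_le_right _ _)]

end IsCrossing

theorem two_add_mem_slitPlane {ν : ℂ} (h : ν ∈ Complex.slitPlane) :
    2 + ν ∈ Complex.slitPlane := by
  rw [Complex.mem_slitPlane_iff] at h ⊢
  rcases h with h | h
  · left; simp; linarith
  · right; simpa using h

theorem isCrossing_of_quotient {x ν : ℂ} {r η : ℝ} (hsq : ν ^ 2 = x ^ 2 + 2)
    (hν : ν ∈ Complex.slitPlane) (hr : 0 < r) (hη : 0 < η) (hη' : η < Real.pi / 2)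
    (h : ‖(2 - ν) / (2 + ν)‖ < Real.exp (-r) ∨
      ‖(2 - ν) / (2 + ν)‖ * Real.sin η < |((2 - ν) / (2 + ν)).im|) : IsCrossing x ν r η := by
  have hsl := two_add_mem_slitPlane hν
  refine ⟨hsq, hsl, hr, hη, by linarith [Real.pi_pos], fun u v hu hv heq => ?_⟩
  have h0 := Complex.slitPlane_ne_zero hsl
  set q := (2 - ν) / (2 + ν) with hq
  have h1 : Complex.exp (u + v * Complex.I) ^ 2 = q ^ 2 := by
    rw [hq, div_pow, ← heq, mul_div_cancel_right₀ _ (pow_ne_zero 2 h0)]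
  have h2 : ‖q‖ = Real.exp u := by
    have := congrArg norm h1
    rw [norm_pow, norm_pow] at this
    rw [← (sq_eq_sq₀ (norm_nonneg _) (norm_nonneg _)).1 this, Complex.norm_exp]
    simp
  have h3 : |q.im| = Real.exp u * |Real.sin v| := by
    have h4 : |(Complex.exp (u + v * Complex.I)).im| = |q.im| := by
      rcases sq_eq_sq_iff_eq_or_eq_neg.1 h1 with h | h <;> rw [h]
      simp
    rw [← h4, Complex.exp_im]
    simp [abs_mul]
  rcases h with h | h
  · rw [h2, Real.exp_lt_exp] at h
    linarith
  · rw [h2, h3] at h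
    have h5 := lt_of_mul_lt_mul_left h (Real.exp_pos u).le
    have h6 : |Real.sin v| ≤ Real.sin η := by
      rw [Real.abs_sin_eq_sin_abs_of_abs_le_pi (by linarith [Real.pi_pos])]
      exact Real.sin_le_sin_of_le_of_le_pi_div_two (by linarith [abs_nonneg v, Real.pi_pos])
        hη'.le hv
    linarith

theorem exists_isCrossing_family {x ν : unitInterval → ℂ} (hν : Continuous ν)
    (hsq : ∀ s, ν s ^ 2 = x s ^ 2 + 2) (hsl : ∀ s, ν s ∈ Complex.slitPlane) :
    ∃ r η : ℝ, ∀ s, IsCrossing (x s) (ν s) r η := by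
  have h0 : ∀ s, 2 + ν s ≠ 0 := fun s =>
    Complex.slitPlane_ne_zero (two_add_mem_slitPlane (hsl s))
  set q : unitInterval → ℂ := fun s => (2 - ν s) / (2 + ν s) with hq
  have hqc : Continuous q := Continuous.div (by fun_prop) (by fun_prop) h0
  have hpos : ∀ s, 0 < max (1 - ‖q s‖) |(q s).im| := by
    intro s
    rw [lt_max_iff]
    by_cases him : (q s).im = 0
    · left
      have h1 : (ν s).im = 0 := by
        have : (q s).im = -4 * (ν s).im / Complex.normSq (2 + ν s) := by
          simp only [hq, Complex.div_im]
          simp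
          ring
        rw [this, div_eq_zero_iff] at him
        rcases him with h | h
        · linarith
        · exact absurd (Complex.normSq_eq_zero.1 h) (h0 s)
      have h2 : 0 < (ν s).re := by
        rcases Complex.mem_slitPlane_iff.1 (hsl s) with h | h
        · exact h
        · exact absurd h1 h
      have h3 : ν s = ((ν s).re : ℂ) := Complex.ext rfl (by simp [h1])
      rw [sub_pos, hq]
      simp only []
      rw [h3, norm_div, div_lt_one (by rw [← h3]; exact norm_pos_iff.2 (h0 s))]
      rw [show (2 - ((ν s).re : ℂ)) = ((2 - (ν s).re : ℝ) : ℂ) by push_cast; ring,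
        show (2 + ((ν s).re : ℂ)) = ((2 + (ν s).re : ℝ) : ℂ) by push_cast; ring,
        Complex.norm_real, Complex.norm_real, Real.norm_of_nonneg (by linarith : 0 ≤ 2 + (ν s).re),
        Real.norm_eq_abs, abs_lt]
      constructor <;> linarith
    · right
      exact abs_pos.2 him
  obtain ⟨s₀, -, hs₀⟩ := isCompact_univ.exists_isMinOn (Set.univ_nonempty)
    (f := fun s => max (1 - ‖q s‖) |(q s).im|) (by fun_prop)
  obtain ⟨s₁, -, hs₁⟩ := isCompact_univ.exists_isMaxOn (Set.univ_nonempty)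
    (f := fun s => ‖q s‖) (by fun_prop)
  set δ := max (1 - ‖q s₀‖) |(q s₀).im| with hδ
  have hδ0 : 0 < δ := hpos s₀
  set M := ‖q s₁‖ with hM
  have hM0 : 0 ≤ M := norm_nonneg _
  refine ⟨δ / 2, min (δ / (2 * (M + 1))) 1, fun s => isCrossing_of_quotient (hsq s) (hsl s)
    (by positivity) (by positivity) (lt_of_le_of_lt (min_le_right _ _)
      (by linarith [Real.pi_gt_three])) ?_⟩
  have h1 : δ ≤ max (1 - ‖q s‖) |(q s).im| := hs₀ (Set.mem_univ s)
  have h2 : ‖q s‖ ≤ M := hs₁ (Set.mem_univ s)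
  rcases le_max_iff.1 h1 with h | h
  · left
    have := Real.add_one_le_exp (-(δ / 2))
    linarith
  · right
    have h3 : Real.sin (min (δ / (2 * (M + 1))) 1) ≤ δ / (2 * (M + 1)) :=
      (Real.sin_le (by positivity)).trans (min_le_left _ _)
    have h5 : M * (δ / (2 * (M + 1))) ≤ δ / 2 := by
      rw [mul_div_assoc', div_le_div_iff₀ (by positivity) (by positivity)]
      nlinarith
    calc ‖q s‖ * Real.sin (min (δ / (2 * (M + 1))) 1) ≤ M * (δ / (2 * (M + 1))) := by
          refine mul_le_mul h2 h3 (Real.sin_nonneg_of_nonneg_of_le_pi (by positivity) ?_) hM0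
          exact (min_le_right _ _).trans (by linarith [Real.pi_gt_three])
      _ ≤ δ / 2 := h5
      _ < δ := by linarith
      _ ≤ _ := h

theorem IsCrossing.cls_eq_of_path {x ν : unitInterval → ℂ} (hx : Continuous x) (hν : Continuous ν)
    (hsq : ∀ s, ν s ^ 2 = x s ^ 2 + 2) (hsl : ∀ s, ν s ∈ Complex.slitPlane) {r η r' η' : ℝ}
    (h : IsCrossing (x 0) (ν 0) r η) (h' : IsCrossing (x 1) (ν 1) r' η') : h.cls = h'.cls := by
  obtain ⟨r₀, η₀, H⟩ := exists_isCrossing_family hν hsq hsl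
  rw [h.cls_eq_of_eq (H 0), h'.cls_eq_of_eq (H 1)]
  exact IsCrossing.cls_eq_of_family H hx hν continuous_const continuous_const

/-- The hyperbolic parametrisation of `ν² = x² + 2`: the coordinate `x = √2 sinh (α + i ψ)`. -/
noncomputable def hypX (α ψ : ℝ) : ℂ :=
  ⟨Real.sqrt 2 * Real.sinh α * Real.cos ψ, Real.sqrt 2 * Real.cosh α * Real.sin ψ⟩

/-- The hyperbolic parametrisation of `ν² = x² + 2`: the coordinate `ν = √2 cosh (α + i ψ)`. -/
noncomputable def hypN (α ψ : ℝ) : ℂ :=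
  ⟨Real.sqrt 2 * Real.cosh α * Real.cos ψ, Real.sqrt 2 * Real.sinh α * Real.sin ψ⟩

theorem continuous_hypX : Continuous fun q : ℝ × ℝ => hypX q.1 q.2 := by
  simp only [hypX, Complex.mk_eq_add_mul_I]
  fun_prop

theorem continuous_hypN : Continuous fun q : ℝ × ℝ => hypN q.1 q.2 := by
  simp only [hypN, Complex.mk_eq_add_mul_I]
  fun_prop

theorem hypN_sq (α ψ : ℝ) : hypN α ψ ^ 2 = hypX α ψ ^ 2 + 2 := by
  have h1 := Real.cosh_sq α
  have h2 := Real.sin_sq_add_cos_sq ψ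
  have h3 := Real.sq_sqrt (show (0 : ℝ) ≤ 2 by norm_num)
  apply Complex.ext
  · simp only [pow_two, Complex.mul_re, Complex.add_re, hypN, hypX, Complex.re_ofNat]
    linear_combination (Real.sqrt 2 ^ 2 * (Real.cos ψ ^ 2 + Real.sin ψ ^ 2)) * h1 + 2 * h2 +
      (Real.cos ψ ^ 2 + Real.sin ψ ^ 2) * h3
  · simp only [pow_two, Complex.mul_im, Complex.add_im, hypN, hypX, Complex.im_ofNat]
    ring

theorem hypN_mem_slitPlane_of_cos_pos {α ψ : ℝ} (h : 0 < Real.cos ψ) :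
    hypN α ψ ∈ Complex.slitPlane := by
  rw [Complex.mem_slitPlane_iff]
  left
  have := Real.cosh_pos α
  simp only [hypN]
  positivity

theorem hypN_mem_slitPlane_of_ne_zero {α ψ : ℝ} (hα : α ≠ 0) (h : |ψ| < Real.pi) :
    hypN α ψ ∈ Complex.slitPlane := by
  by_cases h0 : ψ = 0
  · exact hypN_mem_slitPlane_of_cos_pos (by simp [h0])
  rw [Complex.mem_slitPlane_iff]
  right
  have h1 : Real.sin ψ ≠ 0 := by
    intro h2
    rw [abs_lt] at h
    exact h0 ((Real.sin_eq_zero_iff_of_lt_of_lt h.1 h.2).1 h2)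
  have h2 : Real.sinh α ≠ 0 := by rwa [Ne, Real.sinh_eq_zero]
  simp [hypN, h1, h2]

theorem exists_hyp_eq {x ν : ℂ} (hsq : ν ^ 2 = x ^ 2 + 2) (hν : ν ∈ Complex.slitPlane) :
    ∃ α ψ : ℝ, |ψ| < Real.pi ∧ (α ≠ 0 ∨ 0 < Real.cos ψ) ∧ x = hypX α ψ ∧ ν = hypN α ψ := by
  have h2 : (0 : ℝ) < Real.sqrt 2 := by positivity
  have h2c : ((Real.sqrt 2 : ℝ) : ℂ) ≠ 0 := by exact_mod_cast h2.ne'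
  have h2s : ((Real.sqrt 2 : ℝ) : ℂ) ^ 2 = 2 := by
    exact_mod_cast Real.sq_sqrt (show (0 : ℝ) ≤ 2 by norm_num)
  set p := (ν + x) / (Real.sqrt 2 : ℝ) with hp
  have hpq : p * ((ν - x) / (Real.sqrt 2 : ℝ)) = 1 := by
    rw [hp]
    field_simp
    rw [h2s]
    linear_combination hsq
  have hp0 : p ≠ 0 := left_ne_zero_of_mul_eq_one hpq
  have hpi : p⁻¹ = (ν - x) / (Real.sqrt 2 : ℝ) := inv_eq_of_mul_eq_one_right hpq
  have hexp : p = Complex.exp (Real.log ‖p‖ + p.arg * Complex.I) := by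
    conv_lhs => rw [← Complex.exp_log hp0]
    rfl
  obtain ⟨α, hα⟩ : ∃ α, α = Real.log ‖p‖ := ⟨_, rfl⟩
  obtain ⟨ψ, hψa⟩ : ∃ ψ, ψ = p.arg := ⟨_, rfl⟩
  have hψ : |ψ| ≤ Real.pi := hψa ▸ Complex.abs_arg_le_pi p
  have hψ' : -Real.pi < ψ := hψa ▸ Complex.neg_pi_lt_arg p
  rw [← hα, ← hψa] at hexp
  clear_value p
  have hx : x = hypX α ψ := by
    have h1 : x = (Real.sqrt 2 : ℝ) * (p - p⁻¹) / 2 := by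
      rw [hpi, hp]; field_simp; ring
    rw [h1, hexp, ← Complex.exp_neg, neg_add, ← neg_mul]
    apply Complex.ext
    · simp [Complex.exp_re, hypX, Real.sinh_eq]; ring
    · simp [Complex.exp_im, hypX, Real.cosh_eq]; ring
  have hn : ν = hypN α ψ := by
    have h1 : ν = (Real.sqrt 2 : ℝ) * (p + p⁻¹) / 2 := by
      rw [hpi, hp]; field_simp; ring
    rw [h1, hexp, ← Complex.exp_neg, neg_add, ← neg_mul]
    apply Complex.ext
    · simp [Complex.exp_re, hypN, Real.cosh_eq]; ring
    · simp [Complex.exp_im, hypN, Real.sinh_eq]; ring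
  have hc := Real.cosh_pos α
  refine ⟨α, ψ, ?_, ?_, hx, hn⟩
  · refine lt_of_le_of_ne (hψ) fun h => ?_
    have h' : ψ = Real.pi := by
      rcases (abs_eq Real.pi_pos.le).1 h with h | h
      · exact h
      · exact absurd h hψ'.ne'
    rw [hn, Complex.mem_slitPlane_iff, h'] at hν
    simp only [hypN, Real.cos_pi, Real.sin_pi] at hν
    rcases hν with h | h
    · nlinarith [mul_pos h2 hc]
    · simp at h
  · by_contra! h
    rw [hn, Complex.mem_slitPlane_iff, h.1] at hν
    simp only [hypN, Real.sinh_zero, Real.cosh_zero] at hν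
    rcases hν with h' | h'
    · nlinarith [h.2]
    · simp at h'

theorem hypX_arsinh : hypX (Real.arsinh 1) 0 = (Real.sqrt 2 : ℝ) := by
  apply Complex.ext <;> simp [hypX]

theorem hypN_arsinh : hypN (Real.arsinh 1) 0 = 2 := by
  apply Complex.ext
  · simp only [hypN, Real.cosh_arsinh, Real.cos_zero]
    norm_num
  · simp [hypN]

theorem isCrossing_two {x : ℂ} (hx : x ^ 2 = 2) {r η : ℝ} (hr : 0 < r) (hη : 0 < η)
    (hη' : η < Real.pi) : IsCrossing x 2 r η :=
  ⟨by rw [hx]; norm_num, by simp [Complex.mem_slitPlane_iff], hr, hη, hη', fun u v _ _ => by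
    simp [Complex.exp_ne_zero]⟩

theorem ofReal_sqrt_two_sq : ((Real.sqrt 2 : ℝ) : ℂ) ^ 2 = 2 := by
  exact_mod_cast Real.sq_sqrt (show (0 : ℝ) ≤ 2 by norm_num)

theorem isCrossing_base : IsCrossing (Real.sqrt 2 : ℝ) 2 (Real.log 4) (Real.pi / 4) :=
  isCrossing_two ofReal_sqrt_two_sq (Real.log_pos (by norm_num)) (by positivity)
    (by linarith [Real.pi_pos])

/-- The common class of all crossings. -/
noncomputable def crossingClass : FundamentalGroup affineComplement (logCoverMap coverBase) :=
  isCrossing_base.cls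

theorem IsCrossing.cls_eq_crossingClass {x ν : ℂ} {r η : ℝ} (h : IsCrossing x ν r η)
    (hν : ν ∈ Complex.slitPlane) : h.cls = crossingClass := by
  obtain ⟨α, ψ, hψ, hαψ, rfl, rfl⟩ := exists_hyp_eq h.sq_eq hν
  obtain ⟨r₀, η₀, h₀⟩ := exists_isCrossing_family (x := fun _ => hypX α 0) (ν := fun _ => hypN α 0)
    continuous_const (fun _ => hypN_sq _ _)
    (fun _ => hypN_mem_slitPlane_of_cos_pos (by simp))
  have e1 : h.cls = (h₀ 0).cls := by
    have := IsCrossing.cls_eq_of_path (x := fun s => hypX α ((1 - (s : ℝ)) * ψ))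
      (ν := fun s => hypN α ((1 - (s : ℝ)) * ψ)) (r := r) (η := η) (r' := r₀) (η' := η₀)
      (continuous_hypX.comp (f := fun s : unitInterval => (α, (1 - (s : ℝ)) * ψ)) (by fun_prop))
      (continuous_hypN.comp (f := fun s : unitInterval => (α, (1 - (s : ℝ)) * ψ)) (by fun_prop))
      (fun s => hypN_sq _ _) (fun s => ?_) (by simpa using h) (by simpa using h₀ 0)
    · convert this using 2 <;> simp
    · have h1 : |(1 - (s : ℝ)) * ψ| ≤ |ψ| := by
        rw [abs_mul]
        have : |1 - (s : ℝ)| ≤ 1 := abs_le.2 ⟨by linarith [s.2.2], by linarith [s.2.1]⟩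
        nlinarith [abs_nonneg ψ]
      rcases hαψ with h2 | h2
      · exact hypN_mem_slitPlane_of_ne_zero h2 (h1.trans_lt hψ)
      · refine hypN_mem_slitPlane_of_cos_pos ?_
        rw [← Real.cos_abs] at h2 ⊢
        exact h2.trans_le (Real.cos_le_cos_of_nonneg_of_le_pi (abs_nonneg _) hψ.le h1)
  have hb : IsCrossing (hypX (Real.arsinh 1) 0) (hypN (Real.arsinh 1) 0) (Real.log 4)
      (Real.pi / 4) := by
    rw [hypX_arsinh, hypN_arsinh]
    exact isCrossing_base
  have e2 : (h₀ 0).cls = hb.cls := by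
    have := IsCrossing.cls_eq_of_path
      (x := fun s => hypX (α + (s : ℝ) * (Real.arsinh 1 - α)) 0)
      (ν := fun s => hypN (α + (s : ℝ) * (Real.arsinh 1 - α)) 0)
      (r := r₀) (η := η₀) (r' := Real.log 4) (η' := Real.pi / 4)
      (continuous_hypX.comp
        (f := fun s : unitInterval => (α + (s : ℝ) * (Real.arsinh 1 - α), 0)) (by fun_prop))
      (continuous_hypN.comp
        (f := fun s : unitInterval => (α + (s : ℝ) * (Real.arsinh 1 - α), 0)) (by fun_prop))
      (fun s => hypN_sq _ _)
      (fun s => hypN_mem_slitPlane_of_cos_pos (by simp)) (by simpa using h₀ 0) (by simpa using hb)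
    convert this using 2 <;> simp
  have e3 : hb.cls = crossingClass := by
    unfold crossingClass
    congr 1 <;> simp [hypX_arsinh, hypN_arsinh]
  rw [e1, e2, e3]

/-- The class in `affineComplement` of a path from the base point to its image under the deck
transformation. -/
noncomputable def shiftLoop : FundamentalGroup affineComplement (logCoverMap coverBase) :=
  deckLoop logCoverMap rayFree coverBase deckShift logCoverMap_comp_deckShift deckShift_mem_rayFree

theorem exp_add_int_mul_pi_sq (w : ℂ) (k : ℤ) :
    Complex.exp (w + k * (Real.pi * Complex.I)) ^ 2 = Complex.exp w ^ 2 := by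
  rw [← Complex.exp_nat_mul, ← Complex.exp_nat_mul, Complex.exp_eq_exp_iff_exists_int]
  exact ⟨k, by push_cast; ring⟩

theorem add_int_mul_pi_mem_logCover {x w : ℂ} {k : ℤ} :
    (x, w + k * (Real.pi * Complex.I)) ∈ logCover ↔ (x, w) ∈ logCover := by
  rw [mem_logCover, mem_logCover, exp_add_int_mul_pi_sq]

/-- The powers of the deck transformation. -/
noncomputable def intShift (k : ℤ) : C(logCover, logCover) where
  toFun p := ⟨(p.1.1, p.1.2 + k * (Real.pi * Complex.I)), add_int_mul_pi_mem_logCover.2 p.2⟩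
  continuous_toFun := by fun_prop

theorem intShift_mem_rayFree {k : ℤ} {p : logCover} (hp : p ∈ rayFree) :
    intShift k p ∈ rayFree := by
  intro r hr
  have h := (add_int_mul_pi_mem_logCover (k := k)).2 (hp r hr)
  rwa [add_right_comm] at h

theorem deckShift_intShift (k : ℤ) (p : logCover) :
    deckShift (intShift k p) = intShift (k + 1) p := by
  refine Subtype.ext (Prod.ext rfl ?_)
  show p.1.2 + k * (Real.pi * Complex.I) + Real.pi * Complex.I =
    p.1.2 + ((k + 1 : ℤ) : ℂ) * (Real.pi * Complex.I)
  push_cast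
  ring

theorem intShift_zero (p : logCover) : intShift 0 p = p := by
  refine Subtype.ext (Prod.ext rfl ?_)
  simp [intShift]

theorem logCoverMap_intShift (k : ℤ) (p : logCover) : logCoverMap (intShift k p) = logCoverMap p :=
  Subtype.ext (Prod.ext rfl (exp_add_int_mul_pi_sq p.1.2 k))

theorem closedClass_intShift {D : Type*} [TopologicalSpace D] [SimplyConnectedSpace D]
    (f : C(D, logCover)) {d d' : D} (h : f d ∈ rayFree) (h' : f d' ∈ rayFree) (k : ℤ) :
    closedClass ((intShift k).comp f) d d' = shiftLoop ^ (-k) * closedClass f d d' *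
      shiftLoop ^ k := by
  have step : ∀ k : ℤ, closedClass ((intShift (k + 1)).comp f) d d' =
      shiftLoop⁻¹ * closedClass ((intShift k).comp f) d d' * shiftLoop := by
    intro k
    have e : (intShift (k + 1)).comp f = deckShift.comp ((intShift k).comp f) :=
      ContinuousMap.ext fun x => (deckShift_intShift k (f x)).symm
    rw [e]
    exact basedClass_deck logCoverMap rayFree coverBase deckShift logCoverMap_comp_deckShift
      deckShift_mem_rayFree ((intShift k).comp f) (intShift_mem_rayFree h) (intShift_mem_rayFree h')
  induction k using Int.induction_on with
  | zero =>
    have e : (intShift 0).comp f = f := ContinuousMap.ext fun x => intShift_zero (f x)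
    simp [e]
  | succ i ih =>
    rw [step, ih]
    group
  | pred i ih =>
    have h := step (-(i : ℤ) - 1)
    rw [sub_add_cancel, ih] at h
    have h2 : closedClass ((intShift (-(i : ℤ) - 1)).comp f) d d' = shiftLoop *
        (shiftLoop⁻¹ * closedClass ((intShift (-(i : ℤ) - 1)).comp f) d d' * shiftLoop) *
        shiftLoop⁻¹ := by group
    rw [h2, ← h]
    group

theorem legLoop_intShift (k : ℤ) (h : intShift k coverBase ∈ rayFree)
    (h' : logCoverMap (intShift k coverBase) = logCoverMap coverBase) :
    legLoop logCoverMap rayFree coverBase (intShift k coverBase) h h' = shiftLoop ^ k := by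
  have step : ∀ k : ℤ, legLoop logCoverMap rayFree coverBase (intShift (k + 1) coverBase)
      (intShift_mem_rayFree coverBase.2) (logCoverMap_intShift _ _) =
      legLoop logCoverMap rayFree coverBase (intShift k coverBase)
      (intShift_mem_rayFree coverBase.2) (logCoverMap_intShift _ _) * shiftLoop := by
    intro k
    rw [shiftLoop, ← legLoop_deck]
    congr 1
    exact (deckShift_intShift k coverBase).symm
  induction k using Int.induction_on with
  | zero =>
    rw [zpow_zero, ← legLoop_base logCoverMap rayFree coverBase]
    congr 1
    exact intShift_zero _
  | succ i ih => rw [step, ih, zpow_add_one]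
  | pred i ih =>
    have := step (-(i : ℤ) - 1)
    simp only [sub_add_cancel] at this
    rw [ih, ← mul_inv_eq_iff_eq_mul] at this
    rw [← this, zpow_sub_one]

/-- The subgroup generated by the class of a crossing and the class of the deck transformation. -/
noncomputable def crossingSubgroup :
    Subgroup (FundamentalGroup affineComplement (logCoverMap coverBase)) :=
  Subgroup.closure {crossingClass, shiftLoop}

theorem crossingClass_mem : crossingClass ∈ crossingSubgroup :=
  Subgroup.subset_closure (by simp)

theorem shiftLoop_mem : shiftLoop ∈ crossingSubgroup := Subgroup.subset_closure (by simp)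

/-- A neighbourhood in `logCover` whose closed-up paths lie in `crossingSubgroup`. -/
def IsGenNhd (N : Set logCover) : Prop :=
  IsGoodNhd logCoverMap rayFree coverBase crossingSubgroup N

/-- The preimage in `logCover` of the product of two balls. -/
def boxNhd (x w : ℂ) (ρ R : ℝ) : Set logCover :=
  Subtype.val ⁻¹' (Metric.ball x ρ ×ˢ Metric.ball w R)

theorem isOpen_boxNhd (x w : ℂ) (ρ R : ℝ) : IsOpen (boxNhd x w ρ R) :=
  (Metric.isOpen_ball.prod Metric.isOpen_ball).preimage continuous_subtype_val

theorem simplyConnectedSpace_boxNhd {x w : ℂ} {ρ R : ℝ} (hρ : 0 < ρ) (hR : 0 < R)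
    (h : Metric.ball x ρ ×ˢ Metric.ball w R ⊆ logCover) : SimplyConnectedSpace (boxNhd x w ρ R) :=
  simplyConnectedSpace_preimage_val ((convex_ball _ _).prod (convex_ball _ _))
    ⟨(x, w), Metric.mem_ball_self hρ, Metric.mem_ball_self hR⟩ h

theorem ball_lineMap {x a b : ℂ} {ρ : ℝ} (ha : a ∈ Metric.ball x ρ) (hb : b ∈ Metric.ball x ρ)
    {t : ℝ} (h0 : 0 ≤ t) (h1 : t ≤ 1) : a + (t : ℂ) * (b - a) ∈ Metric.ball x ρ := by
  have := (convex_ball x ρ).add_smul_sub_mem ha hb ⟨h0, h1⟩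
  rwa [Complex.real_smul] at this

theorem closedClass_boxNhd_eq_one {x w : ℂ} {ρ R : ℝ} [SimplyConnectedSpace (boxNhd x w ρ R)]
    (h : Metric.ball x ρ ×ˢ Metric.ball w R ⊆ logCover) (z z' : boxNhd x w ρ R)
    (hA : ∀ t : unitInterval, ∃ p ∈ rayFree, p.1 = (z.1.1.1 + ((t : ℝ) : ℂ) * (z'.1.1.1 - z.1.1.1),
      z.1.1.2 + ((t : ℝ) : ℂ) * (z'.1.1.2 - z.1.1.2))) :
    closedClass (setIncl (boxNhd x w ρ R)) z z' = 1 := by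
  have hm : ∀ t : unitInterval, (z.1.1.1 + ((t : ℝ) : ℂ) * (z'.1.1.1 - z.1.1.1),
      z.1.1.2 + ((t : ℝ) : ℂ) * (z'.1.1.2 - z.1.1.2)) ∈ Metric.ball x ρ ×ˢ Metric.ball w R :=
    fun t => ⟨ball_lineMap z.2.1 z'.2.1 t.2.1 t.2.2, ball_lineMap z.2.2 z'.2.2 t.2.1 t.2.2⟩
  refine basedClass_eq_one_of_mem logCoverMap rayFree coverBase _
    (⟨fun t => ⟨⟨_, h (hm t)⟩, hm t⟩, by fun_prop⟩ : C(unitInterval, boxNhd x w ρ R))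
    (d := 0) (d' := 1) ?_ ?_ fun s => ?_
  · ext <;> simp
  · ext <;> simp
  · obtain ⟨p, hp, hps⟩ := hA s
    have : p = ⟨_, h (hm s)⟩ := Subtype.ext hps
    rwa [this] at hp

theorem exists_isGenNhd_of_mem_rayFree {z : logCover} (hz : z ∈ rayFree) :
    ∃ N, z ∈ N ∧ IsGenNhd N := by
  obtain ⟨N, hN, hzN, hNA, hs⟩ := exists_isOpen_simplyConnectedSpace_subset z _ isOpen_rayFree hz
  refine ⟨N, hzN, hN, hs, fun z z' _ _ => ?_⟩
  rw [basedClass_of_forall_mem logCoverMap rayFree coverBase _ _ _ fun p => hNA p.2]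
  exact one_mem _

theorem closedClass_mul {D : Type*} [TopologicalSpace D] [SimplyConnectedSpace D]
    (f : C(D, logCover)) {d d' d'' : D} (h : f d ∈ rayFree) (h' : f d' ∈ rayFree)
    (h'' : f d'' ∈ rayFree) :
    closedClass f d' d'' * closedClass f d d' = closedClass f d d'' :=
  basedClass_mul logCoverMap rayFree coverBase f d d' d'' h h' h''

theorem closedClass_inv {D : Type*} [TopologicalSpace D] [SimplyConnectedSpace D]
    (f : C(D, logCover)) {d d' : D} (h : f d ∈ rayFree) (h' : f d' ∈ rayFree) :
    closedClass f d' d = (closedClass f d d')⁻¹ :=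
  basedClass_inv logCoverMap rayFree coverBase f h h'

theorem closedClass_self {D : Type*} [TopologicalSpace D] [SimplyConnectedSpace D]
    (f : C(D, logCover)) (d : D) : closedClass f d d = 1 :=
  basedClass_self logCoverMap rayFree coverBase f d

theorem closedClass_comp {D E : Type*} [TopologicalSpace D] [TopologicalSpace E]
    [SimplyConnectedSpace D] [SimplyConnectedSpace E] (f : C(E, logCover)) (g : C(D, E))
    (d d' : D) : closedClass (f.comp g) d d' = closedClass f (g d) (g d') :=
  basedClass_comp logCoverMap rayFree coverBase f g d d'

/-- The value at `(x, w)` of the coordinate measuring the position relative to an obstruction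
ray. -/
theorem IsCrossing.mem_rayFree_iff {x ν w : ℂ} {r η : ℝ} (h : IsCrossing x ν r η) {k : ℤ} {G : ℂ}
    (hG : w = Complex.log (2 + ν) + k * (Real.pi * Complex.I) + G) (hre : -r ≤ G.re)
    (hre' : G.re < 0) (him : |G.im| ≤ η) (hw : (x, w) ∈ logCover) :
    (⟨(x, w), hw⟩ : logCover) ∈ rayFree ↔ G.im ≠ 0 := by
  constructor
  · intro hA h0
    have h1 := hA (-G.re) (by linarith)
    have e : w + ((-G.re : ℝ) : ℂ) = Complex.log (2 + ν) + k * (Real.pi * Complex.I) := by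
      rw [hG]
      apply Complex.ext <;> simp [h0]
    change (x, w + ((-G.re : ℝ) : ℂ)) ∈ logCover at h1
    rw [e, add_int_mul_pi_mem_logCover, mem_logCover_iff h.sq_eq,
      Complex.exp_log (Complex.slitPlane_ne_zero h.mem_slitPlane)] at h1
    exact h1.1 rfl
  · intro h0
    have h1 := intShift_mem_rayFree (k := k) (h.mem_rayFree hre him h0)
    convert h1 using 1
    refine Subtype.ext (Prod.ext rfl ?_)
    change w = Complex.log (2 + ν) + (G.re + G.im * Complex.I) + k * (Real.pi * Complex.I)
    rw [hG, Complex.re_add_im]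
    ring

theorem exists_crossing_of_not_mem_rayFree {x w : ℂ} (hw : (x, w) ∈ logCover)
    (hA : (⟨(x, w), hw⟩ : logCover) ∉ rayFree) (hx : ¬ ((x ^ 2 + 2).im = 0 ∧ 0 ≤ (x ^ 2 + 2).re)) :
    ∃ (ν : ℂ) (r : ℝ) (k : ℤ), ν ^ 2 = x ^ 2 + 2 ∧ ν.im ≠ 0 ∧ 0 < r ∧
      w = Complex.log (2 + ν) + k * (Real.pi * Complex.I) - r := by
  have him : ∀ ν : ℂ, ν ^ 2 = x ^ 2 + 2 → ν.im ≠ 0 := by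
    intro ν hν h0
    rw [← hν, pow_two] at hx
    apply hx
    simp [h0, mul_self_nonneg]
  obtain ⟨r, hr0, hr⟩ : ∃ r : ℝ, 0 ≤ r ∧ (x, w + r) ∉ logCover := by
    by_contra! h
    exact hA h
  have hr' : 0 < r := by
    refine lt_of_le_of_ne hr0 fun h => hr ?_
    rw [← h]
    simpa using hw
  obtain ⟨ν, hν, hexp⟩ : ∃ ν : ℂ, ν ^ 2 = x ^ 2 + 2 ∧ Complex.exp (w + r) ^ 2 = (2 + ν) ^ 2 := by
    obtain ⟨ν, hν⟩ := IsAlgClosed.exists_pow_nat_eq (x ^ 2 + 2) (n := 2) two_pos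
    rw [mem_logCover_iff hν, not_and_or, not_not, not_not] at hr
    rcases hr with h | h
    · exact ⟨ν, hν, h⟩
    · exact ⟨-ν, by rw [neg_sq, hν], by rw [h, sub_eq_add_neg]⟩
  have h0 : 2 + ν ≠ 0 := fun h => him ν hν (by simpa using congrArg Complex.im h)
  rw [← Complex.exp_log h0, ← Complex.exp_nat_mul, ← Complex.exp_nat_mul,
    Complex.exp_eq_exp_iff_exists_int] at hexp
  obtain ⟨k, hk⟩ := hexp
  refine ⟨ν, r, k, hν, him ν hν, hr', ?_⟩
  push_cast at hk
  linear_combination hk / 2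

theorem eventually_local_root {x ν : ℂ} (hν : ν ^ 2 = x ^ 2 + 2) (him : ν.im ≠ 0) {r : ℝ}
    (hr : 0 < r) : ∃ η > 0, ∀ δ > 0, ∀ᶠ y in nhds x, ∃ μ : ℂ, IsCrossing y μ r η ∧
      ‖Complex.log (2 + μ) - Complex.log (2 + ν)‖ < δ ∧ (y = x → μ = ν) := by
  have hν0 : ν ≠ 0 := fun h => him (by simp [h])
  have hsl : ν ∈ Complex.slitPlane := Complex.mem_slitPlane_iff.2 (Or.inr him)
  have h20 : 2 + ν ≠ 0 := Complex.slitPlane_ne_zero (two_add_mem_slitPlane hsl)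
  let g : ℂ → ℂ := fun y => ν * Complex.exp (Complex.log ((y ^ 2 + 2) / ν ^ 2) / 2)
  have hgx : g x = ν := by simp [g, ← hν, hν0]
  have hsq : (x ^ 2 + 2) / ν ^ 2 ∈ Complex.slitPlane := by
    rw [← hν, div_self (pow_ne_zero 2 hν0)]
    simp
  have hg : ContinuousAt g x := by
    have : ContinuousAt (fun y : ℂ => Complex.log ((y ^ 2 + 2) / ν ^ 2)) x :=
      ContinuousAt.clog (by fun_prop) hsq
    fun_prop
  have hq0 : ((2 - ν) / (2 + ν)).im ≠ 0 := by
    have : ((2 - ν) / (2 + ν)).im = -4 * ν.im / Complex.normSq (2 + ν) := by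
      simp only [Complex.div_im]
      simp
      ring
    rw [this]
    simp [him, h20]
  obtain ⟨η, hη0, hη, hη'⟩ : ∃ η > 0, η < Real.pi / 2 ∧
      ‖(2 - ν) / (2 + ν)‖ * Real.sin η < |((2 - ν) / (2 + ν)).im| := by
    have h1 : ∀ᶠ η in nhds (0 : ℝ), η < Real.pi / 2 ∧
        ‖(2 - ν) / (2 + ν)‖ * Real.sin η < |((2 - ν) / (2 + ν)).im| := by
      refine (eventually_lt_nhds (by positivity)).and ?_
      refine ContinuousAt.eventually_lt (by fun_prop) (by fun_prop) ?_
      simpa using hq0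
    obtain ⟨η, h, hη⟩ := ((h1.filter_mono nhdsWithin_le_nhds).and
      (self_mem_nhdsWithin (s := Set.Ioi (0 : ℝ)))).exists
    exact ⟨η, hη, h⟩
  refine ⟨η, hη0, fun δ hδ => ?_⟩
  have c1 : ∀ᶠ y in nhds x, g y ∈ Complex.slitPlane :=
    hg.eventually_mem (Complex.isOpen_slitPlane.mem_nhds (by rwa [hgx]))
  have hq : ContinuousAt (fun y => (2 - g y) / (2 + g y)) x := by
    refine ContinuousAt.div (by fun_prop) (by fun_prop) (by rwa [hgx])
  have c2 : ∀ᶠ y in nhds x,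
      ‖(2 - g y) / (2 + g y)‖ * Real.sin η < |((2 - g y) / (2 + g y)).im| := by
    refine ContinuousAt.eventually_lt (by fun_prop) ?_ (by rwa [hgx])
    exact (Complex.continuous_im.continuousAt.comp hq).abs
  have c3 : ∀ᶠ y in nhds x, ‖Complex.log (2 + g y) - Complex.log (2 + ν)‖ < δ := by
    have hl : ContinuousAt (fun y => Complex.log (2 + g y)) x :=
      ContinuousAt.clog (by fun_prop) (by rw [hgx]; exact two_add_mem_slitPlane hsl)
    refine ContinuousAt.eventually_lt (by fun_prop) (by fun_prop) ?_
    rw [hgx]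
    simpa using hδ
  have c4 : ∀ᶠ y in nhds x, (y ^ 2 + 2) / ν ^ 2 ≠ 0 := by
    refine ContinuousAt.eventually_ne (by fun_prop) (Complex.slitPlane_ne_zero hsq)
  filter_upwards [c1, c2, c3, c4] with y h1 h2 h3 h4
  refine ⟨g y, isCrossing_of_quotient ?_ h1 hr hη0 hη (Or.inr h2), h3, fun h => h ▸ hgx⟩
  simp only [g]
  rw [mul_pow, ← Complex.exp_nat_mul, Nat.cast_ofNat, mul_div_cancel₀ _ two_ne_zero,
    Complex.exp_log h4, mul_div_cancel₀ _ (pow_ne_zero 2 hν0)]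

theorem closedClass_setIncl_mul {N : Set logCover} [SimplyConnectedSpace N] {z z' z'' : N}
    (h : (z : logCover) ∈ rayFree) (h' : (z' : logCover) ∈ rayFree)
    (h'' : (z'' : logCover) ∈ rayFree) :
    closedClass (setIncl N) z' z'' * closedClass (setIncl N) z z' =
      closedClass (setIncl N) z z'' := closedClass_mul (setIncl N) h h' h''

theorem closedClass_setIncl_inv {N : Set logCover} [SimplyConnectedSpace N] {z z' : N}
    (h : (z : logCover) ∈ rayFree) (h' : (z' : logCover) ∈ rayFree) :
    closedClass (setIncl N) z' z = (closedClass (setIncl N) z z')⁻¹ :=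
  closedClass_inv (setIncl N) h h'

theorem closedClass_boxNhd_crossing {x w ν : ℂ} {ρ R r η : ℝ}
    [SimplyConnectedSpace (boxNhd x w ρ R)] (h : IsCrossing x ν r η) (hν : ν ∈ Complex.slitPlane)
    {k : ℤ} (hw : w = Complex.log (2 + ν) + k * (Real.pi * Complex.I) - r) (hρ : 0 < ρ)
    (hη : η < R) (zd zu : boxNhd x w ρ R)
    (hd : zd.1.1 = (x, w - η * Complex.I)) (hu : zu.1.1 = (x, w + η * Complex.I)) :
    closedClass (setIncl (boxNhd x w ρ R)) zd zu ∈ crossingSubgroup := by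
  have hm : ∀ t : unitInterval, intShift k (h.segment t) ∈ boxNhd x w ρ R := by
    intro t
    refine ⟨Metric.mem_ball_self hρ, ?_⟩
    change Complex.log (2 + ν) + ((-r : ℝ) + ((2 * (t : ℝ) - 1) * η : ℝ) * Complex.I) +
      k * (Real.pi * Complex.I) ∈ Metric.ball w R
    rw [mem_ball_iff_norm]
    have e : Complex.log (2 + ν) + ((-r : ℝ) + ((2 * (t : ℝ) - 1) * η : ℝ) * Complex.I) +
      k * (Real.pi * Complex.I) - w = ((2 * (t : ℝ) - 1) * η : ℝ) * Complex.I := by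
      rw [hw]; push_cast; ring
    rw [e, norm_mul, Complex.norm_I, mul_one, Complex.norm_real]
    exact (h.abs_segment_le t).trans_lt hη
  let g : C(unitInterval, boxNhd x w ρ R) :=
    ⟨fun t => ⟨intShift k (h.segment t), hm t⟩, by fun_prop⟩
  have e : closedClass ((intShift k).comp h.segment) 0 1 =
      closedClass (setIncl (boxNhd x w ρ R)) (g 0) (g 1) :=
    closedClass_comp (setIncl (boxNhd x w ρ R)) g 0 1
  have e0 : zd = g 0 := by
    refine Subtype.ext (Subtype.ext (hd.trans (Prod.ext rfl ?_)))
    change w - η * Complex.I = Complex.log (2 + ν) +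
      ((-r : ℝ) + ((2 * ((0 : unitInterval) : ℝ) - 1) * η : ℝ) * Complex.I) +
      k * (Real.pi * Complex.I)
    rw [hw, Set.Icc.coe_zero]; push_cast; ring
  have e1 : zu = g 1 := by
    refine Subtype.ext (Subtype.ext (hu.trans (Prod.ext rfl ?_)))
    change w + η * Complex.I = Complex.log (2 + ν) +
      ((-r : ℝ) + ((2 * ((1 : unitInterval) : ℝ) - 1) * η : ℝ) * Complex.I) +
      k * (Real.pi * Complex.I)
    rw [hw, Set.Icc.coe_one]; push_cast; ring
  rw [e0, e1, ← e, closedClass_intShift _ h.segment_zero_mem h.segment_one_mem]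
  have hc : closedClass h.segment 0 1 = crossingClass := h.cls_eq_crossingClass hν
  rw [hc]
  exact mul_mem (mul_mem (zpow_mem shiftLoop_mem _) crossingClass_mem) (zpow_mem shiftLoop_mem _)

theorem exists_isGenNhd_of_not_mem_rayFree {x w : ℂ} (hw : (x, w) ∈ logCover)
    (hA : (⟨(x, w), hw⟩ : logCover) ∉ rayFree) (hx : ¬ ((x ^ 2 + 2).im = 0 ∧ 0 ≤ (x ^ 2 + 2).re)) :
    ∃ N, (⟨(x, w), hw⟩ : logCover) ∈ N ∧ IsGenNhd N := by
  obtain ⟨ν, r, k, hν, him, hr, hwk⟩ := exists_crossing_of_not_mem_rayFree hw hA hx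
  have hsl : ν ∈ Complex.slitPlane := Complex.mem_slitPlane_iff.2 (Or.inr him)
  obtain ⟨ε, hε, hball, -⟩ := exists_ball_subset_logCover ⟨(x, w), hw⟩ isOpen_univ trivial
  obtain ⟨η, hη, hη'⟩ := eventually_local_root hν him (r := r + 1) (by linarith)
  obtain ⟨R, hR, hRε, hRη, hRr, hR1⟩ : ∃ R > 0, R ≤ ε ∧ 2 * R ≤ η ∧ 2 * R ≤ r ∧ 2 * R ≤ 1 :=
    ⟨min (min ε (η / 2)) (min (r / 2) (1 / 2)), by positivity,
      (min_le_left _ _).trans (min_le_left _ _), by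
        linarith [(min_le_left (min ε (η / 2)) (min (r / 2) (1 / 2))).trans (min_le_right _ _)], by
        linarith [(min_le_right (min ε (η / 2)) (min (r / 2) (1 / 2))).trans (min_le_left _ _)], by
        linarith [(min_le_right (min ε (η / 2)) (min (r / 2) (1 / 2))).trans (min_le_right _ _)]⟩
  obtain ⟨ρ', hρ', hev⟩ := Metric.eventually_nhds_iff_ball.1 (hη' (R / 4) (by positivity))
  obtain ⟨ρ, hρ, hρε, hρρ'⟩ : ∃ ρ > 0, ρ ≤ ε ∧ ρ ≤ ρ' :=
    ⟨min ε ρ', by positivity, min_le_left _ _, min_le_right _ _⟩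
  replace hev : ∀ y ∈ Metric.ball x ρ, ∃ μ : ℂ, IsCrossing y μ (r + 1) η ∧
      ‖Complex.log (2 + μ) - Complex.log (2 + ν)‖ < R / 4 ∧ (y = x → μ = ν) :=
    fun y hy => hev y (Metric.ball_subset_ball hρρ' hy)
  choose! μ hμ hμν hμx using hev
  have hxx : x ∈ Metric.ball x ρ := Metric.mem_ball_self hρ
  have hμxx : μ x = ν := hμx x hxx rfl
  have hbox : Metric.ball x ρ ×ˢ Metric.ball w R ⊆ logCover := by
    refine (Set.prod_mono (Metric.ball_subset_ball hρε) (Metric.ball_subset_ball hRε)).trans ?_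
    rw [ball_prod_same]
    exact hball
  have _ := simplyConnectedSpace_boxNhd hρ hR hbox
  -- the height above the obstruction ray
  let G : ℂ → ℂ → ℂ := fun y v => v - k * (Real.pi * Complex.I) - Complex.log (2 + μ y)
  have hG : ∀ y v, G y v = (v - w) - (Complex.log (2 + μ y) - Complex.log (2 + ν)) - r := by
    intro y v
    simp only [G, hwk]
    ring
  have hmem : ∀ y v, (hy : y ∈ Metric.ball x ρ) → (hv : v ∈ Metric.ball w R) →
      ((⟨(y, v), hbox ⟨hy, hv⟩⟩ : logCover) ∈ rayFree ↔ (G y v).im ≠ 0) := by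
    intro y v hy hv
    have h1 := hμν y hy
    rw [mem_ball_iff_norm] at hv
    have a1 := abs_le.1 (Complex.abs_re_le_norm (v - w))
    have a2 := abs_le.1 (Complex.abs_re_le_norm (Complex.log (2 + μ y) - Complex.log (2 + ν)))
    have a3 := abs_le.1 (Complex.abs_im_le_norm (v - w))
    have a4 := abs_le.1 (Complex.abs_im_le_norm (Complex.log (2 + μ y) - Complex.log (2 + ν)))
    have gre : (G y v).re = (v - w).re -
        (Complex.log (2 + μ y) - Complex.log (2 + ν)).re - r := by rw [hG]; simp
    have gim : (G y v).im = (v - w).im -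
        (Complex.log (2 + μ y) - Complex.log (2 + ν)).im := by rw [hG]; simp
    refine (hμ y hy).mem_rayFree_iff (k := k) (G := G y v) ?_ ?_ ?_ ?_ _
    · simp only [G]; ring
    · rw [gre]; linarith
    · rw [gre]; linarith
    · rw [gim, abs_le]; constructor <;> linarith
  have hside : ∀ σ : ℝ, |σ| = 1 → w + (σ * (R / 2) : ℝ) * Complex.I ∈ Metric.ball w R := by
    intro σ hσ
    rw [mem_ball_iff_norm, add_sub_cancel_left, norm_mul, Complex.norm_I, mul_one,
      Complex.norm_real, Real.norm_eq_abs, abs_mul, hσ, abs_of_pos (by positivity)]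
    linarith
  have hGside : ∀ σ : ℝ, |σ| = 1 → ∀ y ∈ Metric.ball x ρ,
      0 < σ * (G y (w + (σ * (R / 2) : ℝ) * Complex.I)).im := by
    intro σ hσ y hy
    have h1 := hμν y hy
    have a4 := abs_le.1 (Complex.abs_im_le_norm (Complex.log (2 + μ y) - Complex.log (2 + ν)))
    rw [hG, add_sub_cancel_left, Complex.sub_im, Complex.sub_im, Complex.im_ofReal_mul,
      Complex.I_im, Complex.ofReal_im]
    rcases (abs_eq zero_le_one).1 hσ with h | h <;> rw [h] <;> linarith
  let S : ∀ σ : ℝ, |σ| = 1 → boxNhd x w ρ R := fun σ hσ =>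
    ⟨⟨(x, w + (σ * (R / 2) : ℝ) * Complex.I), hbox ⟨hxx, hside σ hσ⟩⟩, hxx, hside σ hσ⟩
  have hSA : ∀ σ hσ, (S σ hσ).1 ∈ rayFree := fun σ hσ =>
    (hmem _ _ hxx (hside σ hσ)).2 fun h => by
      have := hGside σ hσ x hxx
      rw [h] at this
      simp at this
  have htoS : ∀ (z : boxNhd x w ρ R) σ (hσ : |σ| = 1), z.1 ∈ rayFree →
      0 < σ * (G z.1.1.1 z.1.1.2).im →
      closedClass (setIncl (boxNhd x w ρ R)) z (S σ hσ) = 1 := by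
    intro z σ hσ hz hGz
    let z1 : boxNhd x w ρ R := ⟨⟨(z.1.1.1, w + (σ * (R / 2) : ℝ) * Complex.I),
      hbox ⟨z.2.1, hside σ hσ⟩⟩, z.2.1, hside σ hσ⟩
    have hpos : ∀ y v, (hy : y ∈ Metric.ball x ρ) → (hv : v ∈ Metric.ball w R) →
        0 < σ * (G y v).im → (⟨(y, v), hbox ⟨hy, hv⟩⟩ : logCover) ∈ rayFree := by
      intro y v hy hv h
      refine (hmem y v hy hv).2 fun h0 => ?_
      rw [h0, mul_zero] at h
      exact h.false
    have hz1 : z1.1 ∈ rayFree := hpos _ _ z.2.1 (hside σ hσ) (hGside σ hσ _ z.2.1)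
    have e1 : closedClass (setIncl (boxNhd x w ρ R)) z z1 = 1 := by
      refine closedClass_boxNhd_eq_one hbox z z1 fun t => ?_
      have hv := ball_lineMap z.2.2 z1.2.2 t.2.1 t.2.2
      refine ⟨_, hpos z.1.1.1 _ z.2.1 hv ?_, Prod.ext ?_ rfl⟩
      · have h1 := hGside σ hσ _ z.2.1
        have e : (G z.1.1.1 (z.1.1.2 + ((t : ℝ) : ℂ) * (z1.1.1.2 - z.1.1.2))).im =
            (1 - (t : ℝ)) * (G z.1.1.1 z.1.1.2).im +
            t * (G z.1.1.1 (w + (σ * (R / 2) : ℝ) * Complex.I)).im := by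
          simp only [G, z1, Complex.sub_im, Complex.add_im, Complex.im_ofReal_mul]
          ring
        rw [e]
        have t0 := t.2.1
        have t1 := t.2.2
        rcases eq_or_lt_of_le t1 with h | h
        · rw [h]; linarith
        · have := mul_pos (sub_pos.2 h) hGz
          have := mul_nonneg t0 h1.le
          linarith
      · simp [z1]
    have e2 : closedClass (setIncl (boxNhd x w ρ R)) z1 (S σ hσ) = 1 := by
      refine closedClass_boxNhd_eq_one hbox z1 (S σ hσ) fun t => ?_
      have hy := ball_lineMap z1.2.1 (S σ hσ).2.1 t.2.1 t.2.2
      refine ⟨_, hpos _ _ hy (hside σ hσ) (hGside σ hσ _ hy), Prod.ext rfl ?_⟩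
      simp [z1, S]
    have := closedClass_setIncl_mul hz hz1 (hSA σ hσ)
    rw [← this, e1, e2, one_mul]
  have hcross : closedClass (setIncl (boxNhd x w ρ R)) (S (-1) (by simp)) (S 1 (by simp)) ∈
      crossingSubgroup := by
    have h0 := (hμ x hxx).mono hr (by linarith) (half_pos hR) (by linarith)
    rw [hμxx] at h0
    refine closedClass_boxNhd_crossing h0 hsl hwk hρ (half_lt_self hR) _ _ ?_ ?_
    · simp [S, sub_eq_add_neg]
    · simp [S]
  have hSS : ∀ σ hσ σ' hσ', closedClass (setIncl (boxNhd x w ρ R)) (S σ hσ) (S σ' hσ') ∈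
      crossingSubgroup := by
    intro σ hσ σ' hσ'
    rcases (abs_eq zero_le_one).1 hσ with rfl | rfl <;>
      rcases (abs_eq zero_le_one).1 hσ' with rfl | rfl
    · rw [closedClass_self]; exact one_mem _
    · rw [closedClass_setIncl_inv (hSA (-1) (by simp)) (hSA 1 (by simp))]
      exact inv_mem hcross
    · exact hcross
    · rw [closedClass_self]; exact one_mem _
  have hsign : ∀ a : ℝ, a ≠ 0 → ∃ σ : ℝ, |σ| = 1 ∧ 0 < σ * a := by
    intro a ha
    rcases lt_or_gt_of_ne ha with h | h
    · exact ⟨-1, by simp, by linarith⟩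
    · exact ⟨1, by simp, by linarith⟩
  refine ⟨boxNhd x w ρ R, ⟨hxx, Metric.mem_ball_self hR⟩, isOpen_boxNhd _ _ _ _, inferInstance,
    fun z z' hz hz' => ?_⟩
  obtain ⟨σ, hσ, h⟩ := hsign _ ((hmem _ _ z.2.1 z.2.2).1 hz)
  obtain ⟨σ', hσ', h'⟩ := hsign _ ((hmem _ _ z'.2.1 z'.2.2).1 hz')
  have e1 := htoS z σ hσ hz h
  have e2 := htoS z' σ' hσ' hz' h'
  have m1 := closedClass_setIncl_mul hz (hSA σ hσ) (hSA σ' hσ')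
  have m2 := closedClass_setIncl_mul hz (hSA σ' hσ') hz'
  rw [e1, mul_one] at m1
  rw [closedClass_setIncl_inv hz' (hSA σ' hσ'), e2, inv_one, one_mul,
    ← m1] at m2
  have := hSS σ hσ σ' hσ'
  rw [m2] at this
  exact this

theorem mem_rayFree_of_sin_ne_zero {x w : ℂ} (hx : (x ^ 2 + 2).im = 0 ∧ 0 ≤ (x ^ 2 + 2).re)
    (hs : Real.sin w.im ≠ 0) (hw : (x, w) ∈ logCover) :
    (⟨(x, w), hw⟩ : logCover) ∈ rayFree := by
  intro r _
  obtain ⟨s, hs0, hsx⟩ : ∃ s : ℝ, 0 ≤ s ∧ x ^ 2 + 2 = s :=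
    ⟨(x ^ 2 + 2).re, hx.2, Complex.ext rfl (by simpa using hx.1)⟩
  have hν : ((Real.sqrt s : ℝ) : ℂ) ^ 2 = x ^ 2 + 2 := by
    rw [hsx]
    exact_mod_cast Real.sq_sqrt hs0
  have key : ∀ c : ℝ, Complex.exp (w + r) ^ 2 ≠ (c : ℂ) ^ 2 := by
    intro c hc
    have h0 : (Complex.exp (w + r)).im = 0 := by
      rcases sq_eq_sq_iff_eq_or_eq_neg.1 hc with h | h <;> rw [h] <;> simp
    rw [Complex.exp_im] at h0
    simp [Real.exp_ne_zero] at h0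
    exact hs h0
  change (x, w + (r : ℂ)) ∈ logCover
  rw [mem_logCover_iff hν]
  exact ⟨by simpa using key (2 + Real.sqrt s), by simpa using key (2 - Real.sqrt s)⟩

theorem exists_isGenNhd_of_generic {z : logCover}
    (h : ¬ ((z.1.1 ^ 2 + 2).im = 0 ∧ 0 ≤ (z.1.1 ^ 2 + 2).re) ∨ Real.sin z.1.2.im ≠ 0) :
    ∃ N, z ∈ N ∧ IsGenNhd N := by
  by_cases hA : z ∈ rayFree
  · exact exists_isGenNhd_of_mem_rayFree hA
  · refine exists_isGenNhd_of_not_mem_rayFree z.2 hA fun hx => ?_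
    rcases h with h | h
    · exact h hx
    · exact hA (mem_rayFree_of_sin_ne_zero hx h z.2)

theorem dense_generic : Dense {p : ℂ × ℂ |
    ¬ ((p.1 ^ 2 + 2).im = 0 ∧ 0 ≤ (p.1 ^ 2 + 2).re) ∧ Real.sin p.2.im ≠ 0} := by
  have h0 : Dense ({0}ᶜ : Set ℝ) := dense_compl_singleton 0
  have h1 : Dense {x : ℂ | ¬ ((x ^ 2 + 2).im = 0 ∧ 0 ≤ (x ^ 2 + 2).re)} := by
    refine ((h0.preimage Complex.isOpenMap_re).inter_of_isOpen_left
      (h0.preimage Complex.isOpenMap_im)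
      (isOpen_compl_singleton.preimage Complex.continuous_re)).mono ?_
    rintro x ⟨hre, him⟩ ⟨h, -⟩
    simp [pow_two] at h
    rcases (show x.re = 0 ∨ x.im = 0 by
      by_contra! h2
      exact mul_ne_zero h2.1 h2.2 (by linarith)) with h' | h'
    · exact hre h'
    · exact him h'
  have h2 : Dense {w : ℂ | Real.sin w.im ≠ 0} := by
    have h3 : {t : ℝ | Real.sin t = 0}.Countable :=
      (Set.countable_range fun n : ℤ => n * Real.pi).mono fun t ht => Real.sin_eq_zero_iff.1 ht
    exact (h3.dense_compl ℝ).preimage Complex.isOpenMap_im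
  exact h1.prod h2

theorem exists_generic_closedClass_eq_one {x w : ℂ} {ρ R : ℝ}
    [SimplyConnectedSpace (boxNhd x w ρ R)]
    (h : Metric.ball x ρ ×ˢ Metric.ball w R ⊆ logCover) (z : boxNhd x w ρ R)
    (hz : (z : logCover) ∈ rayFree) :
    ∃ z' : boxNhd x w ρ R, (z' : logCover) ∈ rayFree ∧
      closedClass (setIncl (boxNhd x w ρ R)) z z' = 1 ∧
      ¬ ((z'.1.1.1 ^ 2 + 2).im = 0 ∧ 0 ≤ (z'.1.1.1 ^ 2 + 2).re) ∧ Real.sin z'.1.1.2.im ≠ 0 := by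
  obtain ⟨ε, hε, h1, h2⟩ := exists_ball_subset_logCover z.1
    (isOpen_rayFree.inter (isOpen_boxNhd x w ρ R)) ⟨hz, z.2⟩
  obtain ⟨p, hp, hg⟩ := dense_generic.exists_mem_open Metric.isOpen_ball
    ⟨z.1.1, Metric.mem_ball_self hε⟩
  have h3 : (⟨p, h1 hg⟩ : logCover) ∈ rayFree ∩ boxNhd x w ρ R := h2 hg
  refine ⟨⟨⟨p, h1 hg⟩, h3.2⟩, h3.1, ?_, hp⟩
  refine closedClass_boxNhd_eq_one h _ _ fun t => ?_
  have h4 := (convex_ball z.1.1 ε).add_smul_sub_mem (Metric.mem_ball_self hε) hg t.2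
  exact ⟨⟨_, h1 h4⟩, (h2 h4 : _ ∈ rayFree ∩ boxNhd x w ρ R).1, by
    refine Prod.ext ?_ ?_ <;> simp⟩

theorem exists_isGenNhd (z : logCover) : ∃ N, z ∈ N ∧ IsGenNhd N := by
  obtain ⟨ε, hε, hball, -⟩ := exists_ball_subset_logCover z isOpen_univ trivial
  have hbox : Metric.ball z.1.1 ε ×ˢ Metric.ball z.1.2 ε ⊆ logCover := by
    rw [ball_prod_same]
    exact hball
  have _ := simplyConnectedSpace_boxNhd hε hε hbox
  refine ⟨boxNhd z.1.1 z.1.2 ε ε, ⟨Metric.mem_ball_self hε, Metric.mem_ball_self hε⟩,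
    isOpen_boxNhd _ _ _ _, inferInstance, fun a b ha hb => ?_⟩
  obtain ⟨a', ha', hac, hag, has⟩ := exists_generic_closedClass_eq_one hbox a ha
  obtain ⟨b', hb', hbc, hbg, -⟩ := exists_generic_closedClass_eq_one hbox b hb
  have hm : ∀ t : unitInterval,
      (a'.1.1.1 + ((min (2 * (t : ℝ)) 1 : ℝ) : ℂ) * (b'.1.1.1 - a'.1.1.1),
        a'.1.1.2 + ((max (2 * (t : ℝ) - 1) 0 : ℝ) : ℂ) * (b'.1.1.2 - a'.1.1.2)) ∈
      Metric.ball z.1.1 ε ×ˢ Metric.ball z.1.2 ε := fun t => by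
    have t0 := t.2.1
    have t1 := t.2.2
    exact ⟨ball_lineMap a'.2.1 b'.2.1 (by positivity) (min_le_right _ _),
      ball_lineMap a'.2.2 b'.2.2 (le_max_right _ _) (max_le (by linarith) zero_le_one)⟩
  let g : C(unitInterval, boxNhd z.1.1 z.1.2 ε ε) :=
    ⟨fun t => ⟨⟨_, hbox (hm t)⟩, hm t⟩, by fun_prop⟩
  have g0 : g 0 = a' := by
    refine Subtype.ext (Subtype.ext (Prod.ext ?_ ?_)) <;> simp [g]
  have g1 : g 1 = b' := by
    refine Subtype.ext (Subtype.ext (Prod.ext ?_ ?_)) <;> norm_num [g]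
  have key : closedClass ((setIncl (boxNhd z.1.1 z.1.2 ε ε)).comp g) 0 1 ∈ crossingSubgroup := by
    refine basedClass_mem_of_isGoodNhd exists_isOpen_simplyConnectedSpace_subset dense_rayFree _
      (fun t => ?_) ?_ ?_
    · apply exists_isGenNhd_of_generic
      rcases le_total (2 * (t : ℝ)) 1 with h | h
      · right
        have : ((setIncl (boxNhd z.1.1 z.1.2 ε ε)).comp g t).1.2 = a'.1.1.2 := by
          change a'.1.1.2 + ((max (2 * (t : ℝ) - 1) 0 : ℝ) : ℂ) * (b'.1.1.2 - a'.1.1.2) = _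
          rw [max_eq_right (by linarith)]
          simp
        rwa [this]
      · left
        have : ((setIncl (boxNhd z.1.1 z.1.2 ε ε)).comp g t).1.1 = b'.1.1.1 := by
          change a'.1.1.1 + ((min (2 * (t : ℝ)) 1 : ℝ) : ℂ) * (b'.1.1.1 - a'.1.1.1) = _
          rw [min_eq_right h]
          simp
        rwa [this]
    · change (g 0 : logCover) ∈ rayFree
      rwa [g0]
    · change (g 1 : logCover) ∈ rayFree
      rwa [g1]
  have e : closedClass ((setIncl (boxNhd z.1.1 z.1.2 ε ε)).comp g) 0 1 =
      closedClass (setIncl (boxNhd z.1.1 z.1.2 ε ε)) (g 0) (g 1) := closedClass_comp _ g 0 1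
  rw [e, g0, g1] at key
  have m1 := closedClass_setIncl_mul ha ha' hb'
  have m2 := closedClass_setIncl_mul ha hb' hb
  rw [hac, mul_one] at m1
  rw [closedClass_setIncl_inv hb hb', hbc, inv_one, one_mul, ← m1] at m2
  rw [m2] at key
  exact key

theorem closedClass_mem (p : C(unitInterval, logCover)) (h₀ : p 0 ∈ rayFree) (h₁ : p 1 ∈ rayFree) :
    closedClass p 0 1 ∈ crossingSubgroup :=
  basedClass_mem_of_isGoodNhd exists_isOpen_simplyConnectedSpace_subset dense_rayFree p
    (fun t => exists_isGenNhd (p t)) h₀ h₁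

theorem exists_lift (γ : C(unitInterval, affineComplement)) (z : logCover)
    (h : logCoverMap z = γ 0) :
    ∃ p : C(unitInterval, logCover), (∀ t, logCoverMap (p t) = γ t) ∧ p 0 = z := by
  have h2 : (γ 0).1.2 = Complex.exp z.1.2 ^ 2 := by rw [← h]; rfl
  obtain ⟨Γ, hΓ, hΓ0⟩ := Complex.isCoveringMap_exp.exists_path_lifts
    (⟨fun t => ⟨(γ t).1.2, (γ t).2.1⟩, by fun_prop⟩ : C(unitInterval, {w : ℂ // w ≠ 0}))
    (2 * z.1.2) (Subtype.ext (by
      rw [ContinuousMap.coe_mk]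
      exact h2.trans (by rw [← Complex.exp_nat_mul]; rfl)))
  have hΓ' : ∀ t, Complex.exp (Γ t / 2) ^ 2 = (γ t).1.2 := by
    intro t
    rw [← Complex.exp_nat_mul, Nat.cast_ofNat, mul_div_cancel₀ _ two_ne_zero]
    exact congrArg Subtype.val (congrFun hΓ t)
  have hmem : ∀ t, ((γ t).1.1, Γ t / 2) ∈ logCover := fun t => by
    rw [mem_logCover, hΓ']
    exact (γ t).2.2
  refine ⟨⟨fun t => ⟨_, hmem t⟩, by fun_prop⟩, fun t => ?_, ?_⟩
  · exact Subtype.ext (Prod.ext rfl (hΓ' t))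
  · refine Subtype.ext (Prod.ext ?_ ?_)
    · change (γ 0).1.1 = z.1.1
      rw [← h]; rfl
    · change Γ 0 / 2 = z.1.2
      rw [hΓ0, mul_div_cancel_left₀ _ two_ne_zero]

theorem exists_intShift_eq {z : logCover} (h : logCoverMap z = logCoverMap coverBase) :
    ∃ k : ℤ, z = intShift k coverBase := by
  have h1 : z.1.1 = coverBase.1.1.1 := congrArg (fun p : affineComplement => p.1.1) h
  have h2 : Complex.exp z.1.2 ^ 2 = Complex.exp coverBase.1.1.2 ^ 2 :=
    congrArg (fun p : affineComplement => p.1.2) h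
  rw [← Complex.exp_nat_mul, ← Complex.exp_nat_mul, Complex.exp_eq_exp_iff_exists_int] at h2
  obtain ⟨k, hk⟩ := h2
  refine ⟨k, Subtype.ext (Prod.ext h1 ?_)⟩
  change z.1.2 = coverBase.1.1.2 + k * (Real.pi * Complex.I)
  push_cast at hk
  linear_combination hk / 2

theorem crossingSubgroup_eq_top : crossingSubgroup = ⊤ := by
  rw [eq_top_iff]
  rintro g -
  obtain ⟨γ, rfl⟩ := Quotient.exists_rep g
  obtain ⟨p, hp, hp0⟩ := exists_lift γ.toContinuousMap coverBase (by simp)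
  have h1 : logCoverMap (p 1) = logCoverMap coverBase := by rw [hp]; simp
  obtain ⟨k, hk⟩ := exists_intShift_eq h1
  have hA : p 1 ∈ rayFree := hk ▸ intShift_mem_rayFree coverBase.2
  have key := mk_eq_legLoop_mul logCoverMap rayFree coverBase p γ hp hp0 hA
  refine (congrArg (· ∈ crossingSubgroup) key).mpr ?_
  refine mul_mem ?_ (closedClass_mem p (hp0 ▸ coverBase.2) hA)
  have : legLoop logCoverMap rayFree coverBase (p 1) hA h1 = shiftLoop ^ k := by
    rw [← legLoop_intShift k (intShift_mem_rayFree coverBase.2) (logCoverMap_intShift _ _)]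
    congr 1
  rw [this]
  exact zpow_mem shiftLoop_mem k

instance : PathConnectedSpace logCover := by
  have hA : ∀ z z' : logCover, z ∈ rayFree → z' ∈ rayFree → Joined z z' := by
    intro z z' hz hz'
    have := (PathConnectedSpace.joined (⟨z, hz⟩ : rayFree) ⟨z', hz'⟩).map continuous_subtype_val
    exact this
  have h : ∀ z : logCover, ∃ z' ∈ rayFree, Joined z z' := by
    intro z
    obtain ⟨M, hM, hzM, -, hs⟩ := exists_isOpen_simplyConnectedSpace_subset z _ isOpen_univ trivial
    obtain ⟨z', hz', hz'M⟩ := dense_rayFree.exists_mem_open hM ⟨z, hzM⟩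
    exact ⟨z', hz', (PathConnectedSpace.joined (⟨z, hzM⟩ : M) ⟨z', hz'M⟩).map
      continuous_subtype_val⟩
  refine ⟨⟨coverBase⟩, fun z z' => ?_⟩
  obtain ⟨a, ha, hza⟩ := h z
  obtain ⟨b, hb, hzb⟩ := h z'
  exact hza.trans ((hA a b ha hb).trans hzb.symm)

theorem surjective_logCoverMap : Function.Surjective logCoverMap := by
  rintro ⟨⟨x, y⟩, hy, h⟩
  have e : Complex.exp (Complex.log y / 2) ^ 2 = y := by
    rw [← Complex.exp_nat_mul, Nat.cast_ofNat, mul_div_cancel₀ _ two_ne_zero, Complex.exp_log hy]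
  refine ⟨⟨(x, Complex.log y / 2), ?_⟩, Subtype.ext (Prod.ext rfl e)⟩
  rw [mem_logCover, e]
  exact h

instance : PathConnectedSpace affineComplement :=
  surjective_logCoverMap.pathConnectedSpace logCoverMap.continuous

/-- Coordinates `(s, ω)` near the point of tangency, with `x ^ 2 = 2 + s + exp ω ^ 2`. -/
def tangencyDomain : Set (ℂ × ℂ) :=
  {p | ‖p.1‖ < 1 ∧ p.2.re < 0 ∧ p.1 ^ 2 ≠ 16 * Complex.exp p.2 ^ 2}

theorem two_add_mem_slitPlane_of_norm_lt {s w : ℂ} (hs : ‖s‖ < 1) (hw : w.re < 0) :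
    2 + s + Complex.exp w ^ 2 ∈ Complex.slitPlane := by
  rw [Complex.mem_slitPlane_iff]
  left
  have h1 := (abs_le.1 (Complex.abs_re_le_norm s)).1
  have h2 := (abs_le.1 (Complex.abs_re_le_norm (Complex.exp w ^ 2))).1
  have h3 : ‖Complex.exp w ^ 2‖ < 1 := by
    rw [norm_pow, Complex.norm_exp]
    exact pow_lt_one₀ (Real.exp_pos _).le (Real.exp_lt_one_iff.2 hw) two_ne_zero
  simp only [Complex.add_re, Complex.re_ofNat]
  linarith

theorem exp_log_div_two_sq {z : ℂ} (h : z ≠ 0) : Complex.exp (Complex.log z / 2) ^ 2 = z := by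
  rw [← Complex.exp_nat_mul, Nat.cast_ofNat, mul_div_cancel₀ _ two_ne_zero, Complex.exp_log h]

/-- The branch of `(s, ω) ↦ (x, ω)` with negative real part of `x`. -/
noncomputable def tangencyMap : C(tangencyDomain, logCover) where
  toFun p := ⟨(-Complex.exp (Complex.log (2 + p.1.1 + Complex.exp p.1.2 ^ 2) / 2), p.1.2), by
    rw [mem_logCover, neg_sq, exp_log_div_two_sq (Complex.slitPlane_ne_zero
      (two_add_mem_slitPlane_of_norm_lt p.2.1 p.2.2.1))]
    convert p.2.2.2 using 2
    ring⟩
  continuous_toFun := by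
    have h : Continuous fun p : tangencyDomain =>
        Complex.log (2 + p.1.1 + Complex.exp p.1.2 ^ 2) :=
      Continuous.clog (by fun_prop) fun p => two_add_mem_slitPlane_of_norm_lt p.2.1 p.2.2.1
    fun_prop

theorem norm_exp_ofReal_mul_I_mul (t : ℝ) (s : ℂ) : ‖Complex.exp (t * Complex.I) * s‖ = ‖s‖ := by
  rw [norm_mul, Complex.norm_exp_ofReal_mul_I, one_mul]

/-- The rotation of `tangencyDomain` by the angle `2 π t`. -/
noncomputable def tangencyRotation : C(unitInterval × tangencyDomain, tangencyDomain) where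
  toFun q := ⟨(Complex.exp ((2 * Real.pi * (q.1 : ℝ) : ℝ) * Complex.I) * q.2.1.1,
      q.2.1.2 + (2 * Real.pi * (q.1 : ℝ) : ℝ) * Complex.I), by
    refine ⟨?_, ?_, ?_⟩
    · rw [norm_exp_ofReal_mul_I_mul]
      exact q.2.2.1
    · rw [Complex.add_re, Complex.re_ofReal_mul, Complex.I_re, mul_zero, add_zero]
      exact q.2.2.2.1
    · intro h
      apply q.2.2.2.2
      rw [Complex.exp_add] at h
      refine mul_left_cancel₀ (pow_ne_zero 2 (Complex.exp_ne_zero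
        ((2 * Real.pi * (q.1 : ℝ) : ℝ) * Complex.I))) ?_
      linear_combination h⟩
  continuous_toFun := by fun_prop

theorem tangencyRotation_zero (p : tangencyDomain) : tangencyRotation (0, p) = p := by
  refine Subtype.ext (Prod.ext ?_ ?_) <;> simp [tangencyRotation]

theorem tangencyMap_rotation_one (p : tangencyDomain) :
    tangencyMap (tangencyRotation (1, p)) = intShift 2 (tangencyMap p) := by
  have h1 : Complex.exp ((2 * Real.pi * ((1 : unitInterval) : ℝ) : ℝ) * Complex.I) = 1 := by
    simp [Complex.exp_two_pi_mul_I]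
  refine Subtype.ext (Prod.ext ?_ ?_)
  · change -Complex.exp (Complex.log (2 + Complex.exp _ * p.1.1 +
      Complex.exp (p.1.2 + _ * Complex.I) ^ 2) / 2) =
      -Complex.exp (Complex.log (2 + p.1.1 + Complex.exp p.1.2 ^ 2) / 2)
    rw [Complex.exp_add, h1, one_mul, mul_one]
  · change p.1.2 + (2 * Real.pi * ((1 : unitInterval) : ℝ) : ℝ) * Complex.I =
      p.1.2 + ((2 : ℤ) : ℂ) * (Real.pi * Complex.I)
    simp
    ring

/-- The class of the full rotation of a point of `tangencyDomain`. -/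
noncomputable def rotationClass (p : tangencyDomain) :
    FundamentalGroup affineComplement (logCoverMap coverBase) :=
  shiftLoop ^ (2 : ℤ) *
    closedClass ⟨fun t => tangencyMap (tangencyRotation (t, p)), by fun_prop⟩ 0 1

theorem closedClass_mul_rotationClass (P : C(unitInterval, tangencyDomain))
    (h₀ : tangencyMap (P 0) ∈ rayFree) (h₁ : tangencyMap (P 1) ∈ rayFree) :
    closedClass (tangencyMap.comp P) 0 1 * rotationClass (P 0) =
      rotationClass (P 1) * closedClass (tangencyMap.comp P) 0 1 := by
  let g : C(unitInterval × unitInterval, logCover) :=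
    ⟨fun q => tangencyMap (tangencyRotation (q.1, P q.2)), by fun_prop⟩
  have r0 : ∀ s, g (0, s) = tangencyMap (P s) := fun s =>
    congrArg tangencyMap (tangencyRotation_zero _)
  have r1 : ∀ s, g (1, s) = intShift 2 (tangencyMap (P s)) := fun s =>
    tangencyMap_rotation_one _
  have a00 : g (0, 0) ∈ rayFree := by rwa [r0]
  have a01 : g (0, 1) ∈ rayFree := by rwa [r0]
  have a10 : g (1, 0) ∈ rayFree := by rw [r1]; exact intShift_mem_rayFree h₀
  have a11 : g (1, 1) ∈ rayFree := by rw [r1]; exact intShift_mem_rayFree h₁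
  have e1 : closedClass (tangencyMap.comp P) 0 1 = closedClass g (0, 0) (0, 1) := by
    refine Eq.trans ?_ (closedClass_comp g (ContinuousMap.mk
      (fun s : unitInterval => ((0 : unitInterval), s)) (by fun_prop)) 0 1)
    congr 1
    exact ContinuousMap.ext fun s => (r0 s).symm
  have e2 : closedClass ((intShift 2).comp (tangencyMap.comp P)) 0 1 =
      closedClass g (1, 0) (1, 1) := by
    refine Eq.trans ?_ (closedClass_comp g (ContinuousMap.mk
      (fun s : unitInterval => ((1 : unitInterval), s)) (by fun_prop)) 0 1)
    congr 1
    exact ContinuousMap.ext fun s => (r1 s).symm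
  have e3 : ∀ s, rotationClass (P s) = shiftLoop ^ (2 : ℤ) * closedClass g (0, s) (1, s) :=
    fun s => congrArg (shiftLoop ^ (2 : ℤ) * ·) (closedClass_comp g (ContinuousMap.mk
      (fun t : unitInterval => (t, s)) (by fun_prop)) 0 1)
  rw [closedClass_intShift (tangencyMap.comp P) h₀ h₁, e1] at e2
  have m1 := closedClass_mul g a00 a10 a11
  have m2 := closedClass_mul g a00 a01 a11
  rw [← m2, ← e2] at m1
  rw [e1, e3, e3, mul_assoc (shiftLoop ^ (2 : ℤ)), ← m1]
  group

theorem rotationClass_eq_of_forall_mem (P : C(unitInterval, tangencyDomain))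
    (h : ∀ t, tangencyMap (P t) ∈ rayFree) : rotationClass (P 0) = rotationClass (P 1) := by
  have h1 := closedClass_mul_rotationClass P (h 0) (h 1)
  have h2 : closedClass (tangencyMap.comp P) 0 1 = 1 :=
    basedClass_of_forall_mem logCoverMap rayFree coverBase _ _ _ h
  rwa [h2, one_mul, mul_one] at h1

/-- The value of `2 - x ^ 2` at the nearby point where the crossing is moved. -/
noncomputable def nearOffset : ℂ := (1 / 100) ^ 2 + 4 * (1 / 100) * Complex.I

theorem norm_nearOffset : ‖nearOffset‖ < 1 / 20 := by
  refine (norm_add_le _ _).trans_lt ?_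
  norm_num [Complex.norm_I]

theorem norm_exp_sq_le {w : ℂ} (hw : w.re ≤ Real.log (1 / 2)) : ‖Complex.exp w ^ 2‖ ≤ 1 / 4 := by
  rw [norm_pow, Complex.norm_exp]
  have h := Real.exp_le_exp.2 hw
  rw [Real.exp_log (by norm_num)] at h
  nlinarith [Real.exp_pos w.re]

theorem log_half_neg : Real.log (1 / 2) < 0 := Real.log_neg (by norm_num) (by norm_num)

/-- The point of `tangencyDomain` with prescribed `x ^ 2 = 2 - κ * nearOffset` and `ω`. -/
def IsNearPoint (κ : ℝ) (w : ℂ) : Prop :=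
  κ ∈ Set.Icc (0 : ℝ) 1 ∧ w.re ≤ Real.log (1 / 2) ∧
    (-κ * nearOffset - Complex.exp w ^ 2) ^ 2 ≠ 16 * Complex.exp w ^ 2

theorem IsNearPoint.mem {κ : ℝ} {w : ℂ} (h : IsNearPoint κ w) :
    (-κ * nearOffset - Complex.exp w ^ 2, w) ∈ tangencyDomain := by
  refine ⟨?_, h.2.1.trans_lt log_half_neg, h.2.2⟩
  refine (norm_sub_le _ _).trans_lt ?_
  have h1 := norm_exp_sq_le h.2.1
  have h2 := norm_nearOffset
  rw [norm_mul, norm_neg, Complex.norm_real, Real.norm_of_nonneg h.1.1]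
  have h3 : κ * ‖nearOffset‖ ≤ 1 * (1 / 20) :=
    mul_le_mul h.1.2 h2.le (norm_nonneg _) zero_le_one
  linarith

/-- The coordinate `x` close to `-√2` with `x ^ 2 = 2 - κ * nearOffset`. -/
noncomputable def nearX (κ : ℝ) : ℂ := -Complex.exp (Complex.log (2 - κ * nearOffset) / 2)

theorem nearX_sq {κ : ℝ} (h0 : 0 ≤ κ) (h1 : κ ≤ 1) : nearX κ ^ 2 = 2 - κ * nearOffset := by
  rw [nearX, neg_sq, exp_log_div_two_sq]
  intro h
  have h3 : ‖(2 : ℂ)‖ = ‖κ * nearOffset‖ := congrArg norm (sub_eq_zero.1 h)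
  rw [norm_mul, Complex.norm_real, Real.norm_of_nonneg h0] at h3
  have h2 := norm_nearOffset
  have h4 : κ * ‖nearOffset‖ ≤ 1 * (1 / 20) := mul_le_mul h1 h2.le (norm_nonneg _) zero_le_one
  norm_num at h3
  linarith

theorem IsNearPoint.tangencyMap_coe {κ : ℝ} {w : ℂ} (h : IsNearPoint κ w) :
    (tangencyMap ⟨_, h.mem⟩).1 = (nearX κ, w) := by
  refine Prod.ext ?_ rfl
  change -Complex.exp (Complex.log (2 + (-κ * nearOffset - Complex.exp w ^ 2) +
    Complex.exp w ^ 2) / 2) = -Complex.exp (Complex.log (2 - κ * nearOffset) / 2)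
  ring_nf

theorem isNearPoint_of_mem_logCover {κ : ℝ} {w : ℂ} (h0 : 0 ≤ κ) (h1 : κ ≤ 1)
    (hw : w.re ≤ Real.log (1 / 2)) (h : (nearX κ, w) ∈ logCover) : IsNearPoint κ w := by
  refine ⟨⟨h0, h1⟩, hw, ?_⟩
  rw [mem_logCover, nearX_sq h0 h1] at h
  convert h using 2
  ring

theorem mem_rayFree_of_sin_ge {x w : ℂ} (hx : ‖x ^ 2 - 2‖ < 1 / 8)
    (hw : Real.log (1 / 2) ≤ w.re) (hs : 1 / 2 ≤ Real.sin w.im) :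
    ∃ h : (x, w) ∈ logCover, (⟨(x, w), h⟩ : logCover) ∈ rayFree := by
  have key : ∀ r : ℝ, 0 ≤ r → (x, w + r) ∈ logCover := by
    intro r hr
    rw [mem_logCover]
    intro h
    set e := Complex.exp (w + r) with he
    have h1 : 1 / 2 ≤ ‖e‖ := by
      rw [he, Complex.norm_exp]
      have := Real.exp_le_exp.2 (show Real.log (1 / 2) ≤ (w + r).re by
        rw [Complex.add_re, Complex.ofReal_re]; linarith)
      rwa [Real.exp_log (by norm_num)] at this
    have h2 : 1 / 4 ≤ |e.im| := by
      have h3 : e.im = ‖e‖ * Real.sin w.im := by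
        rw [he, Complex.exp_im, Complex.norm_exp]
        simp
      rw [h3, abs_mul, abs_of_nonneg (norm_nonneg _), abs_of_nonneg (by linarith)]
      nlinarith
    have h3 : ∀ c : ℝ, 1 / 4 ≤ ‖e + c‖ := fun c => by
      refine h2.trans ((le_of_eq ?_).trans (Complex.abs_im_le_norm _))
      simp
    have h4 : ∀ c : ℝ, x ^ 2 - 2 ≠ e * (e + c) := by
      intro c hc
      have := congrArg norm hc
      rw [norm_mul] at this
      have := h3 c
      nlinarith
    have h5 : (x ^ 2 - 2 - e * (e + (4 : ℝ))) * (x ^ 2 - 2 - e * (e + (-4 : ℝ))) = 0 := by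
      push_cast
      linear_combination h
    rcases mul_eq_zero.1 h5 with h6 | h6
    · exact h4 _ (sub_eq_zero.1 h6)
    · exact h4 _ (sub_eq_zero.1 h6)
  exact ⟨by simpa using key 0 le_rfl, key⟩

theorem isCrossing_near : IsCrossing (nearX 1) (-2 + 1 / 100 * Complex.I) (Real.log 2)
    (Real.pi / 4) := by
  have hp := Real.pi_pos
  refine ⟨?_, ?_, Real.log_pos one_lt_two, by positivity, by linarith, fun u v _ hv h => ?_⟩
  · rw [nearX_sq zero_le_one le_rfl, nearOffset]
    push_cast
    linear_combination (1 / 10000 : ℂ) * Complex.I_sq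
  · rw [Complex.mem_slitPlane_iff]
    right
    simp
  · rw [← Complex.exp_nat_mul] at h
    have hre := congrArg Complex.re h
    have e1 : (2 + (-2 + 1 / 100 * Complex.I)) ^ 2 = ((-(1 / 100) ^ 2 : ℝ) : ℂ) := by
      push_cast
      linear_combination (1 / 10000 : ℂ) * Complex.I_sq
    have e2 : (2 - (-2 + 1 / 100 * Complex.I)) ^ 2 =
        ((16 - (1 / 100) ^ 2 : ℝ) : ℂ) - (8 / 100 : ℝ) * Complex.I := by
      push_cast
      linear_combination (1 / 10000 : ℂ) * Complex.I_sq
    rw [e1, e2, mul_comm, Complex.re_ofReal_mul, Complex.exp_re] at hre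
    have him : (((2 : ℕ) : ℂ) * (u + v * Complex.I)).im = 2 * v := by simp
    rw [him] at hre
    have hv' := abs_le.1 hv
    have hc : 0 ≤ Real.cos (2 * v) :=
      Real.cos_nonneg_of_mem_Icc ⟨by linarith, by linarith⟩
    have h2 := mul_nonneg (Real.exp_pos (((2 : ℕ) : ℂ) * (u + v * Complex.I)).re).le hc
    rw [Complex.sub_re, Complex.ofReal_re, Complex.re_ofReal_mul, Complex.I_re] at hre
    generalize Real.exp _ * Real.cos _ = c at hre h2
    norm_num at hre
    linarith

theorem log_near : Complex.log (2 + (-2 + 1 / 100 * Complex.I)) =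
    Real.log (1 / 100) + (Real.pi / 2 : ℝ) * Complex.I := by
  have e : (2 + (-2 + 1 / 100 * Complex.I)) = ((1 / 100 : ℝ) : ℂ) * Complex.I := by
    push_cast; ring
  rw [e, Complex.log_ofReal_mul (by norm_num) Complex.I_ne_zero, Complex.log_I]
  push_cast
  rfl

/-- The vertical displacement `ω` above or below the imaginary direction. -/
noncomputable def nearW (p θ : ℝ) : ℂ := p + (Real.pi / 2 + θ : ℝ) * Complex.I

theorem nearW_re (p θ : ℝ) : (nearW p θ).re = p := by simp [nearW]

theorem nearW_im (p θ : ℝ) : (nearW p θ).im = Real.pi / 2 + θ := by simp [nearW]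

theorem nearW_mem_logCover {p θ : ℝ} (hp : Real.log (1 / 200) ≤ p) (hθ : |θ| ≤ Real.pi / 4)
    (h : p < Real.log (1 / 100) ∨ θ ≠ 0) : (nearX 1, nearW p θ) ∈ logCover := by
  have h2 : Real.log (1 / 200) = Real.log (1 / 100) - Real.log 2 := by
    rw [← Real.log_div (by norm_num) (by norm_num)]; norm_num
  have := isCrossing_near.mem_logCover (u := p - Real.log (1 / 100)) (v := θ) (by linarith) hθ
    (by rcases h with h | h
        · left; linarith
        · exact Or.inr h)
  rw [log_near] at this
  convert this using 2
  rw [nearW]; push_cast; ring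

theorem nearW_mem_rayFree {p θ : ℝ} (hp : Real.log (1 / 200) ≤ p) (hθ : |θ| ≤ Real.pi / 4)
    (h : θ ≠ 0) :
    (⟨_, nearW_mem_logCover hp hθ (Or.inr h)⟩ : logCover) ∈ rayFree := by
  intro r hr
  have := nearW_mem_logCover (p := p + r) (by linarith) hθ (Or.inr h)
  convert this using 2
  simp only [nearW]; push_cast; ring

theorem log_lt_log_half : Real.log (1 / 200) ≤ Real.log (1 / 2) :=
  Real.log_le_log (by norm_num) (by norm_num)

theorem nearPoint_of_abs_le {κ θ : ℝ} (h0 : 0 ≤ κ) (h1 : κ ≤ 1) (hθ : |θ| ≤ Real.pi / 4) :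
    ∃ h : (nearX κ, nearW (Real.log (1 / 2)) θ) ∈ logCover, (⟨_, h⟩ : logCover) ∈ rayFree := by
  refine mem_rayFree_of_sin_ge ?_ (nearW_re _ _).ge ?_
  · rw [nearX_sq h0 h1, sub_sub_cancel_left, norm_neg, norm_mul, Complex.norm_real,
      Real.norm_of_nonneg h0]
    have := mul_le_mul h1 norm_nearOffset.le (norm_nonneg _) zero_le_one
    linarith
  · rw [nearW_im, add_comm, Real.sin_add_pi_div_two, ← Real.cos_abs]
    have h2 : Real.cos (Real.pi / 3) ≤ Real.cos |θ| :=
      Real.cos_le_cos_of_nonneg_of_le_pi (abs_nonneg _) (by linarith [Real.pi_pos])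
        (by linarith [Real.pi_pos])
    rwa [Real.cos_pi_div_three] at h2

theorem mem_rayFree_of_coe_eq {z : logCover} {x w : ℂ} (h : z.1 = (x, w))
    (hm : ∃ h : (x, w) ∈ logCover, (⟨_, h⟩ : logCover) ∈ rayFree) : z ∈ rayFree := by
  obtain ⟨h1, h2⟩ := hm
  rwa [show z = ⟨_, h1⟩ from Subtype.ext h]

/-- The path in `tangencyDomain` through the points with prescribed `x` and `ω`. -/
noncomputable def nearPath (κ p θ : C(unitInterval, ℝ))
    (h : ∀ t, IsNearPoint (κ t) (nearW (p t) (θ t))) : C(unitInterval, tangencyDomain) where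
  toFun t := ⟨_, (h t).mem⟩
  continuous_toFun := by unfold nearW; fun_prop

theorem nearPath_apply_eq {κ p θ κ' p' θ' : C(unitInterval, ℝ)}
    {h : ∀ t, IsNearPoint (κ t) (nearW (p t) (θ t))}
    {h' : ∀ t, IsNearPoint (κ' t) (nearW (p' t) (θ' t))} {t t' : unitInterval}
    (hκ : κ t = κ' t') (hp : p t = p' t') (hθ : θ t = θ' t') :
    nearPath κ p θ h t = nearPath κ' p' θ' h' t' := by
  refine Subtype.ext ?_
  simp only [nearPath, ContinuousMap.coe_mk, hκ, hp, hθ]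

theorem tangencyMap_nearPath_coe {κ p θ : C(unitInterval, ℝ)}
    (h : ∀ t, IsNearPoint (κ t) (nearW (p t) (θ t))) (t : unitInterval) :
    (tangencyMap (nearPath κ p θ h t)).1 = (nearX (κ t), nearW (p t) (θ t)) :=
  (h t).tangencyMap_coe

theorem isNearPoint_half {κ θ : ℝ} (h0 : 0 ≤ κ) (h1 : κ ≤ 1) (hθ : |θ| ≤ Real.pi / 4) :
    IsNearPoint κ (nearW (Real.log (1 / 2)) θ) :=
  isNearPoint_of_mem_logCover h0 h1 (nearW_re _ _).le (nearPoint_of_abs_le h0 h1 hθ).1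

theorem isNearPoint_one {p θ : ℝ} (hp : Real.log (1 / 200) ≤ p) (hp' : p ≤ Real.log (1 / 2))
    (hθ : |θ| ≤ Real.pi / 4) (h : p < Real.log (1 / 100) ∨ θ ≠ 0) : IsNearPoint 1 (nearW p θ) :=
  isNearPoint_of_mem_logCover zero_le_one le_rfl ((nearW_re _ _).trans_le hp')
    (nearW_mem_logCover hp hθ h)

/-- The point of `tangencyDomain` at which the relation is read off. -/
noncomputable def tangencyPoint : tangencyDomain :=
  ⟨_, (isNearPoint_half (κ := 0) (θ := 0) le_rfl zero_le_one (by
    rw [abs_zero]; positivity)).mem⟩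

theorem abs_mul_le_of_mem {t : unitInterval} {a : ℝ} : |(t : ℝ) * a| ≤ |a| := by
  rw [abs_mul, abs_of_nonneg t.2.1]
  exact mul_le_of_le_one_left (abs_nonneg _) t.2.2

theorem log_sub_eq : Real.log (1 / 200) = Real.log (1 / 2) + Real.log (1 / 100) := by
  rw [← Real.log_mul (by norm_num) (by norm_num)]; norm_num

theorem rotationClass_tangencyPoint {θ : ℝ} (hθ : |θ| = Real.pi / 4)
    (h : IsNearPoint 1 (nearW (Real.log (1 / 200)) θ)) :
    rotationClass tangencyPoint = rotationClass ⟨_, h.mem⟩ := by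
  have hθ0 : θ ≠ 0 := by
    intro h0
    rw [h0, abs_zero] at hθ
    linarith [Real.pi_pos]
  have hp : ∀ t : unitInterval, Real.log (1 / 200) ≤
      Real.log (1 / 2) + (t : ℝ) * Real.log (1 / 100) ∧
      Real.log (1 / 2) + (t : ℝ) * Real.log (1 / 100) ≤ Real.log (1 / 2) := fun t => by
    rw [log_sub_eq]
    have := Real.log_neg (x := 1 / 100) (by norm_num) (by norm_num)
    constructor <;> nlinarith [t.2.1, t.2.2]
  have k1 : ∀ t : unitInterval, IsNearPoint (t : ℝ) (nearW (Real.log (1 / 2)) ((t : ℝ) * θ)) :=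
    fun t => isNearPoint_half t.2.1 t.2.2 (abs_mul_le_of_mem.trans hθ.le)
  have k2 : ∀ t : unitInterval, IsNearPoint 1
      (nearW (Real.log (1 / 2) + (t : ℝ) * Real.log (1 / 100)) θ) :=
    fun t => isNearPoint_one (hp t).1 (hp t).2 hθ.le (Or.inr hθ0)
  have e1 := rotationClass_eq_of_forall_mem
    (nearPath ⟨fun t => (t : ℝ), by fun_prop⟩ ⟨fun _ => Real.log (1 / 2), by fun_prop⟩
      ⟨fun t => (t : ℝ) * θ, by fun_prop⟩ k1)
    fun t => mem_rayFree_of_coe_eq (tangencyMap_nearPath_coe _ t)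
      (nearPoint_of_abs_le t.2.1 t.2.2 (abs_mul_le_of_mem.trans hθ.le))
  have e2 := rotationClass_eq_of_forall_mem
    (nearPath ⟨fun _ => (1 : ℝ), by fun_prop⟩
      ⟨fun t => Real.log (1 / 2) + (t : ℝ) * Real.log (1 / 100), by fun_prop⟩
      ⟨fun t => θ, by fun_prop⟩ k2)
    fun t => mem_rayFree_of_coe_eq (tangencyMap_nearPath_coe _ t)
      ⟨_, nearW_mem_rayFree (hp t).1 hθ.le hθ0⟩
  have a1 : tangencyPoint = nearPath ⟨fun t => (t : ℝ), by fun_prop⟩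
      ⟨fun _ => Real.log (1 / 2), by fun_prop⟩ ⟨fun t => (t : ℝ) * θ, by fun_prop⟩ k1 0 := by
    refine Subtype.ext ?_
    simp [nearPath, tangencyPoint]
  have a2 : nearPath ⟨fun t => (t : ℝ), by fun_prop⟩
      ⟨fun _ => Real.log (1 / 2), by fun_prop⟩ ⟨fun t => (t : ℝ) * θ, by fun_prop⟩ k1 1 =
      nearPath ⟨fun _ => (1 : ℝ), by fun_prop⟩
      ⟨fun t => Real.log (1 / 2) + (t : ℝ) * Real.log (1 / 100), by fun_prop⟩
      ⟨fun t => θ, by fun_prop⟩ k2 0 :=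
    nearPath_apply_eq (by simp) (by simp) (by simp)
  have a3 : nearPath ⟨fun _ => (1 : ℝ), by fun_prop⟩
      ⟨fun t => Real.log (1 / 2) + (t : ℝ) * Real.log (1 / 100), by fun_prop⟩
      ⟨fun t => θ, by fun_prop⟩ k2 1 = ⟨_, h.mem⟩ := by
    refine Subtype.ext ?_
    simp only [nearPath, ContinuousMap.coe_mk, Set.Icc.coe_one, one_mul, ← log_sub_eq]
  rw [a1, e1, a2, e2, a3]

theorem commute_crossingClass_rotationClass :
    Commute crossingClass (rotationClass tangencyPoint) := by
  have hpi := Real.pi_pos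
  have hlt : Real.log (1 / 200) < Real.log (1 / 100) :=
    Real.log_lt_log (by norm_num) (by norm_num)
  have k : ∀ t : unitInterval, IsNearPoint 1
      (nearW (Real.log (1 / 200)) ((2 * (t : ℝ) - 1) * (Real.pi / 4))) := fun t =>
    isNearPoint_one le_rfl log_lt_log_half (isCrossing_near.abs_segment_le t) (Or.inl hlt)
  set P := nearPath ⟨fun _ => (1 : ℝ), by fun_prop⟩ ⟨fun _ => Real.log (1 / 200), by fun_prop⟩
    ⟨fun t => (2 * (t : ℝ) - 1) * (Real.pi / 4), by fun_prop⟩ k with hP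
  have hseg : tangencyMap.comp P = isCrossing_near.segment := by
    refine ContinuousMap.ext fun t => Subtype.ext ?_
    refine (tangencyMap_nearPath_coe k t).trans (Prod.ext rfl ?_)
    have h2 : Real.log (1 / 200) = Real.log (1 / 100) - Real.log 2 := by
      rw [← Real.log_div (by norm_num) (by norm_num)]; norm_num
    change nearW (Real.log (1 / 200)) ((2 * (t : ℝ) - 1) * (Real.pi / 4)) =
      Complex.log (2 + (-2 + 1 / 100 * Complex.I)) + ((-Real.log 2 : ℝ) +
        ((2 * (t : ℝ) - 1) * (Real.pi / 4) : ℝ) * Complex.I)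
    rw [log_near, h2, nearW]
    push_cast
    ring
  have h0 : tangencyMap (P 0) ∈ rayFree := by
    have := isCrossing_near.segment_zero_mem
    rwa [← hseg] at this
  have h1 : tangencyMap (P 1) ∈ rayFree := by
    have := isCrossing_near.segment_one_mem
    rwa [← hseg] at this
  have hb : closedClass (tangencyMap.comp P) 0 1 = crossingClass := by
    rw [hseg]
    refine isCrossing_near.cls_eq_crossingClass ?_
    rw [Complex.mem_slitPlane_iff]
    right
    simp
  have key := closedClass_mul_rotationClass P h0 h1
  have r0 : rotationClass tangencyPoint = rotationClass (P 0) :=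
    rotationClass_tangencyPoint (by
      simp only [Set.Icc.coe_zero]
      rw [show (2 * 0 - 1) * (Real.pi / 4) = -(Real.pi / 4) by ring, abs_neg,
        abs_of_pos (by positivity)]) (k 0)
  have r1 : rotationClass tangencyPoint = rotationClass (P 1) :=
    rotationClass_tangencyPoint (by
      simp only [Set.Icc.coe_one]
      rw [show (2 * 1 - 1) * (Real.pi / 4) = Real.pi / 4 by ring,
        abs_of_pos (by positivity)]) (k 1)
  rwa [hb, ← r0, ← r1] at key

theorem exp_nearW_half_sq (θ : ℝ) :
    Complex.exp (nearW (Real.log (1 / 2)) θ) ^ 2 = -(1 / 4) * Complex.exp (θ * Complex.I) ^ 2 := by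
  have h : nearW (Real.log (1 / 2)) θ =
      (Real.log (1 / 2) : ℝ) + ((Real.pi / 2) * Complex.I + θ * Complex.I) := by
    rw [nearW]; push_cast; ring
  rw [h, Complex.exp_add, Complex.exp_add, Complex.exp_pi_div_two_mul_I, ← Complex.ofReal_exp,
    Real.exp_log (by norm_num)]
  push_cast
  linear_combination (1 / 4 * Complex.exp (θ * Complex.I) ^ 2) * Complex.I_sq

/-- The homotopy between the rotation of `tangencyPoint` and the rotation of `ω` alone. -/
noncomputable def rotationHomotopy : C(unitInterval × unitInterval, tangencyDomain) where
  toFun q := ⟨((1 - (q.1 : ℝ) : ℝ) * (1 / 4 * Complex.exp ((2 * Real.pi * q.2 : ℝ) * Complex.I)) +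
      (q.1 : ℝ) * (1 / 4 * Complex.exp ((2 * Real.pi * q.2 : ℝ) * Complex.I) ^ 2),
      nearW (Real.log (1 / 2)) (2 * Real.pi * q.2)), by
    have h : ‖((1 - (q.1 : ℝ) : ℝ) : ℂ) *
        (1 / 4 * Complex.exp ((2 * Real.pi * q.2 : ℝ) * Complex.I)) + (q.1 : ℝ) *
        (1 / 4 * Complex.exp ((2 * Real.pi * q.2 : ℝ) * Complex.I) ^ 2)‖ ≤ 1 / 4 := by
      refine (norm_add_le _ _).trans ?_
      rw [norm_mul, norm_mul, norm_mul, norm_mul, norm_pow, Complex.norm_exp_ofReal_mul_I,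
        Complex.norm_real, Complex.norm_real, Real.norm_of_nonneg q.1.2.1,
        Real.norm_of_nonneg (sub_nonneg.2 q.1.2.2)]
      norm_num
      linarith
    refine ⟨h.trans_lt (by norm_num), (nearW_re _ _).trans_lt log_half_neg, fun he => ?_⟩
    have h2 := congrArg norm he
    rw [exp_nearW_half_sq, norm_pow, norm_mul, norm_mul, norm_pow,
      Complex.norm_exp_ofReal_mul_I] at h2
    have h3 := pow_le_pow_left₀ (norm_nonneg _) h 2
    rw [h2] at h3
    norm_num at h3⟩
  continuous_toFun := by unfold nearW; fun_prop

theorem tangencyPoint_eq : tangencyPoint =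
    ⟨(1 / 4, nearW (Real.log (1 / 2)) 0), by
      have h := (rotationHomotopy (0, 0)).2
      simpa [rotationHomotopy] using h⟩ := by
  refine Subtype.ext (Prod.ext ?_ rfl)
  change -((0 : ℝ) : ℂ) * nearOffset - Complex.exp (nearW (Real.log (1 / 2)) 0) ^ 2 = 1 / 4
  rw [exp_nearW_half_sq]
  simp

theorem tangencyPoint_mem : tangencyMap tangencyPoint ∈ rayFree :=
  mem_rayFree_of_coe_eq (isNearPoint_half le_rfl zero_le_one (by rw [abs_zero]; positivity)).tangencyMap_coe
    (nearPoint_of_abs_le le_rfl zero_le_one (by rw [abs_zero]; positivity))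

theorem nearX_zero_sq : nearX 0 ^ 2 = 2 := by
  rw [nearX_sq le_rfl zero_le_one]; simp

theorem isCrossing_nearX_zero : IsCrossing (nearX 0) 2 (Real.log 8) (Real.pi / 2) :=
  isCrossing_two nearX_zero_sq (Real.log_pos (by norm_num)) (by positivity)
    (by linarith [Real.pi_pos])

theorem intShift_segment_coe (k : ℤ) (t : unitInterval) :
    (intShift k (isCrossing_nearX_zero.segment t)).1 =
      (nearX 0, nearW (Real.log (1 / 2)) (Real.pi * t + (k - 1) * Real.pi)) := by
  refine Prod.ext rfl ?_
  change Complex.log (2 + 2) + ((-Real.log 8 : ℝ) +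
    ((2 * (t : ℝ) - 1) * (Real.pi / 2) : ℝ) * Complex.I) + k * (Real.pi * Complex.I) = _
  have h1 : Complex.log (2 + 2) = (Real.log 4 : ℝ) := by
    rw [Complex.ofReal_log (by norm_num)]; norm_num
  have h2 : Real.log (1 / 2) = Real.log 4 - Real.log 8 := by
    rw [← Real.log_div (by norm_num) (by norm_num)]; norm_num
  rw [h1, nearW, h2]
  push_cast
  ring

theorem tangencyMap_rotationHomotopy_one_coe (t : unitInterval) :
    (tangencyMap (rotationHomotopy (1, t))).1 =
      (nearX 0, nearW (Real.log (1 / 2)) (2 * Real.pi * t)) := by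
  refine Prod.ext ?_ rfl
  change -Complex.exp (Complex.log (2 + ((1 - ((1 : unitInterval) : ℝ) : ℝ) *
    (1 / 4 * Complex.exp ((2 * Real.pi * t : ℝ) * Complex.I)) + (((1 : unitInterval) : ℝ) : ℂ) *
    (1 / 4 * Complex.exp ((2 * Real.pi * t : ℝ) * Complex.I) ^ 2)) +
    Complex.exp (nearW (Real.log (1 / 2)) (2 * Real.pi * t)) ^ 2) / 2) = nearX 0
  rw [exp_nearW_half_sq, nearX]
  congr 3
  simp

theorem rotationClass_tangencyPoint_eq :
    rotationClass tangencyPoint = crossingClass * shiftLoop * crossingClass * shiftLoop := by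
  set g : C(unitInterval × unitInterval, logCover) := tangencyMap.comp rotationHomotopy with hg
  have e : ∀ s, Complex.exp ((2 * Real.pi * (s : unitInterval) : ℝ) * Complex.I) = 1 →
      ∀ q : unitInterval, (rotationHomotopy (q, s)).1 =
        (1 / 4, nearW (Real.log (1 / 2)) (2 * Real.pi * s)) := by
    intro s hs q
    refine Prod.ext ?_ rfl
    change ((1 - (q : ℝ) : ℝ) : ℂ) * (1 / 4 * Complex.exp ((2 * Real.pi * s : ℝ) * Complex.I)) +
      (q : ℝ) * (1 / 4 * Complex.exp ((2 * Real.pi * s : ℝ) * Complex.I) ^ 2) = 1 / 4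
    rw [hs]
    push_cast
    ring
  have c0 : ∀ q, rotationHomotopy (q, 0) = tangencyPoint := fun q => by
    rw [tangencyPoint_eq]
    exact Subtype.ext ((e 0 (by simp) q).trans (by simp))
  have c1 : ∀ q, rotationHomotopy (q, 1) = tangencyRotation (1, tangencyPoint) := fun q => by
    rw [tangencyPoint_eq]
    refine Subtype.ext ((e 1 (by simp [Complex.exp_two_pi_mul_I]) q).trans (Prod.ext ?_ ?_))
    · simp [tangencyRotation, Complex.exp_two_pi_mul_I]
    · simp [tangencyRotation, nearW]
      ring
  have h₀ : ∀ q, g (q, 0) ∈ rayFree := fun q => by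
    rw [hg, ContinuousMap.comp_apply, c0]; exact tangencyPoint_mem
  have h₁ : ∀ q, g (q, 1) ∈ rayFree := fun q => by
    rw [hg, ContinuousMap.comp_apply, c1, tangencyMap_rotation_one]
    exact intShift_mem_rayFree tangencyPoint_mem
  have key : closedClass g (0, 0) (0, 1) = closedClass g (1, 0) (1, 1) :=
    basedClass_square logCoverMap rayFree coverBase g h₀ h₁
  have e0 : closedClass ⟨fun t => tangencyMap (tangencyRotation (t, tangencyPoint)),
      by fun_prop⟩ 0 1 = closedClass g (0, 0) (0, 1) := by
    refine Eq.trans ?_ (closedClass_comp g (ContinuousMap.mk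
      (fun t : unitInterval => ((0 : unitInterval), t)) (by fun_prop)) 0 1)
    congr 1
    refine ContinuousMap.ext fun t => congrArg tangencyMap ?_
    rw [tangencyPoint_eq]
    refine Subtype.ext (Prod.ext ?_ ?_)
    · simp [tangencyRotation, rotationHomotopy]
      ring
    · simp [tangencyRotation, rotationHomotopy, nearW]
      ring
  have half : ∀ (k : ℤ) (p : C(unitInterval, unitInterval))
      (_ : ∀ t, ((p t : unitInterval) : ℝ) = ((t : ℝ) + (k - 1)) / 2),
      closedClass g (1, p 0) (1, p 1) = shiftLoop ^ (-k) * crossingClass * shiftLoop ^ k := by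
    intro k p hp
    rw [← isCrossing_nearX_zero.cls_eq_crossingClass (by simp)]
    refine Eq.trans ?_ (closedClass_intShift _ isCrossing_nearX_zero.segment_zero_mem
      isCrossing_nearX_zero.segment_one_mem k)
    refine (closedClass_comp g (ContinuousMap.mk
      (fun t : unitInterval => ((1 : unitInterval), p t)) (by fun_prop)) 0 1).symm.trans ?_
    congr 1
    refine ContinuousMap.ext fun t => Subtype.ext ?_
    refine (tangencyMap_rotationHomotopy_one_coe _).trans ?_
    refine Eq.trans ?_ (intShift_segment_coe k t).symm
    rw [hp]
    congr 2
    ring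
  have hp1 : ∀ t : unitInterval, (t : ℝ) / 2 ∈ unitInterval := fun t =>
    ⟨by linarith [t.2.1], by linarith [t.2.2]⟩
  have hp2 : ∀ t : unitInterval, ((t : ℝ) + 1) / 2 ∈ unitInterval := fun t =>
    ⟨by linarith [t.2.1], by linarith [t.2.2]⟩
  have k1 := half 1 ⟨fun t => ⟨(t : ℝ) / 2, hp1 t⟩, by fun_prop⟩ fun t => by simp
  have k2 := half 2 ⟨fun t => ⟨((t : ℝ) + 1) / 2, hp2 t⟩, by fun_prop⟩ fun t => by
    simp; norm_num
  have m0 : (⟨((0 : unitInterval) : ℝ) / 2, hp1 0⟩ : unitInterval) = 0 := Subtype.ext (by simp)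
  have m1 : (⟨((1 : unitInterval) : ℝ) / 2, hp1 1⟩ : unitInterval) =
      ⟨(((0 : unitInterval) : ℝ) + 1) / 2, hp2 0⟩ := Subtype.ext (by simp)
  have m2 : (⟨(((1 : unitInterval) : ℝ) + 1) / 2, hp2 1⟩ : unitInterval) = 1 :=
    Subtype.ext (by norm_num)
  simp only [ContinuousMap.coe_mk, m0, m1, m2] at k1 k2
  have hmid : g (1, ⟨(((0 : unitInterval) : ℝ) + 1) / 2, hp2 0⟩) ∈ rayFree := by
    have h := intShift_mem_rayFree (k := 1) isCrossing_nearX_zero.segment_one_mem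
    rwa [show g (1, ⟨(((0 : unitInterval) : ℝ) + 1) / 2, hp2 0⟩) =
      intShift 1 (isCrossing_nearX_zero.segment 1) from Subtype.ext
        ((tangencyMap_rotationHomotopy_one_coe _).trans
          ((congrArg (fun a => (nearX 0, nearW (Real.log (1 / 2)) a)) (by simp; ring)).trans
            (intShift_segment_coe 1 1).symm))]
  rw [rotationClass, e0, key, ← closedClass_mul g (h₀ 1) hmid (h₁ 1), k1, k2]
  group

theorem crossing_relation : (crossingClass * shiftLoop) ^ 2 = (shiftLoop * crossingClass) ^ 2 := by
  have h := commute_crossingClass_rotationClass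
  rw [rotationClass_tangencyPoint_eq] at h
  have h2 : crossingClass * (crossingClass * shiftLoop * crossingClass * shiftLoop) =
      crossingClass * (shiftLoop * crossingClass * shiftLoop * crossingClass) := by
    rw [h.eq]
    group
  have h3 := mul_left_cancel h2
  simpa only [pow_two, mul_assoc] using h3

/-- The two branches of the square root: the principal one, and the one defined off the positive
real axis. -/
noncomputable def sheetRoot : Bool → ℂ → ℂ
  | true, Y => Complex.exp (Complex.log Y / 2)
  | false, Y => Complex.I * Complex.exp (Complex.log (-Y) / 2)

/-- The domains of continuity of the branches of the square root. -/
def sheetDomain : Bool → Set ℂ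
  | true => Complex.slitPlane
  | false => {Y | -Y ∈ Complex.slitPlane}

theorem isOpen_sheetDomain (ϵ : Bool) : IsOpen (sheetDomain ϵ) := by
  cases ϵ
  · exact Complex.isOpen_slitPlane.preimage continuous_neg
  · exact Complex.isOpen_slitPlane

theorem sheetRoot_sq {Y : ℂ} (h : Y ≠ 0) (ϵ : Bool) : sheetRoot ϵ Y ^ 2 = Y := by
  cases ϵ
  · rw [sheetRoot, mul_pow, exp_log_div_two_sq (neg_ne_zero.2 h), Complex.I_sq]
    ring
  · exact exp_log_div_two_sq h

theorem sheetRoot_ne_zero (ϵ : Bool) (Y : ℂ) : sheetRoot ϵ Y ≠ 0 := by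
  cases ϵ
  · exact mul_ne_zero Complex.I_ne_zero (Complex.exp_ne_zero _)
  · exact Complex.exp_ne_zero _

theorem continuousAt_sheetRoot {ϵ : Bool} {Y : ℂ} (h : Y ∈ sheetDomain ϵ) :
    ContinuousAt (sheetRoot ϵ) Y := by
  cases ϵ
  · have h1 : ContinuousAt (fun Y : ℂ => Complex.log (-Y)) Y :=
      ContinuousAt.clog (by fun_prop) h
    unfold sheetRoot
    fun_prop
  · have h1 : ContinuousAt (fun Y : ℂ => Complex.log Y) Y := ContinuousAt.clog (by fun_prop) h
    unfold sheetRoot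
    fun_prop

theorem im_ne_zero_of_mem_sheetDomain {Y : ℂ} (h : Y ∈ sheetDomain true)
    (h' : Y ∈ sheetDomain false) : Y.im ≠ 0 := by
  intro h0
  have h1 : 0 < Y.re := (Complex.mem_slitPlane_iff.1 h).resolve_right (by simp [h0])
  have h2 : 0 < (-Y).re := (Complex.mem_slitPlane_iff.1 h').resolve_right (by simp [h0])
  rw [Complex.neg_re] at h2
  linarith

theorem sheetRoot_false_of_im_pos {Y : ℂ} (h : 0 < Y.im) :
    sheetRoot false Y = sheetRoot true Y := by
  have h1 : Complex.log (-Y) / 2 = Complex.log Y / 2 + -(Real.pi / 2 * Complex.I) := by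
    rw [Complex.log, Complex.log, norm_neg, Complex.arg_neg_eq_arg_sub_pi_of_im_pos h]
    push_cast
    ring
  rw [sheetRoot, sheetRoot, h1, Complex.exp_add, Complex.exp_neg, Complex.exp_pi_div_two_mul_I,
    Complex.inv_I]
  linear_combination (-Complex.exp (Complex.log Y / 2)) * Complex.I_sq

theorem sheetRoot_false_of_im_neg {Y : ℂ} (h : Y.im < 0) :
    sheetRoot false Y = -sheetRoot true Y := by
  have h1 : Complex.log (-Y) / 2 = Complex.log Y / 2 + Real.pi / 2 * Complex.I := by
    rw [Complex.log, Complex.log, norm_neg, Complex.arg_neg_eq_arg_add_pi_of_im_neg h]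
    push_cast
    ring
  rw [sheetRoot, sheetRoot, h1, Complex.exp_add, Complex.exp_pi_div_two_mul_I]
  linear_combination Complex.exp (Complex.log Y / 2) * Complex.I_sq

/-- The coordinate `m` whose values `±4` are excluded on the complement. -/
noncomputable def sheetCoord (ϵ : Bool) (p : affineComplement) : ℂ :=
  -(p.1.1 ^ 2 - p.1.2 - 2) / sheetRoot ϵ p.1.2

theorem sheetCoord_sq_ne (ϵ : Bool) (p : affineComplement) : sheetCoord ϵ p ^ 2 ≠ 16 := by
  intro h
  rw [sheetCoord, div_pow, neg_sq, sheetRoot_sq p.2.1, div_eq_iff p.2.1] at h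
  exact p.2.2 h

theorem continuousAt_sheetCoord {ϵ : Bool} {p : affineComplement} (h : p.1.2 ∈ sheetDomain ϵ) :
    ContinuousAt (sheetCoord ϵ) p := by
  have h1 : ContinuousAt (fun q : affineComplement => sheetRoot ϵ q.1.2) p :=
    ContinuousAt.comp (f := fun q : affineComplement => q.1.2) (continuousAt_sheetRoot h)
      (by fun_prop)
  unfold sheetCoord
  exact ContinuousAt.div (by fun_prop) h1 (sheetRoot_ne_zero _ _)

/-- The two regions of the plane which cover the complement of `±4`. -/
def coordRegion : Bool → Set ℂ
  | true => {m | 4 < |m.re|}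
  | false => {m | m.im ≠ 0 ∨ |m.re| < 4}

theorem isOpen_coordRegion (j : Bool) : IsOpen (coordRegion j) := by
  cases j
  · exact (isOpen_ne_fun Complex.continuous_im continuous_const).union
      (isOpen_lt Complex.continuous_re.abs continuous_const)
  · exact isOpen_lt continuous_const Complex.continuous_re.abs

theorem exists_mem_coordRegion {m : ℂ} (h : m ^ 2 ≠ 16) : ∃ j, m ∈ coordRegion j := by
  rcases lt_trichotomy |m.re| 4 with h1 | h1 | h1
  · exact ⟨false, Or.inr h1⟩
  · refine ⟨false, Or.inl fun h2 => h ?_⟩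
    have h3 : m.re ^ 2 = 16 := by rw [← sq_abs, h1]; norm_num
    rw [show m = (m.re : ℂ) from Complex.ext rfl h2]
    exact_mod_cast h3
  · exact ⟨true, h1⟩

theorem neg_mem_coordRegion {j : Bool} {m : ℂ} : -m ∈ coordRegion j ↔ m ∈ coordRegion j := by
  cases j <;> simp [coordRegion]

section Values

variable {G : Type*} [Group G] (β γ : G)

open Classical in
/-- The local values of the cocycle in terms of the coordinate `m`. -/
noncomputable def coordValue : Bool → ℂ → G
  | true, m => if 0 < m.re then (if m.im < 0 then β else 1) else
      if 0 < m.im then γ * β * γ⁻¹ else 1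
  | false, _ => 1

theorem coordValue_neg (h : γ * γ * β = β * (γ * γ)) {j : Bool} {m : ℂ} (hm : m ∈ coordRegion j) :
    coordValue β γ j (-m) = γ * coordValue β γ j m * γ⁻¹ := by
  have h' : γ * (γ * β * γ⁻¹) * γ⁻¹ = β := by
    rw [show γ * (γ * β * γ⁻¹) * γ⁻¹ = γ * γ * β * (γ * γ)⁻¹ by group, h, mul_inv_cancel_right]
  cases j
  · simp [coordValue]
  · have h0 : m.re ≠ 0 := by
      intro h0
      have hm' : 4 < |m.re| := hm
      rw [h0, abs_zero] at hm'
      linarith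
    simp only [coordValue, Complex.neg_re, Complex.neg_im, Left.neg_pos_iff, Left.neg_neg_iff]
    rcases lt_or_gt_of_ne h0 with h1 | h1
    · rw [if_pos h1, if_neg h1.not_gt]
      split_ifs
      · exact h'.symm
      · simp
    · rw [if_neg h1.not_gt, if_pos h1]
      split_ifs <;> simp

theorem eventually_pos_iff {X : Type*} [TopologicalSpace X] {f : X → ℝ} {x : X}
    (hf : ContinuousAt f x) (h : f x ≠ 0) : ∀ᶠ y in nhds x, (0 < f y ↔ 0 < f x) := by
  rcases lt_or_gt_of_ne h with h1 | h1
  · filter_upwards [hf.eventually_lt_const h1] with y hy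
    exact iff_of_false hy.not_gt h1.not_gt
  · filter_upwards [hf.eventually_const_lt h1] with y hy
    exact iff_of_true hy h1

theorem eventually_neg_iff {X : Type*} [TopologicalSpace X] {f : X → ℝ} {x : X}
    (hf : ContinuousAt f x) (h : f x ≠ 0) : ∀ᶠ y in nhds x, (f y < 0 ↔ f x < 0) := by
  have := eventually_pos_iff hf.neg (neg_ne_zero.2 h)
  simpa using this

theorem eventually_coordValue_true {m : ℂ} (hre : m.re ≠ 0) (him : m.im ≠ 0) :
    ∀ᶠ m' in nhds m, coordValue β γ true m' = coordValue β γ true m := by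
  filter_upwards [eventually_pos_iff Complex.continuous_re.continuousAt hre,
    eventually_pos_iff Complex.continuous_im.continuousAt him,
    eventually_neg_iff Complex.continuous_im.continuousAt him] with m' h1 h2 h3
  simp only [coordValue, h1, h2, h3]

theorem eventually_coordValue_ratio {m : ℂ} {i j : Bool} (hi : m ∈ coordRegion i)
    (hj : m ∈ coordRegion j) : ∀ᶠ m' in nhds m,
      coordValue β γ j m' * (coordValue β γ i m')⁻¹ =
        coordValue β γ j m * (coordValue β γ i m)⁻¹ := by
  have key : m ∈ coordRegion true → m ∈ coordRegion false →
      ∀ᶠ m' in nhds m, coordValue β γ true m' = coordValue β γ true m := fun h1 h2 => by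
    have h1' : 4 < |m.re| := h1
    refine eventually_coordValue_true β γ ?_ (h2.resolve_right h1'.not_gt)
    intro h0
    rw [h0, abs_zero] at h1'
    linarith
  cases i <;> cases j
  · simp [coordValue]
  · filter_upwards [key hj hi] with m' h
    rw [h]
    rfl
  · filter_upwards [key hi hj] with m' h
    rw [h]
    rfl
  · simp

open Classical in
/-- The normalisation of the second branch of the square root. -/
noncomputable def sheetValue : Bool → ℂ → G
  | true, _ => 1
  | false, Y => if Y.im < 0 then γ else 1

/-- The charts of the covering of `affineComplement`. -/
def sheetChart (i : Bool × Bool) : Set affineComplement :=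
  {p | p.1.2 ∈ sheetDomain i.1 ∧ sheetCoord i.1 p ∈ coordRegion i.2}

theorem isOpen_sheetChart (i : Bool × Bool) : IsOpen (sheetChart i) := by
  refine isOpen_iff_mem_nhds.2 fun p hp => ?_
  have h1 : Continuous fun q : affineComplement => q.1.2 := by fun_prop
  exact Filter.inter_mem (h1.continuousAt ((isOpen_sheetDomain i.1).mem_nhds hp.1))
    (continuousAt_sheetCoord hp.1 ((isOpen_coordRegion i.2).mem_nhds hp.2))

theorem exists_mem_sheetChart (p : affineComplement) : ∃ i, p ∈ sheetChart i := by
  have h1 : ∃ ϵ, p.1.2 ∈ sheetDomain ϵ := by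
    by_cases h : p.1.2 ∈ Complex.slitPlane
    · exact ⟨true, h⟩
    · refine ⟨false, ?_⟩
      rw [Complex.mem_slitPlane_iff, not_or, not_lt, not_not] at h
      refine Complex.mem_slitPlane_iff.2 (Or.inl ?_)
      rw [Complex.neg_re, neg_pos]
      exact lt_of_le_of_ne h.1 fun h0 => p.2.1 (Complex.ext h0 h.2)
  obtain ⟨ϵ, hϵ⟩ := h1
  obtain ⟨j, hj⟩ := exists_mem_coordRegion (sheetCoord_sq_ne ϵ p)
  exact ⟨(ϵ, j), hϵ, hj⟩

/-- The local functions on `affineComplement` defining the covering. -/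
noncomputable def chartValue (i : Bool × Bool) (p : affineComplement) : G :=
  coordValue β γ i.2 (sheetCoord i.1 p) * sheetValue γ i.1 p.1.2

theorem chartValue_false (h : γ * γ * β = β * (γ * γ)) {j : Bool} {p : affineComplement}
    (hp : p ∈ sheetChart (false, j)) (hp' : p.1.2.im ≠ 0) :
    chartValue β γ (false, j) p = sheetValue γ false p.1.2 * chartValue β γ (true, j) p := by
  have hp2 : sheetCoord false p ∈ coordRegion j := hp.2
  simp only [chartValue, sheetValue, mul_one]
  rcases lt_or_gt_of_ne hp' with h1 | h1
  · have h2 : sheetCoord false p = -sheetCoord true p := by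
      rw [sheetCoord, sheetCoord, sheetRoot_false_of_im_neg h1, div_neg]
    rw [if_pos h1, h2, coordValue_neg β γ h (neg_mem_coordRegion.1 (h2 ▸ hp2)),
      inv_mul_cancel_right]
  · have h2 : sheetCoord false p = sheetCoord true p := by
      rw [sheetCoord, sheetCoord, sheetRoot_false_of_im_pos h1]
    rw [if_neg h1.not_gt, h2, mul_one, one_mul]

theorem mem_coordRegion_true_of_false {j : Bool} {p : affineComplement}
    (hp : p ∈ sheetChart (false, j)) (hp' : p.1.2.im ≠ 0) : sheetCoord true p ∈ coordRegion j := by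
  have hp2 : sheetCoord false p ∈ coordRegion j := hp.2
  rcases lt_or_gt_of_ne hp' with h1 | h1
  · rw [sheetCoord, sheetRoot_false_of_im_neg h1, div_neg] at hp2
    exact neg_mem_coordRegion.1 hp2
  · rwa [sheetCoord, sheetRoot_false_of_im_pos h1] at hp2

theorem eventually_chartValue_ratio_same (ϵ i j : Bool) {p : affineComplement}
    (hi : p ∈ sheetChart (ϵ, i)) (hj : p ∈ sheetChart (ϵ, j)) : ∀ᶠ q in nhds p,
      chartValue β γ (ϵ, j) q * (chartValue β γ (ϵ, i) q)⁻¹ =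
        chartValue β γ (ϵ, j) p * (chartValue β γ (ϵ, i) p)⁻¹ := by
  have h := (continuousAt_sheetCoord hi.1).eventually
    (eventually_coordValue_ratio β γ hi.2 hj.2)
  filter_upwards [h] with q hq
  simpa [chartValue] using hq

theorem eventually_chartValue_ratio_diff (h : γ * γ * β = β * (γ * γ)) (i j : Bool)
    {p : affineComplement} (hi : p ∈ sheetChart (true, i)) (hj : p ∈ sheetChart (false, j)) :
    ∀ᶠ q in nhds p, chartValue β γ (false, j) q * (chartValue β γ (true, i) q)⁻¹ =
      chartValue β γ (false, j) p * (chartValue β γ (true, i) p)⁻¹ := by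
  have him : p.1.2.im ≠ 0 := im_ne_zero_of_mem_sheetDomain hi.1 hj.1
  have h1 : Continuous fun q : affineComplement => q.1.2.im := by fun_prop
  filter_upwards [eventually_neg_iff h1.continuousAt him,
    h1.continuousAt.eventually_ne him, (isOpen_sheetChart _).mem_nhds hj,
    eventually_chartValue_ratio_same β γ true i j hi
      ⟨hi.1, mem_coordRegion_true_of_false hj him⟩] with q h2 h3 h4 h5
  rw [chartValue_false β γ h h4 h3, chartValue_false β γ h hj him, mul_assoc, mul_assoc, h5]
  simp only [sheetValue, h2]

/-- The covering of `affineComplement` determined by `β` and `γ`. -/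
noncomputable def sheetCocycle (h : γ * γ * β = β * (γ * γ)) :
    RatioCocycle (Bool × Bool) affineComplement G where
  chart := sheetChart
  isOpen_chart := isOpen_sheetChart
  index p := (exists_mem_sheetChart p).choose
  mem_chart p := (exists_mem_sheetChart p).choose_spec
  value := chartValue β γ
  eventually_ratio := by
    rintro ⟨ϵ, i⟩ ⟨ϵ', j⟩ p ⟨hi, hj⟩
    cases ϵ <;> cases ϵ'
    · exact eventually_chartValue_ratio_same β γ false i j hi hj
    · filter_upwards [eventually_chartValue_ratio_diff β γ h j i hj hi] with q hq
      simpa using congrArg (·⁻¹) hq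
    · exact eventually_chartValue_ratio_diff β γ h i j hi hj
    · exact eventually_chartValue_ratio_same β γ true i j hi hj

end Values

theorem arg_exp_of_abs_lt {v : ℂ} (h : |v.im| < Real.pi) : (Complex.exp v).arg = v.im := by
  have h' := abs_lt.1 h
  rw [← Complex.log_im, Complex.log_exp h'.1 h'.2.le]

theorem exp_mem_slitPlane_of_abs_lt {v : ℂ} (h : |v.im| < Real.pi) :
    Complex.exp v ∈ Complex.slitPlane := by
  rw [Complex.mem_slitPlane_iff_arg, arg_exp_of_abs_lt h]
  exact ⟨(abs_lt.1 h).2.ne, Complex.exp_ne_zero _⟩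

theorem log_exp_of_abs_lt {v : ℂ} (h : |v.im| < Real.pi) : Complex.log (Complex.exp v) = v :=
  Complex.log_exp (abs_lt.1 h).1 (abs_lt.1 h).2.le

theorem sheetCoord_of_sq_eq {z : logCover} (hz : z.1.1 ^ 2 = 2) {ϵ : Bool} {u : ℂ}
    (hu : sheetRoot ϵ (Complex.exp z.1.2 ^ 2) = Complex.exp u)
    (h : Complex.exp z.1.2 ^ 2 = Complex.exp u ^ 2) :
    sheetCoord ϵ (logCoverMap z) = Complex.exp u := by
  change -(z.1.1 ^ 2 - Complex.exp z.1.2 ^ 2 - 2) / sheetRoot ϵ (Complex.exp z.1.2 ^ 2) = _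
  rw [hu, div_eq_iff (Complex.exp_ne_zero _), hz, h]
  ring

theorem sheetCoord_true_logCoverMap {z : logCover} (hz : z.1.1 ^ 2 = 2) (n : ℤ)
    (h : |z.1.2.im - n * Real.pi| < Real.pi / 2) :
    (logCoverMap z).1.2 ∈ sheetDomain true ∧
      sheetCoord true (logCoverMap z) = Complex.exp (z.1.2 - n * (Real.pi * Complex.I)) := by
  set u := z.1.2 - n * (Real.pi * Complex.I) with hu
  have h1 : Complex.exp z.1.2 ^ 2 = Complex.exp u ^ 2 := by
    rw [← exp_add_int_mul_pi_sq u n, hu, sub_add_cancel]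
  have h3 : (2 * u).im = 2 * (z.1.2.im - n * Real.pi) := by simp [hu]
  have h2 : |(2 * u).im| < Real.pi := by
    rw [h3, abs_mul, abs_two]
    linarith
  have h4 : Complex.exp u ^ 2 = Complex.exp (2 * u) := by
    rw [← Complex.exp_nat_mul]; norm_num
  refine ⟨?_, sheetCoord_of_sq_eq hz ?_ h1⟩
  · change Complex.exp z.1.2 ^ 2 ∈ Complex.slitPlane
    rw [h1, h4]
    exact exp_mem_slitPlane_of_abs_lt h2
  · rw [h1, h4, sheetRoot, log_exp_of_abs_lt h2, mul_div_cancel_left₀ _ two_ne_zero]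

theorem sheetCoord_false_logCoverMap {z : logCover} (hz : z.1.1 ^ 2 = 2)
    (h : |z.1.2.im - Real.pi / 2| < Real.pi / 2) :
    (logCoverMap z).1.2 ∈ sheetDomain false ∧
      sheetCoord false (logCoverMap z) = Complex.exp z.1.2 := by
  have h3 : (2 * z.1.2 - Real.pi * Complex.I).im = 2 * (z.1.2.im - Real.pi / 2) := by
    simp
    ring
  have h2 : |(2 * z.1.2 - Real.pi * Complex.I).im| < Real.pi := by
    rw [h3, abs_mul, abs_two]
    linarith
  have h4 : -Complex.exp z.1.2 ^ 2 = Complex.exp (2 * z.1.2 - Real.pi * Complex.I) := by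
    rw [Complex.exp_sub, Complex.exp_pi_mul_I, ← Complex.exp_nat_mul, div_neg, div_one]
    norm_num
  refine ⟨?_, sheetCoord_of_sq_eq hz ?_ rfl⟩
  · change -Complex.exp z.1.2 ^ 2 ∈ Complex.slitPlane
    rw [h4]
    exact exp_mem_slitPlane_of_abs_lt h2
  · have h5 : (2 * z.1.2 - Real.pi * Complex.I) / 2 = z.1.2 - Real.pi / 2 * Complex.I := by ring
    rw [sheetRoot, h4, log_exp_of_abs_lt h2, h5, Complex.exp_sub, Complex.exp_pi_div_two_mul_I]
    field_simp

/-- The point of `rayFree` over `x = √2` at height `θ`, far from the obstruction rays. -/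
noncomputable def highPoint (θ : ℝ) : logCover :=
  ⟨((Real.sqrt 2 : ℝ), 4 + θ * Complex.I), mem_logCover_of_lt (by
    simpa using two_add_norm_sqrt_two_lt)⟩

theorem highPoint_mem (θ : ℝ) : highPoint θ ∈ rayFree :=
  mem_rayFree_of_lt (by simpa [highPoint] using two_add_norm_sqrt_two_lt)

theorem continuous_highPoint : Continuous highPoint := by unfold highPoint; fun_prop

theorem highPoint_sq (θ : ℝ) : (highPoint θ).1.1 ^ 2 = 2 := ofReal_sqrt_two_sq

theorem highPoint_im (θ : ℝ) : (highPoint θ).1.2.im = θ := by simp [highPoint]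

theorem coverBase_eq_highPoint : coverBase.1 = highPoint 0 := by
  refine Subtype.ext (Prod.ext rfl ?_)
  simp [highPoint, coverBase]

theorem sixteen_le_exp_four : 16 ≤ Real.exp 4 := by
  have h := Real.add_one_le_exp 1
  have h2 : Real.exp 4 = Real.exp 1 ^ 4 := by rw [← Real.exp_nat_mul]; norm_num
  rw [h2]
  calc (16 : ℝ) = 2 ^ 4 := by norm_num
    _ ≤ _ := pow_le_pow_left₀ (by norm_num) (by linarith) 4

theorem sheetCoord_true_highPoint (n : ℤ) {θ : ℝ} (h : |θ - n * Real.pi| ≤ Real.pi / 4) :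
    logCoverMap (highPoint θ) ∈ sheetChart (true, true) ∧
      0 < (sheetCoord true (logCoverMap (highPoint θ))).re ∧
      (sheetCoord true (logCoverMap (highPoint θ))).im =
        Real.exp 4 * Real.sin (θ - n * Real.pi) := by
  have hp := Real.pi_pos
  obtain ⟨h1, h2⟩ := sheetCoord_true_logCoverMap (highPoint_sq θ) n (by
    rw [highPoint_im]; linarith)
  have hre : ((highPoint θ).1.2 - n * (Real.pi * Complex.I)).re = 4 := by simp [highPoint]
  have him : ((highPoint θ).1.2 - n * (Real.pi * Complex.I)).im = θ - n * Real.pi := by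
    simp [highPoint]
  have h3 : 1 / 2 ≤ Real.cos (θ - n * Real.pi) := by
    rw [← Real.cos_abs, ← Real.cos_pi_div_three]
    exact Real.cos_le_cos_of_nonneg_of_le_pi (abs_nonneg _) (by linarith) (by linarith)
  have h4 : 4 < (sheetCoord true (logCoverMap (highPoint θ))).re := by
    rw [h2, Complex.exp_re, hre, him]
    nlinarith [sixteen_le_exp_four]
  refine ⟨⟨h1, ?_⟩, by linarith, by rw [h2, Complex.exp_im, hre, him]⟩
  exact h4.trans_le (le_abs_self _)

theorem highPoint_mem_false {θ : ℝ} (h0 : 0 < θ) (h1 : θ < Real.pi) :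
    logCoverMap (highPoint θ) ∈ sheetChart (false, false) := by
  obtain ⟨h2, h3⟩ := sheetCoord_false_logCoverMap (highPoint_sq θ) (by
    rw [highPoint_im, abs_lt]; constructor <;> linarith)
  refine ⟨h2, Or.inl ?_⟩
  change (sheetCoord false (logCoverMap (highPoint θ))).im ≠ 0
  rw [h3, Complex.exp_im, highPoint_im]
  exact (mul_pos (Real.exp_pos _) (Real.sin_pos_of_pos_of_lt_pi h0 h1)).ne'

theorem im_logCoverMap_highPoint (θ : ℝ) :
    (logCoverMap (highPoint θ)).1.2.im = Real.exp 8 * Real.sin (2 * θ) := by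
  change (Complex.exp (4 + θ * Complex.I) ^ 2).im = _
  rw [← Complex.exp_nat_mul, Complex.exp_im]
  norm_num

theorem chartValue_highPoint_of_sin_nonneg {G : Type*} [Group G] (β γ : G) (n : ℤ) {θ : ℝ} (h : |θ - n * Real.pi| ≤ Real.pi / 4)
    (hs : 0 ≤ Real.sin (θ - n * Real.pi)) :
    chartValue β γ (true, true) (logCoverMap (highPoint θ)) = 1 := by
  obtain ⟨-, h2, h3⟩ := sheetCoord_true_highPoint n h
  simp only [chartValue, coordValue, sheetValue, mul_one]
  rw [if_pos h2, if_neg]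
  rw [h3, not_lt]
  exact mul_nonneg (Real.exp_pos 4).le hs

theorem chartValue_highPoint_of_sin_neg {G : Type*} [Group G] (β γ : G) (n : ℤ) {θ : ℝ} (h : |θ - n * Real.pi| ≤ Real.pi / 4)
    (hs : Real.sin (θ - n * Real.pi) < 0) :
    chartValue β γ (true, true) (logCoverMap (highPoint θ)) = β := by
  obtain ⟨-, h2, h3⟩ := sheetCoord_true_highPoint n h
  simp only [chartValue, coordValue, sheetValue, mul_one]
  rw [if_pos h2, if_pos]
  rw [h3]
  exact mul_neg_of_pos_of_neg (Real.exp_pos 4) hs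

section Monodromy

variable {G : Type*} [Group G] [TopologicalSpace G] [DiscreteTopology G]

namespace RatioCocycle

variable {ι : Type*} (S : RatioCocycle ι affineComplement G)

/-- The monodromy along a path in `rayFree` from the base point. -/
noncomputable def legMonodromy (z : logCover) (hz : z ∈ rayFree) (k : G) : G :=
  S.monodromy (baseLeg logCoverMap rayFree coverBase z hz) k

theorem legMonodromy_base (z : logCover) (hz : z ∈ rayFree) (h : coverBase.1 = z) (k : G) :
    S.legMonodromy z hz k = k := by
  subst h
  rw [legMonodromy, baseLeg_base]
  exact S.monodromy_id _ k

theorem legMonodromy_step (f : C(unitInterval, logCover)) {z z' : logCover} (h0 : f 0 = z)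
    (h1 : f 1 = z') (hA : ∀ t, f t ∈ rayFree) (i : ι)
    (hi : ∀ t, logCoverMap (f t) ∈ S.chart i) (hz : z ∈ rayFree) (hz' : z' ∈ rayFree) (k : G) :
    S.legMonodromy z' hz' k = (S.value i (logCoverMap z'))⁻¹ *
      (S.value i (logCoverMap z) * S.legMonodromy z hz k) := by
  subst h0 h1
  have h := basedClass_of_forall_mem logCoverMap rayFree coverBase f 0 1 hA
  rw [basedClass_eq logCoverMap rayFree coverBase f hz hz', ← Category.assoc] at h
  have h2 := (IsIso.comp_inv_eq _).1 h
  have h3 : baseLeg logCoverMap rayFree coverBase (f 1) hz' =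
      baseLeg logCoverMap rayFree coverBase (f 0) hz ≫ pathTransport (logCoverMap.comp f) 0 1 :=
    (h2.trans (Category.id_comp _)).symm
  rw [legMonodromy, h3, S.monodromy_comp, S.monodromy_pathTransport (logCoverMap.comp f) i hi]
  rfl

theorem monodromy_inv {x y : affineComplement}
    (γ : FundamentalGroupoid.mk x ⟶ FundamentalGroupoid.mk y) (k : G) :
    S.monodromy (inv γ) (S.monodromy γ k) = k := by
  rw [← S.monodromy_comp, IsIso.hom_inv_id, S.monodromy_id]

theorem monodromy_closedClass (f : C(unitInterval, logCover)) (h0 : f 0 ∈ rayFree)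
    (h1 : f 1 ∈ rayFree) (i : ι) (hi : ∀ t, logCoverMap (f t) ∈ S.chart i) {k l : G}
    (h : S.legMonodromy _ h1 l = (S.value i (logCoverMap (f 1)))⁻¹ *
      (S.value i (logCoverMap (f 0)) * S.legMonodromy _ h0 k)) :
    S.monodromyHom _ (closedClass f 0 1) k = l := by
  rw [monodromyHom_apply, closedClass, basedClass_eq logCoverMap rayFree coverBase f h0 h1]
  refine (S.monodromy_comp _ _ k).trans ((S.monodromy_comp _ _ _).trans ?_)
  have h2 := S.monodromy_pathTransport (logCoverMap.comp f) i hi 0 1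
    (S.monodromy (baseLeg logCoverMap rayFree coverBase (f 0) h0) k)
  rw [h2]
  exact (congrArg _ h.symm).trans (S.monodromy_inv _ l)

theorem monodromy_shiftLoop (k : G) : S.monodromyHom _ shiftLoop k =
    S.legMonodromy (deckShift coverBase) (deckShift_mem_rayFree _ coverBase.2) k := by
  rw [monodromyHom_apply, shiftLoop, deckLoop]
  exact (S.monodromy_comp _ _ k).trans (S.monodromy_eqToHom
    (DFunLike.congr_fun logCoverMap_comp_deckShift (coverBase : logCover)) _)

theorem legMonodromy_highPoint (θ θ' : ℝ) (i : ι)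
    (hi : ∀ ϑ ∈ Set.uIcc θ θ', logCoverMap (highPoint ϑ) ∈ S.chart i) (k : G) :
    S.legMonodromy (highPoint θ') (highPoint_mem θ') k =
      (S.value i (logCoverMap (highPoint θ')))⁻¹ *
        (S.value i (logCoverMap (highPoint θ)) *
          S.legMonodromy (highPoint θ) (highPoint_mem θ) k) := by
  have hm : ∀ t : unitInterval, θ + (t : ℝ) * (θ' - θ) ∈ Set.uIcc θ θ' := fun t =>
    (convex_uIcc θ θ').add_smul_sub_mem Set.left_mem_uIcc Set.right_mem_uIcc t.2
  exact S.legMonodromy_step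
    ⟨fun t => highPoint (θ + (t : ℝ) * (θ' - θ)), continuous_highPoint.comp (by fun_prop)⟩
    (by simp) (by simp) (fun t => highPoint_mem _) i (fun t => hi _ (hm t)) _ _ k

end RatioCocycle

variable (β γ : G) (h : γ * γ * β = β * (γ * γ))

theorem sheetCocycle_shiftLoop (k : G) :
    (sheetCocycle β γ h).monodromyHom _ shiftLoop k = β * γ⁻¹ * k := by
  have hp := Real.pi_pos
  have e1 : deckShift coverBase = highPoint Real.pi := by
    refine Subtype.ext (Prod.ext rfl ?_)
    simp [highPoint, coverBase, deckShift]
  rw [RatioCocycle.monodromy_shiftLoop]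
  simp only [e1]
  have b0 : |(0 : ℝ) - (0 : ℤ) * Real.pi| ≤ Real.pi / 4 := by simp; linarith
  have b1 : |Real.pi / 4 - (0 : ℤ) * Real.pi| ≤ Real.pi / 4 := by
    simp only [Int.cast_zero, zero_mul, sub_zero]
    rw [abs_of_pos (by positivity)]
  have b2 : |3 * Real.pi / 4 - (1 : ℤ) * Real.pi| ≤ Real.pi / 4 := by
    rw [abs_le]; push_cast; constructor <;> linarith
  have b3 : |Real.pi - (1 : ℤ) * Real.pi| ≤ Real.pi / 4 := by simp; linarith
  have v0 := chartValue_highPoint_of_sin_nonneg β γ 0 b0 (by simp)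
  have v1 := chartValue_highPoint_of_sin_nonneg β γ 0 b1 (by simp; positivity)
  have v2 := chartValue_highPoint_of_sin_neg β γ 1 b2 (by
    apply Real.sin_neg_of_neg_of_neg_pi_lt <;> push_cast <;> linarith)
  have v3 := chartValue_highPoint_of_sin_nonneg β γ 1 b3 (by simp)
  have w1 : chartValue β γ (false, false) (logCoverMap (highPoint (Real.pi / 4))) = 1 := by
    simp only [chartValue, coordValue, sheetValue, one_mul]
    rw [if_neg]
    rw [im_logCoverMap_highPoint, show 2 * (Real.pi / 4) = Real.pi / 2 by ring,
      Real.sin_pi_div_two, not_lt]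
    positivity
  have w2 : chartValue β γ (false, false) (logCoverMap (highPoint (3 * Real.pi / 4))) = γ := by
    simp only [chartValue, coordValue, sheetValue, one_mul]
    rw [if_pos]
    rw [im_logCoverMap_highPoint, show 2 * (3 * Real.pi / 4) = Real.pi / 2 + Real.pi by ring,
      Real.sin_add_pi, Real.sin_pi_div_two]
    linarith [Real.exp_pos 8]
  rw [(sheetCocycle β γ h).legMonodromy_highPoint (3 * Real.pi / 4) Real.pi (true, true)
      (fun ϑ hϑ => (sheetCoord_true_highPoint 1 (by
        rw [Set.uIcc_of_le (by linarith)] at hϑ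
        rw [abs_le]; push_cast; constructor <;> linarith [hϑ.1, hϑ.2])).1) k,
    (sheetCocycle β γ h).legMonodromy_highPoint (Real.pi / 4) (3 * Real.pi / 4) (false, false)
      (fun ϑ hϑ => by
        rw [Set.uIcc_of_le (by linarith)] at hϑ
        exact highPoint_mem_false (by linarith [hϑ.1]) (by linarith [hϑ.2])) k,
    (sheetCocycle β γ h).legMonodromy_highPoint 0 (Real.pi / 4) (true, true)
      (fun ϑ hϑ => (sheetCoord_true_highPoint 0 (by
        rw [Set.uIcc_of_le (by linarith)] at hϑ
        rw [abs_le]; push_cast; constructor <;> linarith [hϑ.1, hϑ.2])).1) k,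
    RatioCocycle.legMonodromy_base _ _ _ coverBase_eq_highPoint]
  change (chartValue β γ _ _)⁻¹ * (chartValue β γ _ _ * ((chartValue β γ _ _)⁻¹ *
    (chartValue β γ _ _ * ((chartValue β γ _ _)⁻¹ * (chartValue β γ _ _ * k))))) = _
  rw [v0, v1, v2, v3, w1, w2]
  simp [mul_assoc]

theorem mem_sheetChart_segment (t : unitInterval) :
    logCoverMap (isCrossing_base.segment t) ∈ sheetChart (true, false) := by
  have hv := isCrossing_base.abs_segment_le t
  have hlog : Complex.log (2 + 2) = (Real.log 4 : ℝ) := by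
    rw [Complex.ofReal_log (by norm_num)]; norm_num
  have hw : (isCrossing_base.segment t).1.2 =
      ((2 * (t : ℝ) - 1) * (Real.pi / 4) : ℝ) * Complex.I := by
    change Complex.log (2 + 2) + ((-Real.log 4 : ℝ) + _) = _
    rw [hlog]
    push_cast
    ring
  obtain ⟨h1, h2⟩ := sheetCoord_true_logCoverMap (z := isCrossing_base.segment t)
    ofReal_sqrt_two_sq 0 (by
      rw [hw, Complex.im_ofReal_mul, Complex.I_im, Int.cast_zero, zero_mul, sub_zero, mul_one]
      exact hv.trans_lt (by linarith [Real.pi_pos]))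
  refine ⟨h1, Or.inr ?_⟩
  change |(sheetCoord true (logCoverMap (isCrossing_base.segment t))).re| < 4
  rw [h2, hw, Int.cast_zero, zero_mul, sub_zero]
  refine (Complex.abs_re_le_norm _).trans_lt ?_
  rw [Complex.norm_exp_ofReal_mul_I]
  norm_num

theorem legMonodromy_crossing_end {θ : ℝ} (hθ : |θ| = Real.pi / 4) {z : logCover}
    (hz : z ∈ rayFree) (h1 : z.1 = (((Real.sqrt 2 : ℝ) : ℂ), θ * Complex.I)) (k : G) :
    (sheetCocycle β γ h).legMonodromy z hz k =
      (chartValue β γ (true, true) (logCoverMap (highPoint θ)))⁻¹ * k := by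
  have hp := Real.pi_pos
  have hθ0 : θ ≠ 0 := by
    intro h0
    rw [h0, abs_zero] at hθ
    linarith
  have hlog : Complex.log (2 + 2) = (Real.log 4 : ℝ) := by
    rw [Complex.ofReal_log (by norm_num)]; norm_num
  have hm : ∀ t : unitInterval, ∃ hc : (((Real.sqrt 2 : ℝ) : ℂ),
      ((1 - (t : ℝ)) * 4 : ℝ) + θ * Complex.I) ∈ logCover, (⟨_, hc⟩ : logCover) ∈ rayFree :=
    fun t => by
      have hu : -Real.log 4 ≤ (1 - (t : ℝ)) * 4 - Real.log 4 := by
        linarith [t.2.2]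
      have := isCrossing_base.mem_rayFree hu hθ.le hθ0
      have e : Complex.log (2 + 2) + (((1 - (t : ℝ)) * 4 - Real.log 4 : ℝ) + θ * Complex.I) =
          ((1 - (t : ℝ)) * 4 : ℝ) + θ * Complex.I := by
        rw [hlog]
        push_cast
        ring
      simp only [e] at this
      exact ⟨_, this⟩
  have hchart : ∀ t : unitInterval, logCoverMap ⟨_, (hm t).1⟩ ∈ sheetChart (true, false) := by
    intro t
    obtain ⟨h1, h2⟩ := sheetCoord_true_logCoverMap (z := ⟨_, (hm t).1⟩) ofReal_sqrt_two_sq 0 (by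
      simp [hθ]
      linarith)
    refine ⟨h1, Or.inl ?_⟩
    change (sheetCoord true (logCoverMap ⟨_, (hm t).1⟩)).im ≠ 0
    have him : (((1 - (t : ℝ)) * 4 : ℝ) + θ * Complex.I - ((0 : ℤ) : ℂ) * (Real.pi * Complex.I)).im
        = θ := by simp
    rw [h2, Complex.exp_im, him]
    refine mul_ne_zero (Real.exp_pos _).ne' fun h0 => hθ0 ?_
    have := abs_le.1 hθ.le
    exact (Real.sin_eq_zero_iff_of_lt_of_lt (by linarith) (by linarith)).1 h0
  have e2 := (sheetCocycle β γ h).legMonodromy_step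
    (⟨fun t => ⟨_, (hm t).1⟩, by fun_prop⟩ : C(unitInterval, logCover)) (z := highPoint θ)
    (z' := z) (Subtype.ext (by simp [highPoint]))
    (Subtype.ext (by simp [h1])) (fun t => (hm t).2) (true, false) hchart
    (highPoint_mem θ) hz k
  rw [e2, (sheetCocycle β γ h).legMonodromy_highPoint 0 θ (true, true)
    (fun ϑ hϑ => (sheetCoord_true_highPoint 0 (by
      have := Set.abs_sub_left_of_mem_uIcc hϑ
      simp only [sub_zero] at this
      simpa using this.trans hθ.le)).1) k,
    RatioCocycle.legMonodromy_base _ _ _ coverBase_eq_highPoint]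
  have v0 := chartValue_highPoint_of_sin_nonneg β γ 0 (θ := 0) (by simp; linarith) (by simp)
  change (chartValue β γ (true, false) _)⁻¹ * (chartValue β γ (true, false) _ *
    ((chartValue β γ _ _)⁻¹ * (chartValue β γ _ _ * k))) = _
  rw [v0]
  simp [chartValue, coordValue, sheetValue]

theorem sheetCocycle_crossingClass (k : G) :
    (sheetCocycle β γ h).monodromyHom _ crossingClass k = β⁻¹ * k := by
  have hp := Real.pi_pos
  have hlog : Complex.log (2 + 2) = (Real.log 4 : ℝ) := by
    rw [Complex.ofReal_log (by norm_num)]; norm_num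
  have hend : ∀ t : unitInterval, (isCrossing_base.segment t).1 =
      (((Real.sqrt 2 : ℝ) : ℂ), (((2 * (t : ℝ) - 1) * (Real.pi / 4) : ℝ) : ℂ) * Complex.I) := fun t => by
    refine Prod.ext rfl ?_
    change Complex.log (2 + 2) + ((-Real.log 4 : ℝ) + _) = _
    rw [hlog]
    push_cast
    ring
  refine RatioCocycle.monodromy_closedClass _ isCrossing_base.segment
    isCrossing_base.segment_zero_mem isCrossing_base.segment_one_mem (true, false)
    mem_sheetChart_segment ?_
  have a0 : |-(Real.pi / 4)| = Real.pi / 4 := by rw [abs_neg, abs_of_pos (by positivity)]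
  have a1 : |Real.pi / 4| = Real.pi / 4 := abs_of_pos (by positivity)
  rw [legMonodromy_crossing_end β γ h a1 _ ((hend 1).trans (by norm_num)),
    legMonodromy_crossing_end β γ h a0 _ ((hend 0).trans (by norm_num)),
    chartValue_highPoint_of_sin_neg β γ 0 (θ := -(Real.pi / 4)) (by simpa using a0.le)
      (by simp),
    chartValue_highPoint_of_sin_nonneg β γ 0 (θ := Real.pi / 4) (by simpa using a1.le)
      (by simp; positivity)]
  change _ = (chartValue β γ (true, false) _)⁻¹ * (chartValue β γ (true, false) _ * _)
  simp [chartValue, coordValue, sheetValue]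

end Monodromy

/-- The affine coordinates `(x / (y - z), (x² + 2y² - 2z²) / (y - z)²)` on the complement of the
line `y = z`. -/
noncomputable def affineCoord : Projectivization ℂ (Fin 3 → ℂ) → ℂ × ℂ :=
  Projectivization.lift
    (fun v => (v.1 0 / (v.1 1 - v.1 2),
      (v.1 0 ^ 2 + 2 * v.1 1 ^ 2 - 2 * v.1 2 ^ 2) / (v.1 1 - v.1 2) ^ 2))
    (by
      rintro ⟨a, ha⟩ ⟨b, hb⟩ t (rfl : a = t • b)
      have ht : t ≠ 0 := fun h => ha (by rw [h, zero_smul])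
      have h1 : t * b 1 - t * b 2 = t * (b 1 - b 2) := by ring
      simp only [Pi.smul_apply, smul_eq_mul, h1]
      refine Prod.ext (mul_div_mul_left _ _ ht) ?_
      have h2 : (t * b 0) ^ 2 + 2 * (t * b 1) ^ 2 - 2 * (t * b 2) ^ 2 =
          t ^ 2 * (b 0 ^ 2 + 2 * b 1 ^ 2 - 2 * b 2 ^ 2) := by ring
      simp only [h2, mul_pow t (b 1 - b 2)]
      exact mul_div_mul_left _ _ (pow_ne_zero 2 ht))

theorem mk_mem_U_iff {v : Fin 3 → ℂ} (hv : v ≠ 0) : Projectivization.mk ℂ v hv ∈ U ↔ F v ≠ 0 := by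
  refine not_congr ⟨?_, fun h => ⟨v, hv, h, rfl⟩⟩
  rintro ⟨w, hw, h, he⟩
  obtain ⟨t, rfl⟩ := (Projectivization.mk_eq_mk_iff' ℂ _ _ _ _).1 he
  have : F (t • w) = t ^ 5 * F w := by
    simp only [F, Pi.smul_apply, smul_eq_mul]
    ring
  rw [this, h, mul_zero]

theorem isQuotientMap_projectivization_mk' :
    Topology.IsQuotientMap (Projectivization.mk' ℂ (V := Fin 3 → ℂ)) := isQuotientMap_quotient_mk'

theorem preimage_U : Projectivization.mk' ℂ ⁻¹' U = {v : {v : Fin 3 → ℂ // v ≠ 0} | F v.1 ≠ 0} :=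
  Set.ext fun v => mk_mem_U_iff v.2

theorem isOpen_U : IsOpen U := by
  rw [← isQuotientMap_projectivization_mk'.isOpen_preimage, preimage_U]
  have hF : Continuous F := by unfold F; fun_prop
  exact isOpen_ne_fun (hF.comp continuous_subtype_val) continuous_const

theorem F_ne_zero_iff (v : Fin 3 → ℂ) (h : v 1 - v 2 ≠ 0) :
    F v ≠ 0 ↔ (v 0 / (v 1 - v 2),
      (v 0 ^ 2 + 2 * v 1 ^ 2 - 2 * v 2 ^ 2) / (v 1 - v 2) ^ 2) ∈ affineComplement := by
  have h1 : ((v 0 / (v 1 - v 2)) ^ 2 - (v 0 ^ 2 + 2 * v 1 ^ 2 - 2 * v 2 ^ 2) / (v 1 - v 2) ^ 2 - 2) ^ 2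
      - 16 * ((v 0 ^ 2 + 2 * v 1 ^ 2 - 2 * v 2 ^ 2) / (v 1 - v 2) ^ 2) =
      -16 / (v 1 - v 2) ^ 2 * (v 0 ^ 2 + v 1 ^ 2 - 2 * v 2 ^ 2) := by
    field_simp
    ring
  simp only [affineComplement, Set.mem_ofPred_eq, F]
  rw [← sub_ne_zero (b := 16 * _), h1]
  simp [h]
  tauto

theorem sub_ne_zero_of_F_ne_zero {v : Fin 3 → ℂ} (h : F v ≠ 0) : v 1 - v 2 ≠ 0 :=
  right_ne_zero_of_mul h

theorem affineCoord_mem {p : Projectivization ℂ (Fin 3 → ℂ)} (hp : p ∈ U) :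
    affineCoord p ∈ affineComplement := by
  induction p with | h v hv =>
  rw [mk_mem_U_iff] at hp
  exact (F_ne_zero_iff v (sub_ne_zero_of_F_ne_zero hp)).1 hp

/-- The vector with `y - z = 1` and given affine coordinates. -/
noncomputable def affineVector (q : ℂ × ℂ) : Fin 3 → ℂ :=
  ![q.1, (1 + (q.2 - q.1 ^ 2) / 2) / 2, ((q.2 - q.1 ^ 2) / 2 - 1) / 2]

theorem affineVector_sub (q : ℂ × ℂ) : affineVector q 1 - affineVector q 2 = 1 := by
  simp [affineVector]
  ring

theorem affineVector_ne_zero (q : ℂ × ℂ) : affineVector q ≠ 0 := fun h => by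
  simpa [h] using affineVector_sub q

theorem affineCoord_affineVector (q : ℂ × ℂ) :
    affineCoord (Projectivization.mk ℂ (affineVector q) (affineVector_ne_zero q)) = q := by
  rw [affineCoord, Projectivization.lift_mk]
  simp only [affineVector_sub]
  simp [affineVector]
  refine Prod.ext rfl ?_
  ring

theorem mk_affineVector_mem {q : ℂ × ℂ} (hq : q ∈ affineComplement) :
    Projectivization.mk ℂ (affineVector q) (affineVector_ne_zero q) ∈ U := by
  rw [mk_mem_U_iff, F_ne_zero_iff _ (by rw [affineVector_sub]; exact one_ne_zero)]
  have := affineCoord_affineVector q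
  rw [affineCoord, Projectivization.lift_mk] at this
  rwa [this]

theorem mk_affineVector_affineCoord {p : Projectivization ℂ (Fin 3 → ℂ)} (hp : p ∈ U) :
    Projectivization.mk ℂ (affineVector (affineCoord p)) (affineVector_ne_zero _) = p := by
  induction p with | h v hv =>
  rw [mk_mem_U_iff] at hp
  have h := sub_ne_zero_of_F_ne_zero hp
  rw [Projectivization.mk_eq_mk_iff']
  refine ⟨(v 1 - v 2)⁻¹, ?_⟩
  rw [affineCoord, Projectivization.lift_mk]
  funext i
  fin_cases i <;> simp [affineVector] <;> field_simp <;> ring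

/-- The complement of the curve is homeomorphic to `affineComplement`. -/
noncomputable def affineHomeo : U ≃ₜ affineComplement where
  toFun p := ⟨affineCoord p, affineCoord_mem p.2⟩
  invFun q := ⟨_, mk_affineVector_mem q.2⟩
  left_inv p := Subtype.ext (mk_affineVector_affineCoord p.2)
  right_inv q := Subtype.ext (affineCoord_affineVector q.1)
  continuous_toFun := by
    rw [(isQuotientMap_projectivization_mk'.restrictPreimage_isOpen isOpen_U).continuous_iff]
    refine Continuous.subtype_mk (f := fun v : Projectivization.mk' ℂ ⁻¹' U =>
      (v.1.1 0 / (v.1.1 1 - v.1.1 2),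
      (v.1.1 0 ^ 2 + 2 * v.1.1 1 ^ 2 - 2 * v.1.1 2 ^ 2) / (v.1.1 1 - v.1.1 2) ^ 2)) ?_ _
    have h (v : Projectivization.mk' ℂ ⁻¹' U) : v.1.1 1 - v.1.1 2 ≠ 0 :=
      sub_ne_zero_of_F_ne_zero ((mk_mem_U_iff v.1.2).1 v.2)
    have h2 (v : Projectivization.mk' ℂ ⁻¹' U) : (v.1.1 1 - v.1.1 2) ^ 2 ≠ 0 := pow_ne_zero 2 (h v)
    have hc (i : Fin 3) : Continuous fun v : Projectivization.mk' ℂ ⁻¹' U => v.1.1 i :=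
      (continuous_apply i).comp (continuous_subtype_val.comp continuous_subtype_val)
    have hd := (hc 1).sub (hc 2)
    have hn : Continuous fun v : Projectivization.mk' ℂ ⁻¹' U =>
        v.1.1 0 ^ 2 + 2 * v.1.1 1 ^ 2 - 2 * v.1.1 2 ^ 2 :=
      (((hc 0).pow 2).add (((hc 1).pow 2).const_mul 2)).sub (((hc 2).pow 2).const_mul 2)
    exact ((hc 0).div hd h).prodMk (hn.div (hd.pow 2) h2)
  continuous_invFun := by
    refine Continuous.subtype_mk (isQuotientMap_projectivization_mk'.continuous.comp
      (f := fun q : affineComplement => ⟨affineVector q.1, affineVector_ne_zero _⟩) ?_) _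
    refine Continuous.subtype_mk (continuous_pi fun i => ?_) _
    fin_cases i <;> simp [affineVector] <;> fun_prop

/-- A homeomorphism induces an isomorphism of fundamental groups. -/
noncomputable def fundamentalGroupEquivOfHomeomorph {X Y : Type} [TopologicalSpace X]
    [TopologicalSpace Y] (e : X ≃ₜ Y) (x : X) : FundamentalGroup X x ≃* FundamentalGroup Y (e x) :=
  MulEquiv.ofBijective (FundamentalGroup.map (e : C(X, Y)) x) <| by
    let E := FundamentalGroupoidFunctor.equivOfHomotopyEquiv (X := TopCat.of X) (Y := TopCat.of Y)
      e.toHomotopyEquiv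
    exact ⟨fun p q h => E.functor.map_injective h, fun q => E.functor.map_surjective q⟩

/-- The homomorphism from the presented group sending the generators to the class of a crossing and
the class of the deck transformation. -/
noncomputable def presentedHom :
    PresentedGroup rels →* FundamentalGroup affineComplement (logCoverMap coverBase) :=
  PresentedGroup.toGroup (f := ![crossingClass, shiftLoop]) <| by
    rintro r rfl
    simp only [map_mul, map_pow, map_inv, FreeGroup.lift_apply_of, Matrix.cons_val_zero,
      Matrix.cons_val_one]
    rw [crossing_relation, mul_inv_cancel]

theorem presentedHom_zero : presentedHom (PresentedGroup.of 0) = crossingClass :=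
  PresentedGroup.toGroup.of _

theorem presentedHom_one : presentedHom (PresentedGroup.of 1) = shiftLoop :=
  PresentedGroup.toGroup.of _

theorem presentedHom_surjective : Function.Surjective presentedHom := by
  rw [← MonoidHom.range_eq_top, eq_top_iff, ← crossingSubgroup_eq_top, crossingSubgroup,
    Subgroup.closure_le]
  rintro _ (rfl | rfl)
  · exact ⟨_, presentedHom_zero⟩
  · exact ⟨_, presentedHom_one⟩

theorem presentedHom_injective : Function.Injective presentedHom := by
  let _ : TopologicalSpace (PresentedGroup rels) := ⊥
  have : DiscreteTopology (PresentedGroup rels) := ⟨rfl⟩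
  set a : PresentedGroup rels := PresentedGroup.of 0
  set b : PresentedGroup rels := PresentedGroup.of 1
  have hrel : (a * b) ^ 2 = (b * a) ^ 2 :=
    PresentedGroup.mk_eq_mk_of_mul_inv_mem (rels := rels) rfl
  have hcomm : (a * b)⁻¹ * (a * b)⁻¹ * a⁻¹ = a⁻¹ * ((a * b)⁻¹ * (a * b)⁻¹) := by
    have h : a * ((a * b) * (a * b)) = (a * b) * (a * b) * a := by
      rw [← pow_two]
      nth_rw 1 [hrel]
      simp only [pow_two, mul_assoc]
    simpa only [mul_inv_rev, mul_assoc] using congrArg (·⁻¹) h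
  have key : ((sheetCocycle a⁻¹ (a * b)⁻¹ hcomm).monodromyHom (logCoverMap coverBase)).comp
      presentedHom = MulAction.toPermHom (PresentedGroup rels) (PresentedGroup rels) := by
    refine PresentedGroup.ext fun i => Equiv.ext fun k => ?_
    fin_cases i
    · refine (congrArg (fun p => (sheetCocycle a⁻¹ (a * b)⁻¹ hcomm).monodromyHom _ p k)
        presentedHom_zero).trans ((sheetCocycle_crossingClass _ _ _ k).trans ?_)
      rw [inv_inv]
      rfl
    · refine (congrArg (fun p => (sheetCocycle a⁻¹ (a * b)⁻¹ hcomm).monodromyHom _ p k)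
        presentedHom_one).trans ((sheetCocycle_shiftLoop _ _ _ k).trans ?_)
      rw [inv_inv, inv_mul_cancel_left]
      rfl
  refine Function.Injective.of_comp
    (f := (sheetCocycle a⁻¹ (a * b)⁻¹ hcomm).monodromyHom (logCoverMap coverBase)) ?_
  rw [← MonoidHom.coe_comp, key]
  exact MulAction.toPerm_injective

theorem pi1_two_tangent_conics_with_tangent_line (u : U) :
    Nonempty (FundamentalGroup U u ≃* PresentedGroup rels) :=
  ⟨(fundamentalGroupEquivOfHomeomorph affineHomeo u).trans
    ((FundamentalGroup.fundamentalGroupMulEquivOfPathConnected _ _).trans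
      (MulEquiv.ofBijective presentedHom
        ⟨presentedHom_injective, presentedHom_surjective⟩).symm)⟩
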